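/- There is an absolute constant c > 0 such that the following holds for every prime p. Let P be a finite set of points in F_p^2 with |P| ≤ p^{15/13}, and let C be any finite set of irreducible cubic curves in F_p^2. Then the number of incidences satisfies I(P,C) ≤ c·( min{ (|P||C|)^{39/43}, |P||C|^{9/10}, |P|^{1/2}|C| } + |P| + |C| ). -/

import Mathlib

open scoped Classical

noncomputable section

/-- The zero set in `F_p^2` of a bivariate polynomial over `F_p`. -/
def zeroSet {p : ℕ} (f : MvPolynomial (Fin 2) (ZMod p)) : Set (Fin 2 → ZMod p) :=
  {x | MvPolynomial.eval x f = 0}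

/-- A set `γ ⊆ F_p^2` is an irreducible cubic curve if it is the zero set of an
irreducible polynomial of total degree 3. -/
def IsIrredCubic {p : ℕ} (γ : Set (Fin 2 → ZMod p)) : Prop :=
  ∃ f : MvPolynomial (Fin 2) (ZMod p), Irreducible f ∧ f.totalDegree = 3 ∧ γ = zeroSet f

/-- The number of incidences between a finite set of points `P` and a finite
set of curves `C`. -/
def incidences {p : ℕ} (P : Finset (Fin 2 → ZMod p)) (C : Finset (Set (Fin 2 → ZMod p))) : ℕ :=
  ((P ×ˢ C).filter fun z => z.1 ∈ z.2).card

/-!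
Write `m = |P|` and `n = |C|`. Choosing an equation for each curve gives a family of pairwise non-proportional
irreducible cubic polynomials (`exists_fam`), and two of them have at most nine common zeros (`bezout`). This
already gives the term `m ^ (1/2) n`, by the Kővári–Sós–Turán inequality (`bound_kst`).

*Pinning.* Consider curves with at least `d` points of `P`. The cubics form a ten-dimensional space. A point of `P`
that lies on many of the curves, and is not a base point of the current linear system, cuts the dimension by one
and keeps a proportion of about `d / m` of the curves (`pin_step`). Nine pins determine the curve, so there are
at most about `(m / d) ^ 9` curves; summation gives `m n ^ (8/9)`, which is stronger than `m n ^ (9/10)`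
(`bound_nine`).

*Nets.* Seven pins leave a three-dimensional system, a net. The map to the projective plane given by a net turns
its cubics into lines, with fibres of at most nine points on each curve (`net_bound`). In the projective plane,
`m` objects of one kind and `N` of the dual kind, each incident to at least `k` of the former, satisfy
`N ^ 4 k ^ 15 ≪ m ^ 11` when `m ≤ p ^ (4/3)` (`struct_bound`). Together with the pins, the number `n` of cubics with
about `k` points satisfies `n ^ 4 k ^ 43 ≪ m ^ 39` (`cubic_bound`), and removing poorest curves one at a time yields
`(m n) ^ (39/43)` (`bound_main`).

*The structural bound.* A double count produces two points `y1`, `y2` such that many of the `N` points lie on the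
grid of lines through `y1` and `y2` (`pencil_exists`). In affine coordinates these points lie in a product `A × B`
with `|A|, |B| ≤ k` and on many lines `b = c a + d` (`coords`), so the Cauchy–Schwarz inequality bounds their number by
the number of solutions of `c a + d = c₂ a₂ + d₂` (`grid`). Very rich points are removed beforehand (`prune`), so
that the collinearity hypothesis of the energy bound (`energy`) holds.

*The energy bound.* The solutions count incidences between the lines `x = u, z = v y + w` and the lines
`y = u, z = v x + w` of two families in three-space. `N ≤ p²` lines have `O(N ^ (3/2) + k N)` incidences if at most `k`
lines of a family are collinear in parameter space (`rudnev`). This is a form of Rudnev's point-plane theorem, and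
the proof is by the polynomial method: if every line is rich, most lines lie on a surface of degree `≪ √N`, found
by sampling and parameter counting (`reduce`). On an irreducible surface `Q = 0` of degree below `p`, a second
order differential polynomial `F1 Q` vanishes on every line of the first family. If `Q` does not divide `F1 Q`
there are few such lines (`count1`); otherwise the surface is ruled, and a line of the second family on it makes
it so special that the lines of the first family are collinear in parameter space (`tangent`, `plane`,
`component`, `multi`). The characteristic enters because the degree must stay below it.
-/

/-! ### Elimination and lines on an intersection of two surfaces -/

namespace IB
open MvPolynomial

variable {F : Type*} [Field F]

/-- The Sylvester determinant has `n` columns with entries among the coefficients of `f` and `m` columns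
with entries among those of `g`. -/
theorem totalDegree_resultant_le (f g : Polynomial (MvPolynomial (Fin 2) F)) (m n D E : ℕ)
    (hf : ∀ i, (f.coeff i).totalDegree ≤ D) (hg : ∀ i, (g.coeff i).totalDegree ≤ E) :
    (Polynomial.resultant f g m n).totalDegree ≤ m * E + n * D := by
  unfold Polynomial.resultant
  rw [Matrix.det_apply]
  refine totalDegree_finsetSum_le ?_
  intro σ _
  have h1 : ((∏ i : Fin (m + n), (Polynomial.sylvester f g m n) (σ i) i)).totalDegree ≤ m * E + n * D := by
    refine (totalDegree_finsetProd _ _).trans ?_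
    rw [Fin.sum_univ_add]
    refine add_le_add ?_ ?_
    · refine (Finset.sum_le_card_nsmul _ _ E ?_).trans (by simp)
      intro i _
      simp only [Polynomial.sylvester, Matrix.of_apply, Fin.addCases_left]
      split_ifs
      · exact hg _
      · simp
    · refine (Finset.sum_le_card_nsmul _ _ D ?_).trans (by simp)
      intro i _
      simp only [Polynomial.sylvester, Matrix.of_apply, Fin.addCases_right]
      split_ifs
      · exact hf _
      · simp
  rcases Int.units_eq_one_or (Equiv.Perm.sign σ) with h | h <;> simp [h, h1]

/-- By Gauss's lemma a primitive irreducible `q` stays irreducible over the fraction field, where it is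
coprime to `g`. -/
theorem resultant_ne_zero_of_prim {A : Type*} [CommRing A] [IsDomain A] [UniqueFactorizationMonoid A]
    {q g : Polynomial A} (hqp : q.IsPrimitive) (hqi : Irreducible q) (hgn : ¬ q ∣ g) :
    Polynomial.resultant q g ≠ 0 := by
  have hinj : Function.Injective (algebraMap A (FractionRing A)) := IsFractionRing.injective _ _
  have hi : Irreducible (q.map (algebraMap A (FractionRing A))) :=
    (hqp.irreducible_iff_irreducible_map_fraction_map).1 hqi
  have hnd' : ¬ q.map (algebraMap A (FractionRing A)) ∣ g.map (algebraMap A (FractionRing A)) :=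
    fun h => hgn (hqp.dvd_of_fraction_map_dvd_fraction_map h)
  have hcop := (hi.coprime_iff_not_dvd).2 hnd'
  have := Polynomial.resultant_ne_zero _ _ hcop
  intro h0
  apply this
  rw [Polynomial.natDegree_map_eq_of_injective hinj, Polynomial.natDegree_map_eq_of_injective hinj,
    Polynomial.resultant_map_map, h0, map_zero]

theorem finSuccEquiv_rename_succ' (n : ℕ) (R : MvPolynomial (Fin n) F) :
    finSuccEquiv F n (rename Fin.succ R) = Polynomial.C R := by
  have : (finSuccEquiv F n).toAlgHom.comp (rename Fin.succ) =
      (Algebra.ofId (MvPolynomial (Fin n) F) (Polynomial (MvPolynomial (Fin n) F))).restrictScalars F := by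
    apply MvPolynomial.algHom_ext
    intro i
    simp [finSuccEquiv_X_succ, Algebra.ofId_apply]
  simpa [Algebra.ofId_apply] using DFunLike.congr_fun this R

/-- Elimination of the coordinate `X 0` between an irreducible `Q` and a `G` which it does not divide:
the resultant is a nonzero bivariate polynomial in the ideal `(Q, G)`. -/
theorem elim (Q G : MvPolynomial (Fin 3) F) (hQ : Irreducible Q) (hdeg : 0 < degreeOf 0 Q)
    (hnd : ¬ Q ∣ G) : ∃ R : MvPolynomial (Fin 2) F, R ≠ 0 ∧
      R.totalDegree ≤ 2 * Q.totalDegree * G.totalDegree ∧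
      ∃ a b, Q * a + G * b = rename Fin.succ R := by
  set q := finSuccEquiv F 2 Q with hq
  set g := finSuccEquiv F 2 G with hg
  have hqi : Irreducible q := (MulEquiv.irreducible_iff (finSuccEquiv F 2)).2 hQ
  have hqd : q.natDegree = degreeOf 0 Q := natDegree_finSuccEquiv Q
  have hgd : g.natDegree = degreeOf 0 G := natDegree_finSuccEquiv G
  have hgn : ¬ q ∣ g := by
    intro h
    exact hnd ((map_dvd_iff (finSuccEquiv F 2)).1 h)
  have hqp : q.IsPrimitive := hqi.isPrimitive (by omega)
  have hres : Polynomial.resultant q g ≠ 0 := resultant_ne_zero_of_prim hqp hqi hgn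
  refine ⟨Polynomial.resultant q g, hres, ?_, ?_⟩
  · refine (totalDegree_resultant_le q g _ _ Q.totalDegree G.totalDegree ?_ ?_).trans ?_
    · intro i
      by_cases h : q.coeff i = 0
      · simp [h]
      have := totalDegree_coeff_finSuccEquiv_add_le Q i h
      exact le_trans (Nat.le_add_right _ _) this
    · intro i
      by_cases h : g.coeff i = 0
      · simp [h]
      have := totalDegree_coeff_finSuccEquiv_add_le G i h
      exact le_trans (Nat.le_add_right _ _) this
    · rw [hqd, hgd]
      have h1 := degreeOf_le_totalDegree Q 0
      have h2 := degreeOf_le_totalDegree G 0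
      nlinarith
  · obtain ⟨a, b, -, -, hab⟩ := Polynomial.exists_mul_add_mul_eq_C_resultant q g le_rfl le_rfl (by left; omega)
    refine ⟨(finSuccEquiv F 2).symm a, (finSuccEquiv F 2).symm b, ?_⟩
    apply (finSuccEquiv F 2).injective
    rw [finSuccEquiv_rename_succ']
    simp only [map_add, map_mul, AlgEquiv.apply_symm_apply]
    exact hab

/-- Throughout, the coordinates of three-space are `z = X 0`, `x = X 1`, `y = X 2`. A triple
`t = (u, v, w)` encodes the line `x = u, z = v y + w` of the first family; `sub1 t Q` is the restriction of
`Q` to it, as a polynomial in the parameter `y`. The line lies on the surface `Q = 0` iff `sub1 t Q = 0`. -/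
def sub1 (t : F × F × F) : MvPolynomial (Fin 3) F →ₐ[F] Polynomial F :=
  aeval ![Polynomial.C t.2.1 * Polynomial.X + Polynomial.C t.2.2, Polynomial.C t.1, Polynomial.X]

theorem natDegree_sub1_le (t : F × F × F) (Q : MvPolynomial (Fin 3) F) :
    (sub1 t Q).natDegree ≤ Q.totalDegree := by
  have := MvPolynomial.aeval_natDegree_le Q le_rfl (n := 1) ![Polynomial.C t.2.1 * Polynomial.X + Polynomial.C t.2.2, Polynomial.C t.1, Polynomial.X] (by
    intro i
    fin_cases i
    · exact Polynomial.natDegree_linear_le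
    · simp
    · exact Polynomial.natDegree_X_le)
  simpa [sub1] using this

/-- A nonzero bivariate polynomial vanishes identically on at most `deg R` of the lines `x = u`. -/
theorem card_roots_R (R : MvPolynomial (Fin 2) F) (hR : R ≠ 0) (A : Finset F)
    (h : ∀ u ∈ A, aeval ![Polynomial.C u, Polynomial.X] R = (0 : Polynomial F)) :
    A.card ≤ R.totalDegree := by
  set r := finSuccEquiv F 1 R with hr
  have hr0 : r ≠ 0 := by
    simpa [hr] using hR
  have hroot : ∀ u ∈ A, r.eval (C u) = 0 := by
    intro u hu
    have h1 := congrArg (Polynomial.aeval (X 0 : MvPolynomial (Fin 1) F)) (h u hu)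
    rw [map_zero] at h1
    rw [← h1]
    have : ((Polynomial.aeval (C u : MvPolynomial (Fin 1) F)).restrictScalars F).comp (finSuccEquiv F 1).toAlgHom = (Polynomial.aeval (X 0 : MvPolynomial (Fin 1) F)).comp (aeval ![Polynomial.C u, Polynomial.X]) := by
      apply MvPolynomial.algHom_ext
      intro i
      fin_cases i
      · simp [finSuccEquiv_X_zero]
      · have := finSuccEquiv_X_succ (R := F) (n := 1) (j := 0)
        simp at this
        simp [this]
    have h2 := DFunLike.congr_fun this R
    simpa [Polynomial.coe_aeval_eq_eval] using h2
  have hsub : A.image (C : F → MvPolynomial (Fin 1) F) ⊆ r.roots.toFinset := by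
    intro z hz
    obtain ⟨u, hu, rfl⟩ := Finset.mem_image.1 hz
    simp [hr0, hroot u hu]
  calc A.card = (A.image (C : F → MvPolynomial (Fin 1) F)).card :=
        (Finset.card_image_of_injective _ (C_injective _ _)).symm
    _ ≤ r.roots.toFinset.card := Finset.card_le_card hsub
    _ ≤ r.roots.card := Multiset.toFinset_card_le _
    _ ≤ r.natDegree := Polynomial.card_roots' _
    _ = degreeOf 0 R := natDegree_finSuccEquiv R
    _ ≤ _ := degreeOf_le_totalDegree _ _

theorem sub1_rename (t : F × F × F) (R : MvPolynomial (Fin 2) F) :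
    sub1 t (rename Fin.succ R) = aeval ![Polynomial.C t.1, Polynomial.X] R := by
  unfold sub1
  rw [aeval_rename]
  congr 1

/-- The curve `Q = G = 0` contains at most `2 deg Q deg G` lines of the first family with distinct `u`. -/
theorem count1 (Q G : MvPolynomial (Fin 3) F) (hQ : Irreducible Q) (hdeg : 0 < degreeOf 0 Q)
    (hnd : ¬ Q ∣ G) (A : Finset (F × F × F)) (hinj : Set.InjOn Prod.fst (A : Set (F × F × F)))
    (h1 : ∀ t ∈ A, sub1 t Q = 0) (h2 : ∀ t ∈ A, sub1 t G = 0) :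
    A.card ≤ 2 * Q.totalDegree * G.totalDegree := by
  obtain ⟨R, hR, hRd, a, b, hab⟩ := elim Q G hQ hdeg hnd
  refine le_trans ?_ hRd
  rw [← Finset.card_image_of_injOn hinj]
  apply card_roots_R R hR
  intro u hu
  obtain ⟨t, ht, rfl⟩ := Finset.mem_image.1 hu
  rw [← sub1_rename, ← hab]
  simp [h1 t ht, h2 t ht]

end IB

/-! ### The flecnode-type polynomial -/

namespace IB
open MvPolynomial

variable {F : Type*} [Field F]

theorem chain_rule {A : Type*} [CommRing A] [Algebra F A] (g : Fin 3 → Polynomial A)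
    (Q : MvPolynomial (Fin 3) F) :
    Polynomial.derivative (aeval g Q) =
      ∑ i, aeval g (pderiv i Q) * Polynomial.derivative (g i) := by
  induction Q using MvPolynomial.induction_on with
  | C a => simp [Polynomial.algebraMap_apply]
  | add p q hp hq => simp [hp, hq, add_mul, Finset.sum_add_distrib]
  | mul_X p i hp =>
    have h1 : ∀ j, aeval g (pderiv j (p * X i)) * Polynomial.derivative (g j) =
        (if j = i then aeval g p * Polynomial.derivative (g i) else 0) +
          aeval g (pderiv j p) * Polynomial.derivative (g j) * g i := by
      intro j
      rw [pderiv_mul]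
      by_cases hj : j = i
      · subst hj
        simp
        ring
      · rw [pderiv_X_of_ne (Ne.symm hj)]
        simp [hj]
        ring
    rw [Finset.sum_congr rfl fun j _ => h1 j, Finset.sum_add_distrib, ← Finset.sum_mul, ← hp]
    simp
    ring

theorem totalDegree_pderiv_le (i : Fin 3) (P : MvPolynomial (Fin 3) F) :
    (pderiv i P).totalDegree ≤ P.totalDegree - 1 := by
  refine Finset.sup_le ?_
  intro m hm
  rw [mem_support_iff, coeff_pderiv] at hm
  have h1 : m + Finsupp.single i 1 ∈ P.support := by
    rw [mem_support_iff]
    exact left_ne_zero_of_mul hm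
  have h2 := le_totalDegree h1
  rw [Finsupp.sum_add_index' (by simp) (by simp), Finsupp.sum_single_index rfl] at h2
  omega

/-- The hypothesis `hchar` says that the degree is smaller than the characteristic; without it `Q_z` could
vanish. -/
theorem not_dvd_pderiv (Q : MvPolynomial (Fin 3) F) (hdeg : 0 < degreeOf 0 Q)
    (hchar : ∀ n : ℕ, 0 < n → n ≤ Q.totalDegree → (n : F) ≠ 0) : ¬ Q ∣ pderiv 0 Q := by
  have hne : pderiv 0 Q ≠ 0 := by
    obtain ⟨m, hm, hm0⟩ : ∃ m ∈ Q.support, 0 < m 0 := by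
      by_contra hcon
      push Not at hcon
      have : degreeOf 0 Q ≤ 0 := degreeOf_le_iff.2 hcon
      omega
    intro h
    have h1 := coeff_pderiv (i := 0) Q (m - Finsupp.single 0 1)
    have h2 : m - Finsupp.single 0 1 + Finsupp.single 0 1 = m := by
      apply tsub_add_cancel_of_le
      rw [Finsupp.single_le_iff]
      exact hm0
    rw [h, h2, coeff_zero] at h1
    have h3 : (((m - Finsupp.single 0 1 : Fin 3 →₀ ℕ) 0 : ℕ) : F) + 1 = (m 0 : ℕ) := by
      have : m 0 = (m - Finsupp.single 0 1 : Fin 3 →₀ ℕ) 0 + 1 := by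
        simp; omega
      rw [this]; push_cast; rfl
    rw [h3] at h1
    rcases mul_eq_zero.1 h1.symm with h4 | h4
    · exact (mem_support_iff.1 hm) h4
    · refine hchar (m 0) hm0 ?_ h4
      exact (degreeOf_le_iff.1 le_rfl m hm).trans (degreeOf_le_totalDegree Q 0)
  rintro ⟨r, hr⟩
  have h1 := totalDegree_pderiv_le 0 Q
  rw [hr] at hne
  rw [hr, totalDegree_mul_of_isDomain (left_ne_zero_of_mul hne) (right_ne_zero_of_mul hne)] at h1
  have := degreeOf_le_totalDegree Q 0
  omega

/-- The flecnode-type polynomial `Q_yy Q_z² - 2 Q_yz Q_y Q_z + Q_zz Q_y²`. Up to a scalar it is the second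
derivative of `Q` along the tangent direction lying in the planes `x = const`, so it vanishes on every line
of the first family contained in `Q = 0`. -/
def F1 (Q : MvPolynomial (Fin 3) F) : MvPolynomial (Fin 3) F :=
  pderiv 2 (pderiv 2 Q) * pderiv 0 Q ^ 2
    - (pderiv 2 (pderiv 0 Q) + pderiv 0 (pderiv 2 Q)) * pderiv 2 Q * pderiv 0 Q
    + pderiv 0 (pderiv 0 Q) * pderiv 2 Q ^ 2

theorem totalDegree_F1_le (Q : MvPolynomial (Fin 3) F) :
    (F1 Q).totalDegree ≤ 3 * Q.totalDegree := by
  have hd : ∀ (i : Fin 3) (P : MvPolynomial (Fin 3) F), (pderiv i P).totalDegree ≤ P.totalDegree := by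
    intro i P
    exact (totalDegree_pderiv_le i P).trans (Nat.sub_le _ _)
  have hdd : ∀ (i j : Fin 3), (pderiv i (pderiv j Q)).totalDegree ≤ Q.totalDegree :=
    fun i j => (hd _ _).trans (hd _ _)
  have hsq : ∀ (i : Fin 3), (pderiv i Q ^ 2).totalDegree ≤ 2 * Q.totalDegree := fun i =>
    (totalDegree_pow _ _).trans (Nat.mul_le_mul_left _ (hd _ _))
  unfold F1
  refine (totalDegree_add _ _).trans (max_le ((totalDegree_sub _ _).trans (max_le ?_ ?_)) ?_)
  · refine (totalDegree_mul _ _).trans ?_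
    have := hdd 2 2
    have := hsq 0
    omega
  · refine (totalDegree_mul _ _).trans ?_
    have h1 := totalDegree_mul (pderiv 2 (pderiv 0 Q) + pderiv 0 (pderiv 2 Q)) (pderiv 2 Q)
    have h2 := totalDegree_add (pderiv 2 (pderiv 0 Q)) (pderiv 0 (pderiv 2 Q))
    have h3 := max_le (hdd 2 0) (hdd 0 2)
    have := hd 2 Q
    have := hd 0 Q
    omega
  · refine (totalDegree_mul _ _).trans ?_
    have := hdd 0 0
    have := hsq 2
    omega

theorem sub1_F1 (t : F × F × F) (Q : MvPolynomial (Fin 3) F) (h : sub1 t Q = 0) :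
    sub1 t (F1 Q) = 0 := by
  have hch : ∀ P, Polynomial.derivative (sub1 t P) =
      sub1 t (pderiv 0 P) * Polynomial.C t.2.1 + sub1 t (pderiv 2 P) := by
    intro P
    unfold sub1
    rw [chain_rule, Fin.sum_univ_three]
    simp
  have h1 := hch Q
  rw [h, map_zero] at h1
  have h2 := congrArg Polynomial.derivative h1
  simp only [map_zero, map_add, Polynomial.derivative_mul, Polynomial.derivative_C, mul_zero,
    add_zero, hch] at h2
  have e1 : sub1 t (pderiv 2 Q) = - (sub1 t (pderiv 0 Q) * Polynomial.C t.2.1) := by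
    linear_combination - h1
  simp only [F1, map_add, map_sub, map_mul, map_pow, e1]
  linear_combination - (sub1 t (pderiv 0 Q)) ^ 2 * h2

/-- Uniqueness for a regular linear second order equation: if `a` times the second derivative of `φ` is a
combination of `φ` and its derivative, with `a(0) ≠ 0`, and `φ` vanishes to order two at `0`, then `φ = 0`.
The factor `m (m - 1)` coming from the lowest order term `X ^ m` must be nonzero, whence the assumption on
the characteristic. -/
theorem order_arg {A : Type*} [CommRing A] [IsDomain A] (φ a H S : Polynomial A)
    (hchar : ∀ n : ℕ, 0 < n → n ≤ φ.natDegree → (n : A) ≠ 0)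
    (ha : a.coeff 0 ≠ 0) (h0 : φ.coeff 0 = 0) (h1 : φ.coeff 1 = 0)
    (h : a * φ.derivative.derivative = φ * H + φ.derivative * S) : φ = 0 := by
  by_contra hφ
  set m := φ.natTrailingDegree with hm
  have hcm : φ.coeff m ≠ 0 := Polynomial.coeff_natTrailingDegree_eq_zero.not.2 hφ
  have hlt : ∀ d < m, φ.coeff d = 0 := fun d hd => Polynomial.coeff_eq_zero_of_lt_natTrailingDegree hd
  have hm2 : 2 ≤ m := by
    by_contra hlt2
    have : m = 0 ∨ m = 1 := by omega
    rcases this with h' | h' <;> rw [h'] at hcm <;> contradiction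
  have hmd : m ≤ φ.natDegree := Polynomial.natTrailingDegree_le_natDegree φ
  have d0 : (Polynomial.X : Polynomial A) ^ (m - 1) ∣ φ := by
    rw [Polynomial.X_pow_dvd_iff]
    intro d hd
    exact hlt d (by omega)
  have d1 : (Polynomial.X : Polynomial A) ^ (m - 1) ∣ φ.derivative := by
    rw [Polynomial.X_pow_dvd_iff]
    intro d hd
    rw [Polynomial.coeff_derivative, hlt (d+1) (by omega), zero_mul]
  have d2 : (Polynomial.X : Polynomial A) ^ (m - 1) ∣ a * φ.derivative.derivative := by
    rw [h]
    exact dvd_add (d0.mul_right _) (d1.mul_right _)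
  have d3 : (Polynomial.X : Polynomial A) ^ (m - 1) ∣ φ.derivative.derivative := by
    have : ¬ (Polynomial.X : Polynomial A) ∣ a := by
      rw [Polynomial.X_dvd_iff]
      exact ha
    exact (Polynomial.prime_X).pow_dvd_of_dvd_mul_left _ this d2
  rw [Polynomial.X_pow_dvd_iff] at d3
  have d4 := d3 (m - 2) (by omega)
  rw [Polynomial.coeff_derivative, Polynomial.coeff_derivative] at d4
  have e1 : m - 2 + 1 + 1 = m := by omega
  have e2 : (((m - 2 : ℕ) : A) + 1) = ((m - 1 : ℕ) : A) := by
    have : m - 1 = m - 2 + 1 := by omega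
    rw [this]; push_cast; rfl
  have e3 : (((m - 2 + 1 : ℕ) : A) + 1) = (m : A) := by
    have : m = m - 2 + 1 + 1 := by omega
    conv_rhs => rw [this]
    push_cast; rfl
  rw [e1, e2, e3] at d4
  rcases mul_eq_zero.1 d4 with h5 | h5
  · rcases mul_eq_zero.1 h5 with h6 | h6
    · exact hcm h6
    · exact hchar m (by omega) hmd h6
  · exact hchar (m - 1) (by omega) (by omega) h5

/-- The exchange of `x` and `y`, which interchanges the two families of lines. -/
def swp : MvPolynomial (Fin 3) F ≃ₐ[F] MvPolynomial (Fin 3) F := renameEquiv F (Equiv.swap 1 2)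

theorem swp_swp (Q : MvPolynomial (Fin 3) F) : swp (swp Q) = Q := by
  simp only [swp, renameEquiv_apply, rename_rename]
  have : (⇑(Equiv.swap (1 : Fin 3) 2) ∘ ⇑(Equiv.swap (1 : Fin 3) 2)) = id := by
    funext i; simp
  rw [this]; simp

theorem totalDegree_swp (Q : MvPolynomial (Fin 3) F) : (swp Q).totalDegree = Q.totalDegree := by
  exact totalDegree_renameEquiv (Equiv.swap (1 : Fin 3) 2) Q

theorem pderiv_zero_swp (Q : MvPolynomial (Fin 3) F) : pderiv 0 (swp Q) = swp (pderiv 0 Q) := by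
  simp only [swp, renameEquiv_apply]
  have := pderiv_rename (R := F) (f := Equiv.swap (1 : Fin 3) 2) (Equiv.injective _) 0 Q
  simpa [Equiv.swap_apply_of_ne_of_ne] using this

/-- Restriction to the line `y = u, z = v x + w` of the second family encoded by `t = (u, v, w)`, as a
polynomial in the parameter `x`. -/
def sub2 (t : F × F × F) : MvPolynomial (Fin 3) F →ₐ[F] Polynomial F :=
  (sub1 t).comp swp.toAlgHom

theorem sub2_apply (t : F × F × F) (Q : MvPolynomial (Fin 3) F) : sub2 t Q = sub1 t (swp Q) := rfl

theorem sub1_eq (t : F × F × F) (Q : MvPolynomial (Fin 3) F) : sub1 t Q = sub2 t (swp Q) := by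
  rw [sub2_apply, swp_swp]

theorem sub2_X0 (t : F × F × F) : sub2 t (X 0) = Polynomial.C t.2.1 * Polynomial.X + Polynomial.C t.2.2 := by
  simp [sub2_apply, swp, sub1, Equiv.swap_apply_of_ne_of_ne]
theorem sub2_X1 (t : F × F × F) : sub2 t (X 1) = Polynomial.X := by
  simp [sub2_apply, swp, sub1]
theorem sub2_X2 (t : F × F × F) : sub2 t (X 2) = Polynomial.C t.1 := by
  simp [sub2_apply, swp, sub1]

end IB

/-! ### Surfaces ruled by lines of the first family -/

namespace IB
open MvPolynomial

variable {F : Type*} [Field F]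

/-- The substitution `x ↦ x, y ↦ u + α(x) T` with `α ≠ 0` is injective on polynomials in `x, y`. -/
theorem inj_aux (u : F) (α : Polynomial F) (hα : α ≠ 0) (R : MvPolynomial (Fin 2) F)
    (g : Fin 2 → Polynomial (Polynomial F))
    (hg : g = ![Polynomial.C Polynomial.X,
      Polynomial.C (Polynomial.C u) + Polynomial.C α * Polynomial.X])
    (h : aeval g R = 0) : R = 0 := by
  set ψ : MvPolynomial (Fin 2) F →ₐ[F] Polynomial (Polynomial F) :=
    aeval ![Polynomial.C Polynomial.X, Polynomial.C (Polynomial.C u) + Polynomial.X] with hψ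
  have h1 : aeval g R = (ψ R).comp (Polynomial.C α * Polynomial.X) := by
    have : (aeval (R := F) g).toRingHom = (Polynomial.compRingHom (Polynomial.C α * Polynomial.X)).comp ψ.toRingHom := by
      apply MvPolynomial.ringHom_ext
      · intro r
        simp [hψ, Polynomial.algebraMap_apply]
      · intro i
        fin_cases i
        · simp [hψ, hg]
        · simp [hψ, hg]
    exact DFunLike.congr_fun this R
  rw [h1, Polynomial.comp_C_mul_X_eq_zero_iff (mem_nonZeroDivisors_of_ne_zero hα)] at h
  have h2 : Polynomial.eval₂RingHom (Polynomial.aeval (X 0 : MvPolynomial (Fin 2) F)).toRingHom (X 1 - C u) (ψ R) = R := by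
    have : (Polynomial.eval₂RingHom (Polynomial.aeval (X 0 : MvPolynomial (Fin 2) F)).toRingHom (X 1 - C u)).comp ψ.toRingHom = RingHom.id _ := by
      apply MvPolynomial.ringHom_ext
      · intro r
        simp [hψ, Polynomial.algebraMap_apply]
      · intro i
        fin_cases i
        · simp [hψ]
        · simp [hψ]
    exact DFunLike.congr_fun this R
  rw [h, map_zero] at h2
  exact h2.symm

/-- Suppose `Q` divides `F1 Q`, so that the sections of `Q = 0` by the planes `x = const` consist of lines.
If the surface contains the line `b` of the second family and `Q_z` does not vanish on it, then `Q` divides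
the polynomial defining the family of tangent lines of these sections at the points of `b`. -/
theorem tangent (Q : MvPolynomial (Fin 3) F) (hQ : Irreducible Q) (hdeg : 0 < degreeOf 0 Q)
    (hchar : ∀ n : ℕ, 0 < n → n ≤ Q.totalDegree → (n : F) ≠ 0) (hF : Q ∣ F1 Q)
    (b : F × F × F) (hb : sub2 b Q = 0) (hns : sub2 b (pderiv 0 Q) ≠ 0) :
    Q ∣ Polynomial.aeval (X 1) (sub2 b (pderiv 0 Q)) * (X 0 - C b.2.1 * X 1 - C b.2.2) +
      Polynomial.aeval (X 1) (sub2 b (pderiv 2 Q)) * (X 2 - C b.1) := by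
  by_contra hnd
  obtain ⟨u, v, w⟩ := b
  set α := sub2 (u, v, w) (pderiv 0 Q) with hα
  set β := sub2 (u, v, w) (pderiv 2 Q) with hβ
  obtain ⟨R, hR, -, a, r, har⟩ := elim Q _ hQ hdeg hnd
  -- `g` parametrizes, over `F[x]`, the tangent line in the plane `x = const` at the point of `b`.
  set g : Fin 3 → Polynomial (Polynomial F) :=
    ![Polynomial.C (Polynomial.C v * Polynomial.X + Polynomial.C w) - Polynomial.C β * Polynomial.X,
      Polynomial.C Polynomial.X, Polynomial.C (Polynomial.C u) + Polynomial.C α * Polynomial.X] with hg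
  have hev : ∀ P : MvPolynomial (Fin 3) F, (aeval g P).coeff 0 = sub2 (u, v, w) P := by
    intro P
    have : ((Polynomial.aeval (0 : Polynomial F)).restrictScalars F).comp (aeval g) = sub2 (u, v, w) := by
      apply MvPolynomial.algHom_ext
      intro i
      fin_cases i
      · have := sub2_X0 (u, v, w)
        simp [hg, this]
      · have := sub2_X1 (u, v, w)
        simp [hg, this]
      · have := sub2_X2 (u, v, w)
        simp [hg, this]
    rw [← this, Polynomial.coeff_zero_eq_eval_zero]
    simp [Polynomial.coe_aeval_eq_eval]
  have hch : ∀ P : MvPolynomial (Fin 3) F, Polynomial.derivative (aeval g P) =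
      aeval g (pderiv 2 P) * Polynomial.C α - aeval g (pderiv 0 P) * Polynomial.C β := by
    intro P
    rw [chain_rule, Fin.sum_univ_three]
    simp [hg]
    ring
  have hφd : (aeval g Q).natDegree ≤ Q.totalDegree := by
    have h1 : aeval g Q = aeval g (map Polynomial.C Q) := by
      rw [aeval_def, aeval_def, eval₂_map]
      rfl
    rw [h1]
    refine (MvPolynomial.aeval_natDegree_le _ (m := Q.totalDegree) (Finset.sup_mono (support_map_subset _ _)) (n := 1) g ?_).trans (by rw [mul_one])
    intro i
    fin_cases i
    · simp only [hg]
      refine (Polynomial.natDegree_sub_le _ _).trans (max_le ((Polynomial.natDegree_C _).trans_le (Nat.zero_le _)) ?_)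
      exact (Polynomial.natDegree_C_mul_le _ _).trans Polynomial.natDegree_X_le
    · simp [hg]
    · simp only [hg]
      refine (Polynomial.natDegree_add_le _ _).trans (max_le ((Polynomial.natDegree_C _).trans_le (Nat.zero_le _)) ?_)
      exact (Polynomial.natDegree_C_mul_le _ _).trans Polynomial.natDegree_X_le
  obtain ⟨H, hH⟩ := hF
  -- `Q` restricted to the tangent line satisfies a second order equation with vanishing initial data.
  have hφ : aeval g Q = 0 := by
    have e1 := hch Q
    have e2 : Polynomial.derivative (Polynomial.derivative (aeval g Q)) =
        (aeval g (pderiv 2 (pderiv 2 Q)) * Polynomial.C α - aeval g (pderiv 0 (pderiv 2 Q)) * Polynomial.C β) * Polynomial.C α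
        - (aeval g (pderiv 2 (pderiv 0 Q)) * Polynomial.C α - aeval g (pderiv 0 (pderiv 0 Q)) * Polynomial.C β) * Polynomial.C β := by
      rw [e1]
      simp only [map_sub, Polynomial.derivative_mul, Polynomial.derivative_C, mul_zero, add_zero, hch]
    have e3 := congrArg (aeval g) hH
    simp only [F1, map_add, map_sub, map_mul, map_pow] at e3
    refine order_arg (aeval g Q) (aeval g (pderiv 0 Q) ^ 2) (Polynomial.C α ^ 2 * aeval g H)
      (Polynomial.C α * (aeval g (pderiv 2 (pderiv 0 Q)) + aeval g (pderiv 0 (pderiv 2 Q))) * aeval g (pderiv 0 Q)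
        - aeval g (pderiv 0 (pderiv 0 Q)) * (Polynomial.derivative (aeval g Q) + 2 * Polynomial.C β * aeval g (pderiv 0 Q))) ?_ ?_ ?_ ?_ ?_
    · intro n hn hn'
      have := hchar n hn (hn'.trans hφd)
      rw [← map_natCast (Polynomial.C : F →+* Polynomial F)]
      exact Polynomial.C_ne_zero.2 this
    · rw [pow_two, Polynomial.mul_coeff_zero, hev]
      exact mul_ne_zero hns hns
    · rw [hev, hb]
    · have := congrArg (fun z => Polynomial.coeff z 0) e1
      simp only [Polynomial.coeff_derivative, Polynomial.coeff_sub, Polynomial.mul_coeff_zero, hev, Polynomial.coeff_C_zero] at this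
      simp only [Nat.cast_zero, zero_add, mul_one] at this
      rw [this, ← hα, ← hβ]; ring
    · rw [e2]
      linear_combination (Polynomial.C α ^ 2) * e3 +
        (- (Polynomial.C α * (aeval g (pderiv 2 (pderiv 0 Q)) + aeval g (pderiv 0 (pderiv 2 Q))) * aeval g (pderiv 0 Q))
          + aeval g (pderiv 0 (pderiv 0 Q)) * (Polynomial.derivative (aeval g Q) + Polynomial.C β * aeval g (pderiv 0 Q) + Polynomial.C α * aeval g (pderiv 2 Q))) * e1
  -- Both `Q` and the tangent polynomial vanish along `g`, so the eliminant does too, which is impossible.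
  have h1 := congrArg (aeval g) har
  have h2 : ∀ q : Polynomial F, aeval g (Polynomial.aeval (X 1 : MvPolynomial (Fin 3) F) q) = Polynomial.C q := by
    intro q
    rw [← Polynomial.aeval_algHom_apply]
    simp only [aeval_X, hg]
    induction q using Polynomial.induction_on' with
    | add p q hp hq => simp at hp hq; simp [hp, hq]
    | monomial n a => simp [Polynomial.algebraMap_apply, ← Polynomial.C_mul_X_pow_eq_monomial]
  have h3 : aeval g (rename Fin.succ R) = 0 := by
    rw [← h1]
    simp only [map_add, map_mul, map_sub, hφ, h2]
    simp [hg, Polynomial.algebraMap_apply]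
    left
    ring
  rw [aeval_rename] at h3
  apply hR
  refine inj_aux u α hns R _ ?_ h3
  funext i
  fin_cases i <;> rfl

end IB

/-! ### Relations between finite sets and singular lines -/

namespace IB
open MvPolynomial

/-- The number of related pairs in `A × B`. -/
def cnt {α β : Type*} (r : α → β → Prop) (A : Finset α) (B : Finset β) : ℕ :=
  ∑ a ∈ A, (B.filter (r a)).card

section cnt
variable {α β : Type*} (r : α → β → Prop)

theorem cnt_comm (A : Finset α) (B : Finset β) : cnt r A B = cnt (fun b a => r a b) B A := by
  unfold cnt
  simp only [Finset.card_filter]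
  rw [Finset.sum_comm]

theorem cnt_le_of_left (A : Finset α) (B : Finset β) (d : ℕ)
    (h : ∀ a ∈ A, (B.filter (r a)).card ≤ d) : cnt r A B ≤ A.card * d := by
  unfold cnt
  refine (Finset.sum_le_card_nsmul A _ d h).trans (by simp)

theorem cnt_le_mul (A : Finset α) (B : Finset β) : cnt r A B ≤ A.card * B.card :=
  cnt_le_of_left r A B _ fun _ _ => Finset.card_filter_le _ _

theorem cnt_union_left [DecidableEq α] {A A' : Finset α} (B : Finset β) (h : Disjoint A A') :
    cnt r (A ∪ A') B = cnt r A B + cnt r A' B := by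
  unfold cnt
  rw [Finset.sum_union h]

theorem cnt_union_right [DecidableEq β] (A : Finset α) {B B' : Finset β} (h : Disjoint B B') :
    cnt r A (B ∪ B') = cnt r A B + cnt r A B' := by
  rw [cnt_comm r A (B ∪ B'), cnt_comm r A B, cnt_comm r A B', cnt_union_left _ _ h]

theorem exists_split [DecidableEq α] (A : Finset α) (q : α → Prop) : ∃ B C : Finset α, A = B ∪ C ∧ Disjoint B C ∧
    (∀ t ∈ B, q t) ∧ ∀ t ∈ C, ¬ q t :=
  ⟨A.filter q, A.filter fun t => ¬ q t, by ext x; simp only [Finset.mem_union, Finset.mem_filter]; tauto,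
    Finset.disjoint_filter_filter_not _ _ _, fun _ ht => (Finset.mem_filter.1 ht).2,
    fun _ ht => (Finset.mem_filter.1 ht).2⟩

theorem cnt_mono {A A' : Finset α} {B B' : Finset β} (hA : A ⊆ A') (hB : B ⊆ B') :
    cnt r A B ≤ cnt r A' B' := by
  unfold cnt
  refine (Finset.sum_le_sum fun a _ => Finset.card_le_card (Finset.filter_subset_filter _ hB)).trans
    (Finset.sum_le_sum_of_subset hA)
end cnt

variable {F : Type*} [Field F]

/-- The line `x = u₁, z = v₁ y + w₁` of the first family meets the line `y = u₂, z = v₂ x + w₂` of the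
second one, at the point with `x = u₁`, `y = u₂`. The condition is symmetric. -/
def meets (a b : F × F × F) : Prop := a.2.1 * b.1 + a.2.2 = b.2.1 * a.1 + b.2.2

theorem meets_comm (a b : F × F × F) : meets a b ↔ meets b a := eq_comm

theorem cnt_meets_comm (A B : Finset (F × F × F)) : cnt meets A B = cnt meets B A := by
  rw [cnt_comm]
  congr 1
  funext a b
  exact propext (meets_comm _ _)

theorem eval_sub1_eq_eval_sub2 (a b : F × F × F) (h : meets a b) (Q : MvPolynomial (Fin 3) F) :
    (sub1 a Q).eval b.1 = (sub2 b Q).eval a.1 := by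
  have : (Polynomial.aeval (R := F) b.1).comp (sub1 a) = (Polynomial.aeval (R := F) a.1).comp (sub2 b) := by
    apply MvPolynomial.algHom_ext
    intro i
    unfold meets at h
    fin_cases i
    · have := sub2_X0 b
      simp [this, sub1, h]
    · have := sub2_X1 b
      simp [this, sub1]
    · have := sub2_X2 b
      simp [this, sub1]
  have h2 := DFunLike.congr_fun this Q
  simpa [Polynomial.coe_aeval_eq_eval] using h2

theorem sub2_aev (b : F × F × F) (q : Polynomial F) :
    sub2 b (Polynomial.aeval (X 1) q) = q := by
  rw [← Polynomial.aeval_algHom_apply, sub2_X1]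
  simp

/-- If moreover a second line of the second family lies on the surface, then `Q` divides a
polynomial `z - v x - w + (c₁ x + c₀)(y - u)`, and its lines of the first family are collinear as points `(u, v, w)`. -/
theorem plane (Q : MvPolynomial (Fin 3) F) (hQ : Irreducible Q) (hdeg : 0 < degreeOf 0 Q)
    (hchar : ∀ n : ℕ, 0 < n → n ≤ Q.totalDegree → (n : F) ≠ 0) (hF : Q ∣ F1 Q)
    (b : F × F × F) (hb : sub2 b Q = 0) (hns : sub2 b (pderiv 0 Q) ≠ 0)
    (b2 : F × F × F) (hb2 : sub2 b2 Q = 0) (hne : b2.1 ≠ b.1) :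
    ∃ f1 f0 g1 g0 : F, ∀ t, sub1 t Q = 0 → t.2.1 = f1 * t.1 + f0 ∧ t.2.2 = g1 * t.1 + g0 := by
  have hT := tangent Q hQ hdeg hchar hF b hb hns
  obtain ⟨u, v, w⟩ := b
  obtain ⟨u2, v2, w2⟩ := b2
  simp only at hne hT
  set α := sub2 (u, v, w) (pderiv 0 Q) with hα
  set β := sub2 (u, v, w) (pderiv 2 Q) with hβ
  have hu : u2 - u ≠ 0 := sub_ne_zero.2 hne
  obtain ⟨H, hH⟩ := hT
  have h1 := congrArg (sub2 (u2, v2, w2)) hH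
  simp only [map_add, map_mul, map_sub, sub2_aev, hb2, zero_mul, sub2_X0, sub2_X1, sub2_X2] at h1
  have hC : ∀ (t : F × F × F) (c : F), sub2 t (C c) = Polynomial.C c := by
    intro t c
    rw [← algebraMap_eq, AlgHom.commutes]; rfl
  have hC1 : ∀ (t : F × F × F) (c : F), sub1 t (C c) = Polynomial.C c := by
    intro t c
    rw [← algebraMap_eq, AlgHom.commutes]; rfl
  simp only [hC] at h1
  set c1 : F := - (v2 - v) / (u2 - u) with hc1
  set c0 : F := - (w2 - w) / (u2 - u) with hc0
  have e1 : Polynomial.C c1 * Polynomial.C (u2 - u) = - (Polynomial.C v2 - Polynomial.C v) := by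
    rw [← Polynomial.C_mul, hc1, div_mul_cancel₀ _ hu]; simp
  have e0 : Polynomial.C c0 * Polynomial.C (u2 - u) = - (Polynomial.C w2 - Polynomial.C w) := by
    rw [← Polynomial.C_mul, hc0, div_mul_cancel₀ _ hu]; simp
  have hβα : β = α * (Polynomial.C c1 * Polynomial.X + Polynomial.C c0) := by
    have : β * Polynomial.C (u2 - u) = α * (Polynomial.C c1 * Polynomial.X + Polynomial.C c0) * Polynomial.C (u2 - u) := by
      rw [Polynomial.C_sub] at e1 e0 ⊢
      linear_combination h1 - α * Polynomial.X * e1 - α * e0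
    exact mul_right_cancel₀ (Polynomial.C_ne_zero.2 hu) this
  have hdv : Q ∣ Polynomial.aeval (X 1) α * (X 0 - C v * X 1 - C w + (C c1 * X 1 + C c0) * (X 2 - C u)) := by
    refine ⟨H, ?_⟩
    rw [← hH, hβα]
    simp only [map_mul, map_add, Polynomial.aeval_X, Polynomial.aeval_C, algebraMap_eq]
    ring
  have hnd : ¬ Q ∣ Polynomial.aeval (X 1) α := by
    rintro ⟨r, hr⟩
    have := congrArg (sub2 (u, v, w)) hr
    rw [map_mul, hb, zero_mul, sub2_aev] at this
    exact hns this
  rcases hQ.prime.dvd_or_dvd hdv with h | ⟨G, hG⟩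
  · exact absurd h hnd
  refine ⟨-c1, -c0, v + c1 * u, w + c0 * u, ?_⟩
  rintro ⟨a, e, f⟩ ht
  have h2 := congrArg (sub1 (a, e, f)) hG
  rw [map_mul, ht, zero_mul] at h2
  simp only [map_add, map_mul, map_sub, hC1] at h2
  have s0 : sub1 (a, e, f) (X 0) = Polynomial.C e * Polynomial.X + Polynomial.C f := by simp [sub1]
  have s1 : sub1 (a, e, f) (X 1) = Polynomial.C a := by simp [sub1]
  have s2 : sub1 (a, e, f) (X 2) = Polynomial.X := by simp [sub1]
  rw [s0, s1, s2] at h2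
  have h3 := congrArg (fun z => Polynomial.eval 0 z) h2
  have h4 := congrArg (fun z => Polynomial.eval 1 z) h2
  simp at h3 h4
  constructor
  · simp only
    linear_combination h4 - h3
  · simp only
    linear_combination h3

theorem degreeOf_zero_swp (Q : MvPolynomial (Fin 3) F) : degreeOf 0 (swp Q) = degreeOf 0 Q := by
  have := degreeOf_rename_of_injective (R := F) (p := Q) (f := Equiv.swap (1 : Fin 3) 2) (Equiv.injective _) 0
  simpa [swp, Equiv.swap_apply_of_ne_of_ne] using this

/-- An irreducible surface contains few lines of the first family along which `Q_z` vanishes. This covers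
all lines when `Q` does not involve `z`. -/
theorem sing1 (Q : MvPolynomial (Fin 3) F) (hQ : Irreducible Q)
    (hchar : ∀ n : ℕ, 0 < n → n ≤ Q.totalDegree → (n : F) ≠ 0)
    (A : Finset (F × F × F)) (hinj : Set.InjOn Prod.fst (A : Set (F × F × F)))
    (h1 : ∀ t ∈ A, sub1 t Q = 0) (h2 : ∀ t ∈ A, sub1 t (pderiv 0 Q) = 0) :
    A.card ≤ 2 * Q.totalDegree ^ 2 := by
  by_cases hdeg : 0 < degreeOf 0 Q
  · refine (count1 Q (pderiv 0 Q) hQ hdeg (not_dvd_pderiv Q hdeg hchar) A hinj h1 h2).trans ?_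
    have := totalDegree_pderiv_le 0 Q
    have h3 : (pderiv 0 Q).totalDegree ≤ Q.totalDegree := by omega
    calc _ ≤ 2 * Q.totalDegree * Q.totalDegree := Nat.mul_le_mul_left _ h3
      _ = _ := by ring
  · have hn : (finSuccEquiv F 2 Q).natDegree = 0 := by rw [natDegree_finSuccEquiv]; omega
    obtain ⟨R, hR⟩ := Polynomial.natDegree_eq_zero.1 hn
    have hQR : Q = rename Fin.succ R := by
      apply (finSuccEquiv F 2).injective
      rw [finSuccEquiv_rename_succ', hR]
    have hR0 : R ≠ 0 := by
      rintro rfl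
      simp at hQR
      exact hQ.ne_zero hQR
    have h3 : A.card ≤ R.totalDegree := by
      rw [← Finset.card_image_of_injOn hinj]
      apply card_roots_R R hR0
      intro u hu
      obtain ⟨t, ht, rfl⟩ := Finset.mem_image.1 hu
      rw [← sub1_rename, ← hQR, h1 t ht]
    have h4 : R.totalDegree ≤ Q.totalDegree := by
      rw [hQR]
      have := totalDegree_rename_le (R := F) (fun i : Fin 3 => (Fin.cases 0 id i : Fin 2)) (rename Fin.succ R)
      rw [rename_rename] at this
      have e : ((fun i : Fin 3 => (Fin.cases 0 id i : Fin 2)) ∘ Fin.succ) = id := by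
        funext i; simp
      rw [e, rename_id] at this
      simpa using this
    have : Q.totalDegree ≤ Q.totalDegree ^ 2 := Nat.le_self_pow (by norm_num) _
    omega

end IB

/-! ### Lines on a surface of bounded degree -/

namespace IB
open MvPolynomial

variable {F : Type*} [Field F]

/-- At most `k` elements of `A` lie on a common line of parameter space that is a graph over the first
coordinate. -/
def CollBound (k : ℕ) (A : Finset (F × F × F)) : Prop :=
  ∀ f1 f0 g1 g0 : F, (A.filter fun t => t.2.1 = f1 * t.1 + f0 ∧ t.2.2 = g1 * t.1 + g0).card ≤ k

theorem CollBound.mono {k : ℕ} {A B : Finset (F × F × F)} (h : CollBound k A) (hB : B ⊆ A) :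
    CollBound k B := fun f1 f0 g1 g0 =>
  (Finset.card_le_card (Finset.filter_subset_filter _ hB)).trans (h f1 f0 g1 g0)

/-- A line not on the surface `P = 0` meets at most `deg P` lines that are. -/
theorem roots_meet1 (a : F × F × F) (P : MvPolynomial (Fin 3) F) (ha : sub1 a P ≠ 0)
    (B : Finset (F × F × F)) (hB : Set.InjOn Prod.fst (B : Set (F × F × F)))
    (h : ∀ b ∈ B, sub2 b P = 0) : (B.filter (meets a)).card ≤ P.totalDegree := by
  have hsub : (B.filter (meets a)).image Prod.fst ⊆ (sub1 a P).roots.toFinset := by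
    intro z hz
    obtain ⟨b, hb, rfl⟩ := Finset.mem_image.1 hz
    obtain ⟨hb1, hb2⟩ := Finset.mem_filter.1 hb
    rw [Multiset.mem_toFinset, Polynomial.mem_roots ha, Polynomial.IsRoot.def,
      eval_sub1_eq_eval_sub2 a b hb2, h b hb1, Polynomial.eval_zero]
  calc (B.filter (meets a)).card = ((B.filter (meets a)).image Prod.fst).card :=
        (Finset.card_image_of_injOn (hB.mono (Finset.coe_subset.2 (Finset.filter_subset _ _)))).symm
    _ ≤ _ := Finset.card_le_card hsub
    _ ≤ _ := Multiset.toFinset_card_le _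
    _ ≤ _ := Polynomial.card_roots' _
    _ ≤ _ := natDegree_sub1_le _ _

/-- The counterpart of `roots_meet1` with the two families exchanged. -/
theorem roots_meet2 (a : F × F × F) (P : MvPolynomial (Fin 3) F) (ha : sub2 a P ≠ 0)
    (B : Finset (F × F × F)) (hB : Set.InjOn Prod.fst (B : Set (F × F × F)))
    (h : ∀ b ∈ B, sub1 b P = 0) : (B.filter (meets a)).card ≤ P.totalDegree := by
  have := roots_meet1 a (swp P) ha B hB (fun b hb => by rw [← sub1_eq]; exact h b hb)
  rwa [totalDegree_swp] at this

/-- Incidences on an irreducible surface ruled by lines of the first family: apart from a bounded number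
of lines `X1`, `X2`, along which `Q_z` vanishes, every line has few incidences. -/
theorem case_dvd (Q : MvPolynomial (Fin 3) F) (hQ : Irreducible Q)
    (hchar : ∀ n : ℕ, 0 < n → n ≤ Q.totalDegree → (n : F) ≠ 0) (hdeg : 0 < degreeOf 0 Q)
    (hF : Q ∣ F1 Q) (k : ℕ) (hk : 1 ≤ k)
    (A1 A2 : Finset (F × F × F)) (hi1 : Set.InjOn Prod.fst (A1 : Set (F × F × F)))
    (hi2 : Set.InjOn Prod.fst (A2 : Set (F × F × F)))
    (h1 : ∀ t ∈ A1, sub1 t Q = 0) (h2 : ∀ t ∈ A2, sub2 t Q = 0)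
    (hc1 : CollBound k A1) :
    ∃ X1 ⊆ A1, ∃ X2 ⊆ A2, X1.card + X2.card ≤ 12 * Q.totalDegree ^ 2 ∧
      cnt meets A1 A2 ≤ (Q.totalDegree + k) * (A1.card + A2.card) + cnt meets X1 X2 := by
  by_cases hs : ∃ b ∈ A2, sub2 b (pderiv 0 Q) ≠ 0
  · obtain ⟨b, hb, hbs⟩ := hs
    refine ⟨∅, by simp, ∅, by simp, by simp, ?_⟩
    have hle : cnt meets A1 A2 ≤ k * (A1.card + A2.card) := by
      by_cases h3 : ∃ b2 ∈ A2, b2.1 ≠ b.1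
      · obtain ⟨b2, hb2, hne⟩ := h3
        obtain ⟨f1, f0, g1, g0, hfg⟩ := plane Q hQ hdeg hchar hF b (h2 b hb) hbs b2 (h2 b2 hb2) hne
        have : A1.card ≤ k := by
          refine le_trans (le_of_eq ?_) (hc1 f1 f0 g1 g0)
          rw [Finset.filter_true_of_mem]
          intro t ht
          exact hfg t (h1 t ht)
        refine (cnt_le_mul _ _ _).trans ?_
        nlinarith
      · push Not at h3
        have : A2.card ≤ 1 := by
          rw [Finset.card_le_one]
          intro x hx y hy
          exact hi2 hx hy ((h3 x hx).trans (h3 y hy).symm)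
        refine (cnt_le_mul _ _ _).trans ?_
        nlinarith
    nlinarith
  · push Not at hs
    obtain ⟨B, C, rfl, hdis, hB, hC⟩ := exists_split A1 (fun t => sub1 t (pderiv 0 Q) = 0)
    refine ⟨B, Finset.subset_union_left, A2, subset_rfl, ?_, ?_⟩
    · have e1 := sing1 Q hQ hchar B
        (hi1.mono (Finset.coe_subset.2 Finset.subset_union_left))
        (fun t ht => h1 t (Finset.mem_union_left _ ht)) hB
      have e2 := sing1 (swp Q) ((MulEquiv.irreducible_iff swp).2 hQ)
        (by rw [totalDegree_swp]; exact hchar) A2 hi2 (fun t ht => h2 t ht)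
        (fun t ht => by rw [pderiv_zero_swp]; exact hs t ht)
      rw [totalDegree_swp] at e2
      omega
    · rw [cnt_union_left _ _ hdis, Finset.card_union_of_disjoint hdis]
      have : cnt meets C A2 ≤ C.card * Q.totalDegree := by
        refine cnt_le_of_left _ _ _ _ ?_
        intro a ha
        exact (roots_meet1 a _ (hC a ha) A2 hi2 hs).trans ((totalDegree_pderiv_le _ _).trans (Nat.sub_le _ _))
      nlinarith

/-- Incidences between lines of the two families on one irreducible surface. Either the surface is ruled
by one of the families (`case_dvd`), or each family contributes `O(deg² Q)` lines, by `count1` applied to `F1 Q`. -/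
theorem component (Q : MvPolynomial (Fin 3) F) (hQ : Irreducible Q)
    (hchar : ∀ n : ℕ, 0 < n → n ≤ Q.totalDegree → (n : F) ≠ 0) (k : ℕ) (hk : 1 ≤ k)
    (A1 A2 : Finset (F × F × F)) (hi1 : Set.InjOn Prod.fst (A1 : Set (F × F × F)))
    (hi2 : Set.InjOn Prod.fst (A2 : Set (F × F × F)))
    (h1 : ∀ t ∈ A1, sub1 t Q = 0) (h2 : ∀ t ∈ A2, sub2 t Q = 0)
    (hc1 : CollBound k A1) (hc2 : CollBound k A2) :
    ∃ X1 ⊆ A1, ∃ X2 ⊆ A2, X1.card + X2.card ≤ 12 * Q.totalDegree ^ 2 ∧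
      cnt meets A1 A2 ≤ (Q.totalDegree + k) * (A1.card + A2.card) + cnt meets X1 X2 := by
  have hQ' : Irreducible (swp Q) := (MulEquiv.irreducible_iff swp).2 hQ
  have hchar' : ∀ n : ℕ, 0 < n → n ≤ (swp Q).totalDegree → (n : F) ≠ 0 := by
    rw [totalDegree_swp]; exact hchar
  by_cases hdeg : 0 < degreeOf 0 Q
  · have hdeg' : 0 < degreeOf 0 (swp Q) := by rwa [degreeOf_zero_swp]
    by_cases hF : Q ∣ F1 Q
    · exact case_dvd Q hQ hchar hdeg hF k hk A1 A2 hi1 hi2 h1 h2 hc1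
    by_cases hF' : swp Q ∣ F1 (swp Q)
    · obtain ⟨X2, hX2, X1, hX1, hc, hI⟩ := case_dvd (swp Q) hQ' hchar' hdeg' hF' k hk A2 A1 hi2 hi1
        (fun t ht => h2 t ht) (fun t ht => by rw [← sub1_eq]; exact h1 t ht) hc2
      refine ⟨X1, hX1, X2, hX2, ?_, ?_⟩
      · rw [totalDegree_swp] at hc; omega
      · rw [totalDegree_swp, cnt_meets_comm, cnt_meets_comm X2, add_comm A2.card] at hI
        exact hI
    refine ⟨A1, subset_rfl, A2, subset_rfl, ?_, by omega⟩
    have e1 := count1 Q (F1 Q) hQ hdeg hF A1 hi1 h1 (fun t ht => sub1_F1 t Q (h1 t ht))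
    have e2 := count1 (swp Q) (F1 (swp Q)) hQ' hdeg' hF' A2 hi2 h2 (fun t ht => sub1_F1 t _ (h2 t ht))
    have d1 := totalDegree_F1_le Q
    have d2 := totalDegree_F1_le (swp Q)
    rw [totalDegree_swp] at d2 e2
    nlinarith
  · have hz : ∀ P : MvPolynomial (Fin 3) F, degreeOf 0 P = 0 → pderiv 0 P = 0 := by
      intro P hP
      apply pderiv_eq_zero_of_notMem_vars
      rw [mem_vars_iff_degreeOf_ne_zero, not_not, hP]
    have hz1 : pderiv 0 Q = 0 := hz Q (by omega)
    refine ⟨A1, subset_rfl, A2, subset_rfl, ?_, by omega⟩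
    have e1 := sing1 Q hQ hchar A1 hi1 h1 (fun t _ => by rw [hz1, map_zero])
    have e2 := sing1 (swp Q) hQ' hchar' A2 hi2 (fun t ht => h2 t ht)
      (fun t ht => by rw [pderiv_zero_swp, hz1]; simp)
    rw [totalDegree_swp] at e2
    omega


theorem cnt_add_le {α β : Type*} [DecidableEq α] [DecidableEq β] (r : α → β → Prop) {X1 Y1 : Finset α} {X2 Y2 : Finset β}
    (h1 : Disjoint X1 Y1) : cnt r X1 X2 + cnt r Y1 Y2 ≤ cnt r (X1 ∪ Y1) (X2 ∪ Y2) := by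
  have : cnt r (X1 ∪ Y1) (X2 ∪ Y2) = cnt r X1 (X2 ∪ Y2) + cnt r Y1 (X2 ∪ Y2) := by
    unfold cnt; rw [Finset.sum_union h1]
  rw [this]
  exact add_le_add (cnt_mono r subset_rfl Finset.subset_union_left)
    (cnt_mono r subset_rfl Finset.subset_union_right)

/-- Incidences between lines on an arbitrary surface of degree less than the characteristic: up to a linear
term they come from `12 deg² Q` lines. Irreducible factors are split off one at a time. -/
theorem multi (k : ℕ) (hk : 1 ≤ k) (D : ℕ) : ∀ (Q : MvPolynomial (Fin 3) F) (_ : Q ≠ 0)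
    (_ : Q.totalDegree ≤ D)
    (_ : ∀ n : ℕ, 0 < n → n ≤ Q.totalDegree → (n : F) ≠ 0)
    (A1 A2 : Finset (F × F × F)) (_ : Set.InjOn Prod.fst (A1 : Set (F × F × F)))
    (_ : Set.InjOn Prod.fst (A2 : Set (F × F × F)))
    (_ : ∀ t ∈ A1, sub1 t Q = 0) (_ : ∀ t ∈ A2, sub2 t Q = 0)
    (_ : CollBound k A1) (_ : CollBound k A2),
    ∃ X1 ⊆ A1, ∃ X2 ⊆ A2, X1.card + X2.card ≤ 12 * Q.totalDegree ^ 2 ∧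
      cnt meets A1 A2 ≤ (2 * Q.totalDegree + k) * (A1.card + A2.card) + cnt meets X1 X2 := by
  induction D using Nat.strong_induction_on with
  | _ D ih =>
  intro Q hQ hD hchar A1 A2 hi1 hi2 h1 h2 hc1 hc2
  by_cases hd : Q.totalDegree = 0
  · rw [totalDegree_eq_zero_iff_eq_C] at hd
    have hc : coeff 0 Q ≠ 0 := by
      intro h
      rw [h, C_0] at hd
      exact hQ hd
    have hA1 : A1 = ∅ := by
      rw [Finset.eq_empty_iff_forall_notMem]
      intro t ht
      have := h1 t ht
      rw [hd, ← algebraMap_eq, AlgHom.commutes] at this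
      exact hc (by simpa [Polynomial.algebraMap_apply] using this)
    refine ⟨∅, by simp, ∅, by simp, by simp, ?_⟩
    rw [hA1]
    simp [cnt]
  have hnu : ¬ IsUnit Q := by
    intro h
    rw [isUnit_iff_totalDegree_of_isReduced] at h
    exact hd h.2
  obtain ⟨Q1, hQ1, Q', rfl⟩ := WfDvdMonoid.exists_irreducible_factor hnu hQ
  have hQ1d : 0 < Q1.totalDegree := by
    by_contra h
    have h0 : Q1.totalDegree = 0 := by omega
    apply hQ1.not_isUnit
    rw [totalDegree_eq_zero_iff_eq_C] at h0
    have : coeff 0 Q1 ≠ 0 := by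
      intro h
      rw [h, C_0] at h0
      exact hQ1.ne_zero h0
    rw [h0]
    exact (IsUnit.mk0 _ this).map C
  have hQ' : Q' ≠ 0 := right_ne_zero_of_mul hQ
  have hdeg := totalDegree_mul_of_isDomain hQ1.ne_zero hQ'
  set d1 := Q1.totalDegree with hd1
  set d' := Q'.totalDegree with hd'
  rw [hdeg] at hchar hD ⊢
  -- The lines on the component `Q1` form `B1`, `B2`; the others, `C1`, `C2`, lie on the residual surface and meet at
  -- most `deg Q1` lines of the component each.
  obtain ⟨B1, C1, rfl, hdis, hB1, hC1'⟩ := exists_split A1 (fun t => sub1 t Q1 = 0)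
  obtain ⟨B2, C2, rfl, hdis2, hB2, hC2'⟩ := exists_split A2 (fun t => sub2 t Q1 = 0)
  have hs1 : B1 ⊆ B1 ∪ C1 := Finset.subset_union_left
  have hs2 : B2 ⊆ B2 ∪ C2 := Finset.subset_union_left
  have hs1' : C1 ⊆ B1 ∪ C1 := Finset.subset_union_right
  have hs2' : C2 ⊆ B2 ∪ C2 := Finset.subset_union_right
  have hC1 : ∀ t ∈ C1, sub1 t Q' = 0 := by
    intro t ht
    have := h1 t (hs1' ht)
    rw [map_mul] at this
    exact (mul_eq_zero.1 this).resolve_left (hC1' t ht)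
  have hC2 : ∀ t ∈ C2, sub2 t Q' = 0 := by
    intro t ht
    have := h2 t (hs2' ht)
    rw [map_mul] at this
    exact (mul_eq_zero.1 this).resolve_left (hC2' t ht)
  have inj : ∀ {S T : Finset (F × F × F)}, S ⊆ T → Set.InjOn Prod.fst (T : Set (F × F × F)) →
      Set.InjOn Prod.fst (S : Set (F × F × F)) := fun h h' => h'.mono (Finset.coe_subset.2 h)
  obtain ⟨X1, hX1, X2, hX2, hXc, hXI⟩ := component Q1 hQ1 (fun n hn hn' => hchar n hn (by omega)) k hk B1 B2
    (inj hs1 hi1) (inj hs2 hi2) hB1 hB2 (hc1.mono hs1) (hc2.mono hs2)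
  obtain ⟨Y1, hY1, Y2, hY2, hYc, hYI⟩ := ih d' (by omega) Q' hQ' le_rfl (fun n hn hn' => hchar n hn (by omega)) C1 C2
    (inj hs1' hi1) (inj hs2' hi2) hC1 hC2 (hc1.mono hs1') (hc2.mono hs2')
  have hcr1 : cnt meets B1 C2 ≤ C2.card * d1 := by
    rw [cnt_meets_comm]
    exact cnt_le_of_left _ _ _ _ fun c hc => roots_meet2 c Q1 (hC2' c hc) B1 (inj hs1 hi1) hB1
  have hcr2 : cnt meets C1 B2 ≤ C1.card * d1 :=
    cnt_le_of_left _ _ _ _ fun c hc => roots_meet1 c Q1 (hC1' c hc) B2 (inj hs2 hi2) hB2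
  refine ⟨X1 ∪ Y1, Finset.union_subset (hX1.trans hs1) (hY1.trans hs1'), X2 ∪ Y2,
    Finset.union_subset (hX2.trans hs2) (hY2.trans hs2'), ?_, ?_⟩
  · have e1 := Finset.card_union_le X1 Y1
    have e2 := Finset.card_union_le X2 Y2
    nlinarith
  · have e1 := cnt_add_le meets (X2 := X2) (Y2 := Y2) (hdis.mono hX1 hY1)
    rw [cnt_union_left _ _ hdis, cnt_union_right _ _ hdis2, cnt_union_right _ _ hdis2,
      Finset.card_union_of_disjoint hdis, Finset.card_union_of_disjoint hdis2]
    rw [← hd1] at hXI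
    rw [← hd'] at hYI
    have p1 : 0 ≤ (d1 + 2 * d') * B1.card := Nat.zero_le _
    have p2 : 0 ≤ (d1 + 2 * d') * B2.card := Nat.zero_le _
    have p3 : 0 ≤ d1 * C1.card := Nat.zero_le _
    have p4 : 0 ≤ d1 * C2.card := Nat.zero_le _
    nlinarith only [p1, p2, p3, p4, hXI, hYI, e1, hcr1, hcr2]

end IB

/-! ### Random sampling and parameter counting -/

namespace IB
open MvPolynomial

/-- A random subset `S` of the vertices of a graph of minimal degree `d`, each vertex being chosen
independently with probability `p`. The exponential moments `2 ^ |S|` and `∑ v, 2 ^ (-|S ∩ Nb v|)` are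
simultaneously at most twice their expectations, so `S` is small and most vertices have many neighbours in it. -/
theorem sampling {α : Type*} [DecidableEq α] (V : Finset α) (Nb : α → Finset α) (d : ℕ)
    (hNb : ∀ v ∈ V, Nb v ⊆ V ∧ d ≤ (Nb v).card) (p : ℝ) (hp0 : 0 ≤ p) (hp1 : p ≤ 1)
    (hV : 0 < V.card) :
    ∃ S ⊆ V, (2 : ℝ) ^ S.card ≤ 2 * (1 + p) ^ V.card ∧
      ∑ v ∈ V, (1 / 2 : ℝ) ^ (S.filter (· ∈ Nb v)).card ≤ 2 * V.card * (1 - p / 2) ^ d := by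
  -- The probability of the outcome `S`.
  set w : Finset α → ℝ := fun S => p ^ S.card * (1 - p) ^ (V \ S).card with hw
  have hw0 : ∀ S, 0 ≤ w S := fun S => mul_nonneg (pow_nonneg hp0 _) (pow_nonneg (by linarith) _)
  -- Expectations of multiplicative functions factor.
  have gen : ∀ f : α → ℝ, ∑ S ∈ V.powerset, w S * ∏ u ∈ S, f u = ∏ u ∈ V, (p * f u + (1 - p)) := by
    intro f
    rw [Finset.prod_add]
    refine Finset.sum_congr rfl fun S _ => ?_
    rw [Finset.prod_mul_distrib, Finset.prod_const, Finset.prod_const]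
    simp only [hw]; ring
  have tot : ∑ S ∈ V.powerset, w S = 1 := by
    have := gen (fun _ => 1)
    simpa using this
  have m1 : ∑ S ∈ V.powerset, w S * (2 : ℝ) ^ S.card = (1 + p) ^ V.card := by
    have := gen (fun _ => 2)
    simp only [Finset.prod_const] at this
    rw [this]; congr 1; ring
  have m2 : ∀ v ∈ V, ∑ S ∈ V.powerset, w S * (1 / 2 : ℝ) ^ (S.filter (· ∈ Nb v)).card
      ≤ (1 - p / 2) ^ d := by
    intro v hv
    have := gen (fun u => if u ∈ Nb v then (1 / 2 : ℝ) else 1)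
    have e : ∀ S : Finset α, ∏ u ∈ S, (if u ∈ Nb v then (1 / 2 : ℝ) else 1)
        = (1 / 2 : ℝ) ^ (S.filter (· ∈ Nb v)).card := by
      intro S
      rw [Finset.prod_ite]; simp
    simp only [e] at this
    rw [this]
    have e2 : ∏ u ∈ V, (p * (if u ∈ Nb v then (1 / 2 : ℝ) else 1) + (1 - p))
        = (1 - p / 2) ^ (Nb v).card := by
      have : ∀ u, (p * (if u ∈ Nb v then (1 / 2 : ℝ) else 1) + (1 - p))
          = if u ∈ Nb v then (1 - p / 2) else 1 := by
        intro u; split_ifs <;> ring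
      simp only [this]
      rw [Finset.prod_ite]
      simp only [Finset.prod_const, one_pow, mul_one]
      rw [Finset.filter_mem_eq_inter, Finset.inter_eq_right.2 (hNb v hv).1]
    rw [e2]
    exact pow_le_pow_of_le_one (by linarith) (by linarith) (hNb v hv).2
  have A0 : 0 < (1 + p) ^ V.card := by positivity
  have B0 : 0 < V.card * (1 - p / 2) ^ d := by
    have : (0 : ℝ) < V.card := by exact_mod_cast hV
    have : 0 < 1 - p / 2 := by linarith
    positivity
  set A := (1 + p) ^ V.card
  set B := V.card * (1 - p / 2) ^ d
  have key : ∃ S ∈ V.powerset, w S * ((2 : ℝ) ^ S.card / A +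
      (∑ v ∈ V, (1 / 2 : ℝ) ^ (S.filter (· ∈ Nb v)).card) / B) ≤ w S * 2 ∧ 0 < w S := by
    by_contra hcon
    push Not at hcon
    have h1 : ∑ S ∈ V.powerset, w S * ((2 : ℝ) ^ S.card / A +
      (∑ v ∈ V, (1 / 2 : ℝ) ^ (S.filter (· ∈ Nb v)).card) / B) ≤ 2 := by
      have : ∑ S ∈ V.powerset, w S * ((2 : ℝ) ^ S.card / A +
          (∑ v ∈ V, (1 / 2 : ℝ) ^ (S.filter (· ∈ Nb v)).card) / B) =
          (∑ S ∈ V.powerset, w S * (2 : ℝ) ^ S.card) / A +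
          (∑ v ∈ V, ∑ S ∈ V.powerset, w S * (1 / 2 : ℝ) ^ (S.filter (· ∈ Nb v)).card) / B := by
        rw [Finset.sum_comm, Finset.sum_div, Finset.sum_div, ← Finset.sum_add_distrib]
        refine Finset.sum_congr rfl fun S _ => ?_
        rw [← Finset.mul_sum]; ring
      rw [this, m1, div_self A0.ne']
      have : (∑ v ∈ V, ∑ S ∈ V.powerset, w S * (1 / 2 : ℝ) ^ (S.filter (· ∈ Nb v)).card) ≤ B := by
        refine (Finset.sum_le_sum m2).trans ?_
        simp [B]
      have := (div_le_one B0).2 this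
      linarith
    have h2 : ∑ S ∈ V.powerset, w S * 2 < ∑ S ∈ V.powerset, w S * ((2 : ℝ) ^ S.card / A +
      (∑ v ∈ V, (1 / 2 : ℝ) ^ (S.filter (· ∈ Nb v)).card) / B) := by
      obtain ⟨S0, hS0, hS0w⟩ : ∃ S ∈ V.powerset, 0 < w S := by
        by_contra h
        push Not at h
        have := Finset.sum_nonpos h
        linarith
      refine Finset.sum_lt_sum (fun S hS => ?_) ⟨S0, hS0, ?_⟩
      · by_contra h
        push Not at h
        have h3 := hcon S hS h.le
        have h4 : w S = 0 := le_antisymm h3 (hw0 S)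
        rw [h4] at h
        simp at h
      · by_contra h
        push Not at h
        have h3 := hcon S0 hS0 h
        linarith
    rw [← Finset.sum_mul, tot] at h2
    linarith
  obtain ⟨S, hS, hle, hpos⟩ := key
  have h := le_of_mul_le_mul_left hle hpos
  have n1 : 0 ≤ (2 : ℝ) ^ S.card / A := by positivity
  have n2 : 0 ≤ (∑ v ∈ V, (1 / 2 : ℝ) ^ (S.filter (· ∈ Nb v)).card) / B := by positivity
  refine ⟨S, Finset.mem_powerset.1 hS, ?_, ?_⟩
  · rw [← div_le_iff₀ A0]; linarith
  · rw [mul_assoc, ← div_le_iff₀ B0]; linarith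

variable {F : Type*} [Field F]

/-- Parameter counting: the `e ^ 3` monomials with all exponents below `e` restrict to polynomials of degree
below `3 e` on a line, so vanishing on a line is at most `3 e` linear conditions. -/
theorem vanish (S1 S2 : Finset (F × F × F)) (e : ℕ) (he : 3 * (S1.card + S2.card) < e ^ 2) :
    ∃ Q : MvPolynomial (Fin 3) F, Q ≠ 0 ∧ Q.totalDegree ≤ 3 * e ∧ (∀ t ∈ S1, sub1 t Q = 0) ∧
      ∀ t ∈ S2, sub2 t Q = 0 := by
  have he0 : 0 < e := by
    rcases Nat.eq_zero_or_pos e with h | h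
    · rw [h] at he; simp at he
    · exact h
  -- Polynomials from coefficient vectors on the box
  let mon : (Fin 3 → Fin e) → (Fin 3 →₀ ℕ) := fun b => Finsupp.equivFunOnFinite.symm (fun i => (b i : ℕ))
  have hmon : Function.Injective mon := by
    intro b b' h
    funext i
    have := DFunLike.congr_fun h i
    exact Fin.ext this
  let poly : ((Fin 3 → Fin e) → F) →ₗ[F] MvPolynomial (Fin 3) F :=
    { toFun := fun c => ∑ b, monomial (mon b) (c b)
      map_add' := by intro x y; simp [Finset.sum_add_distrib]
      map_smul' := by intro r x; simp [Finset.smul_sum, smul_monomial] }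
  have hpoly : ∀ c b, coeff (mon b) (poly c) = c b := by
    intro c b
    simp only [poly, LinearMap.coe_mk, AddHom.coe_mk, coeff_sum, coeff_monomial]
    rw [Finset.sum_eq_single b]
    · simp
    · intro b' _ hb'
      rw [if_neg (fun h => hb' (hmon h))]
    · simp
  have hdeg : ∀ c, (poly c).totalDegree ≤ 3 * (e - 1) := by
    intro c
    refine totalDegree_finsetSum_le (fun b _ => ?_)
    refine (totalDegree_monomial_le _ _).trans ?_
    rw [Finsupp.sum_fintype _ _ (by simp)]
    simp only [Fin.sum_univ_three]
    have h0 := (b 0).2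
    have h1 := (b 1).2
    have h2 := (b 2).2
    simp [mon]
    omega
  let I := (S1 ⊕ S2) × Fin (3 * e)
  let cond : ((Fin 3 → Fin e) → F) →ₗ[F] (I → F) :=
    LinearMap.pi fun i =>
      (Sum.elim (fun t : S1 => (Polynomial.lcoeff F (i.2 : ℕ)).comp ((sub1 t.1).toLinearMap.comp poly))
        (fun t : S2 => (Polynomial.lcoeff F (i.2 : ℕ)).comp ((sub2 t.1).toLinearMap.comp poly)) i.1)
  have hlt : Module.finrank F (I → F) < Module.finrank F ((Fin 3 → Fin e) → F) := by
    rw [Module.finrank_fintype_fun_eq_card, Module.finrank_fintype_fun_eq_card]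
    simp only [I, Fintype.card_prod, Fintype.card_sum, Fintype.card_coe, Fintype.card_fin,
      Fintype.card_fun]
    nlinarith
  have hker := LinearMap.ker_ne_bot_of_finrank_lt hlt (f := cond)
  obtain ⟨c, hc, hc0⟩ := Submodule.exists_mem_ne_zero_of_ne_bot hker
  rw [LinearMap.mem_ker] at hc
  refine ⟨poly c, ?_, (hdeg c).trans (by omega), ?_, ?_⟩
  · intro h
    apply hc0
    funext b
    rw [← hpoly c b, h]; simp
  · intro t ht
    ext j
    by_cases hj : j < 3 * e
    · have := congrFun hc (Sum.inl ⟨t, ht⟩, ⟨j, hj⟩)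
      simpa [cond] using this
    · rw [Polynomial.coeff_zero]
      apply Polynomial.coeff_eq_zero_of_natDegree_lt
      have := natDegree_sub1_le t (poly c)
      have := hdeg c
      omega
  · intro t ht
    ext j
    by_cases hj : j < 3 * e
    · have := congrFun hc (Sum.inr ⟨t, ht⟩, ⟨j, hj⟩)
      simpa [cond] using this
    · rw [Polynomial.coeff_zero]
      apply Polynomial.coeff_eq_zero_of_natDegree_lt
      have h1 := natDegree_sub1_le t (swp (poly c))
      rw [totalDegree_swp] at h1
      have := hdeg c
      rw [sub2_apply]
      omega

end IB

/-! ### Incidences between two families of lines -/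

namespace IB
open MvPolynomial

variable {F : Type*} [Field F]

/-- Most lines have more than `3 e` neighbours in the sample: the `B` exceptional ones contribute at least
`2 ^ (-3 e)` each to the exponential moment `hsum`. -/
theorem bad_numeric (s : ℝ) (hs4 : 10000 ≤ s) (B N d e : ℕ) (hd : 10000 * s ≤ d)
    (h0 : (3 * e : ℝ) ≤ 12 / 100 * s)
    (hsum : B * (1 / 2 : ℝ) ^ (3 * e) ≤ 2 * N * (1 - 1 / 10000 / 2) ^ d) : (B : ℝ) ≤ N / 4 := by
  have x1 : (1 - 1 / 10000 / 2 : ℝ) ^ d ≤ Real.exp (- (s / 2)) := by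
    calc (1 - 1 / 10000 / 2 : ℝ) ^ d ≤ Real.exp (- (1 / 20000)) ^ d := by
          refine pow_le_pow_left₀ (by norm_num) ?_ _
          have := Real.add_one_le_exp (- (1 / 20000) : ℝ)
          linarith
      _ = Real.exp (d * (- (1 / 20000))) := (Real.exp_nat_mul _ _).symm
      _ ≤ _ := by
        apply Real.exp_le_exp.2
        linarith
  have x2 : (2 : ℝ) ^ (3 * e) ≤ Real.exp (s / 4) := by
    rw [← Real.exp_log (show (0:ℝ) < 2 ^ (3 * e) by positivity), Real.log_pow]
    apply Real.exp_le_exp.2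
    have := Real.log_two_lt_d9
    have h00 : (0 : ℝ) ≤ 3 * e := by positivity
    push_cast
    nlinarith
  have x3 : Real.exp (s / 4) * 8 ≤ Real.exp (s / 2) := by
    have : s / 2 = s / 4 + s / 4 := by ring
    rw [this, Real.exp_add]
    have := Real.add_one_le_exp (s / 4)
    have : 8 ≤ Real.exp (s / 4) := by linarith
    have := Real.exp_pos (s / 4)
    nlinarith
  have y1 : (B : ℝ) ≤ 2 * N * Real.exp (- (s / 2)) * 2 ^ (3 * e) := by
    have : (B : ℝ) = B * (1 / 2 : ℝ) ^ (3 * e) * 2 ^ (3 * e) := by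
      rw [mul_assoc, ← mul_pow]; norm_num
    rw [this]
    have hN' : (0:ℝ) ≤ 2 * N := by positivity
    exact mul_le_mul_of_nonneg_right (hsum.trans (mul_le_mul_of_nonneg_left x1 hN')) (by positivity)
  have y2 : Real.exp (- (s / 2)) * 2 ^ (3 * e) ≤ 1 / 8 := by
    rw [Real.exp_neg, inv_mul_le_iff₀ (Real.exp_pos _)]
    linarith
  have : (0:ℝ) ≤ N := by positivity
  nlinarith

/-- If each of the `N` lines meets at least `10⁴ √N` others, then all but a quarter of them lie on a surface
of degree at most `0.12 √N`. The surface is chosen to contain a random sample of density `10⁻⁴`; a line that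
meets more lines of the sample than the degree lies on the surface. -/
theorem reduce (L1 L2 : Finset (F × F × F))
    (hi1 : Set.InjOn Prod.fst (L1 : Set (F × F × F)))
    (hi2 : Set.InjOn Prod.fst (L2 : Set (F × F × F))) (N : ℕ) (hN : L1.card + L2.card = N)
    (hN0 : 0 < N)
    (d : ℕ) (hd : 10000 * √(N : ℝ) ≤ d)
    (h1 : ∀ a ∈ L1, d ≤ (L2.filter (meets a)).card)
    (h2 : ∀ b ∈ L2, d ≤ (L1.filter (meets b)).card) :
    ∃ Q : MvPolynomial (Fin 3) F, Q ≠ 0 ∧ (Q.totalDegree : ℝ) ≤ 12 / 100 * √(N : ℝ) ∧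
      (((L1.filter fun t => sub1 t Q ≠ 0).card + (L2.filter fun t => sub2 t Q ≠ 0).card : ℕ) : ℝ)
        ≤ N / 4 := by
  set s := √(N : ℝ) with hs
  have hs0 : 0 < s := Real.sqrt_pos.2 (by exact_mod_cast hN0)
  have hss : s * s = N := Real.mul_self_sqrt (by positivity)
  have hdN : d ≤ N := by
    by_cases h : L1.Nonempty
    · obtain ⟨a, ha⟩ := h
      have := h1 a ha
      have := Finset.card_filter_le L2 (meets a)
      omega
    · rw [Finset.not_nonempty_iff_eq_empty] at h
      have : 0 < L2.card := by rw [h] at hN; simp at hN; omega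
      obtain ⟨b, hb⟩ := Finset.card_pos.1 this
      have := h2 b hb
      have := Finset.card_filter_le L1 (meets b)
      omega
  have hs4 : 10000 ≤ s := by
    have : 10000 * s ≤ s * s := by
      rw [hss]; exact hd.trans (by exact_mod_cast hdN)
    exact le_of_mul_le_mul_right this hs0
  let V := L1.disjSum L2
  let Nb : (F × F × F) ⊕ (F × F × F) → Finset ((F × F × F) ⊕ (F × F × F)) := fun v =>
    Sum.elim (fun a => (L2.filter (meets a)).map Function.Embedding.inr)
      (fun b => (L1.filter (meets b)).map Function.Embedding.inl) v
  have hVc : V.card = N := by simp [V, hN]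
  obtain ⟨S, hSV, hS1, hS2⟩ := sampling V Nb d (by
    rintro (a | b) hv
    · have ha : a ∈ L1 := by simpa [V] using hv
      refine ⟨?_, by simpa [Nb] using h1 a ha⟩
      intro x hx
      simp only [Nb, Sum.elim_inl, Finset.mem_map] at hx
      obtain ⟨b, hb, rfl⟩ := hx
      simpa [V] using (Finset.mem_filter.1 hb).1
    · have ha : b ∈ L2 := by simpa [V] using hv
      refine ⟨?_, by simpa [Nb] using h2 b ha⟩
      intro x hx
      simp only [Nb, Sum.elim_inr, Finset.mem_map] at hx
      obtain ⟨b, hb, rfl⟩ := hx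
      simpa [V] using (Finset.mem_filter.1 hb).1) (1 / 10000) (by norm_num) (by norm_num) (by omega)
  rw [hVc] at hS1 hS2
  have hScard : (S.card : ℝ) ≤ 1 + 2 * N / 10000 := by
    have e1 : (1 + 1 / 10000 : ℝ) ^ N ≤ Real.exp (N * (1 / 10000)) := by
      rw [Real.exp_nat_mul]
      refine pow_le_pow_left₀ (by norm_num) ?_ _
      rw [add_comm]; exact Real.add_one_le_exp _
    have e2 : (2 : ℝ) ^ S.card ≤ 2 * Real.exp (N * (1 / 10000)) := hS1.trans (by linarith)
    have e3 := Real.log_le_log (by positivity) e2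
    rw [Real.log_pow, Real.log_mul (by norm_num) (Real.exp_ne_zero _), Real.log_exp] at e3
    have := Real.log_two_gt_d9
    have : (0 : ℝ) ≤ N := by positivity
    by_contra hcon
    push Not at hcon
    nlinarith
  let S1 := L1.filter fun t => Sum.inl t ∈ S
  let S2 := L2.filter fun t => Sum.inr t ∈ S
  have hS12 : S1.card + S2.card ≤ S.card := by
    rw [← Finset.card_disjSum]
    apply Finset.card_le_card
    rintro (a | b) h
    · simp [S1] at h; exact h.2
    · simp [S2] at h; exact h.2
  let e := ⌊3 / 100 * s⌋₊ + 1
  have he1 : 3 / 100 * s < e := by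
    have := Nat.lt_floor_add_one (3 / 100 * s)
    simpa [e] using this
  have he2 : (e : ℝ) ≤ 3 / 100 * s + 1 := by
    have := Nat.floor_le (a := 3 / 100 * s) (by positivity)
    simp only [e]; push_cast; linarith
  obtain ⟨Q, hQ, hQd, hQ1, hQ2⟩ := vanish S1 S2 e (by
    have e1 : (3 * (S1.card + S2.card : ℕ) : ℝ) ≤ 3 * S.card := by
      have : ((S1.card + S2.card : ℕ) : ℝ) ≤ S.card := by exact_mod_cast hS12
      linarith
    have e2 : (3 * (S1.card + S2.card : ℕ) : ℝ) < (e : ℝ) ^ 2 := by nlinarith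
    exact_mod_cast e2)
  have hQdR : (Q.totalDegree : ℝ) ≤ 3 * e := by exact_mod_cast hQd
  refine ⟨Q, hQ, by linarith, ?_⟩
  let B := (L1.filter fun t => sub1 t Q ≠ 0).disjSum (L2.filter fun t => sub2 t Q ≠ 0)
  have hB : (L1.filter fun t => sub1 t Q ≠ 0).card + (L2.filter fun t => sub2 t Q ≠ 0).card = B.card := by
    simp [B]
  rw [hB]
  have hBV : B ⊆ V := Finset.disjSum_mono (Finset.filter_subset _ _) (Finset.filter_subset _ _)
  have hbad : ∀ v ∈ B, (1 / 2 : ℝ) ^ (3 * e) ≤ (1 / 2 : ℝ) ^ (S.filter (· ∈ Nb v)).card := by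
    intro v hv
    refine pow_le_pow_of_le_one (by norm_num) (by norm_num) ?_
    refine le_trans ?_ hQd
    rcases v with a | b
    · have ha := (Finset.inl_mem_disjSum.1 hv)
      rw [Finset.mem_filter] at ha
      refine le_trans ?_ (roots_meet1 a Q ha.2 S2 (hi2.mono (Finset.coe_subset.2 (Finset.filter_subset _ _))) hQ2)
      rw [← Finset.card_map Function.Embedding.inr (s := S2.filter _)]
      apply Finset.card_le_card
      intro x hx
      simp only [Nb, Sum.elim_inl, Finset.mem_map, Finset.mem_filter] at hx ⊢
      obtain ⟨hx, b, hb, rfl⟩ := hx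
      exact ⟨b, ⟨by simp [S2]; exact ⟨hb.1, hx⟩, hb.2⟩, rfl⟩
    · have ha := (Finset.inr_mem_disjSum.1 hv)
      rw [Finset.mem_filter] at ha
      refine le_trans ?_ (roots_meet2 b Q ha.2 S1 (hi1.mono (Finset.coe_subset.2 (Finset.filter_subset _ _))) hQ1)
      rw [← Finset.card_map Function.Embedding.inl (s := S1.filter _)]
      apply Finset.card_le_card
      intro x hx
      simp only [Nb, Sum.elim_inr, Finset.mem_map, Finset.mem_filter] at hx ⊢
      obtain ⟨hx, b, hb, rfl⟩ := hx
      exact ⟨b, ⟨by simp [S1]; exact ⟨hb.1, hx⟩, hb.2⟩, rfl⟩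
  have hsum : B.card * (1 / 2 : ℝ) ^ (3 * e) ≤ 2 * N * (1 - 1 / 10000 / 2) ^ d := by
    calc B.card * (1 / 2 : ℝ) ^ (3 * e) = ∑ v ∈ B, (1 / 2 : ℝ) ^ (3 * e) := by simp
      _ ≤ ∑ v ∈ B, (1 / 2 : ℝ) ^ (S.filter (· ∈ Nb v)).card := Finset.sum_le_sum hbad
      _ ≤ ∑ v ∈ V, (1 / 2 : ℝ) ^ (S.filter (· ∈ Nb v)).card :=
        Finset.sum_le_sum_of_subset_of_nonneg hBV (fun _ _ _ => by positivity)
      _ ≤ _ := hS2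
  exact bad_numeric s hs4 B.card N d e hd (by linarith) hsum

/-- The bound `N ^ (3 / 2)` gains at least `√N` when one line is removed. -/
theorem removal_aux (N : ℕ) (hN : 0 < N) :
    ((N - 1 : ℕ) : ℝ) * √((N - 1 : ℕ) : ℝ) + √(N : ℝ) ≤ N * √(N : ℝ) := by
  have h : ((N - 1 : ℕ) : ℝ) + 1 = N := by
    have : N - 1 + 1 = N := by omega
    exact_mod_cast this
  have h2 : √((N - 1 : ℕ) : ℝ) ≤ √(N : ℝ) := Real.sqrt_le_sqrt (by linarith)
  have h3 : (0:ℝ) ≤ ((N - 1 : ℕ) : ℝ) := by positivity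
  rw [← h] at *
  nlinarith

theorem cnt_erase_left {α β : Type*} [DecidableEq α] (r : α → β → Prop) (A : Finset α) (B : Finset β) (a : α)
    (ha : a ∈ A) : cnt r A B = (B.filter (r a)).card + cnt r (A.erase a) B := by
  unfold cnt
  exact (Finset.add_sum_erase A _ ha).symm

/-- A point-plane incidence theorem of Rudnev's type, stated for two families of lines in three-space: `N ≤ p²`
lines, at most `k` of one family collinear as points of parameter space, have `O(N ^ (3 / 2) + k N)` incidences.
Lines with few incidences are removed one at a time. When none is left, `reduce` puts most lines on a surface
of degree below `p`, where `multi` applies, and what remains is covered by induction. -/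
theorem rudnev (p : ℕ) (hchar : ∀ n : ℕ, 0 < n → n < p → (n : F) ≠ 0) (k : ℕ) (hk : 1 ≤ k) (N : ℕ) :
    ∀ (L1 L2 : Finset (F × F × F)) (_ : L1.card + L2.card = N) (_ : N ≤ p ^ 2)
    (_ : Set.InjOn Prod.fst (L1 : Set (F × F × F)))
    (_ : Set.InjOn Prod.fst (L2 : Set (F × F × F)))
    (_ : CollBound k L1) (_ : CollBound k L2),
    (cnt meets L1 L2 : ℝ) ≤ 10000 * (N * √(N : ℝ)) + 2 * k * N := by
  induction N using Nat.strong_induction_on with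
  | _ N ih =>
  intro L1 L2 hN hNp hi1 hi2 hc1 hc2
  have inj : ∀ {S T : Finset (F × F × F)}, S ⊆ T → Set.InjOn Prod.fst (T : Set (F × F × F)) →
      Set.InjOn Prod.fst (S : Set (F × F × F)) := fun h h' => h'.mono (Finset.coe_subset.2 h)
  rcases Nat.eq_zero_or_pos N with h0 | hN0
  · have : L1 = ∅ := by rw [← Finset.card_eq_zero]; omega
    subst this
    simp [cnt, h0]
  have hrem := removal_aux N hN0
  have hN1 : ((N - 1 : ℕ) : ℝ) ≤ N := by exact_mod_cast Nat.sub_le _ _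
  have hkR : (0 : ℝ) ≤ k := by positivity
  by_cases hA : ∃ a ∈ L1, ((L2.filter (meets a)).card : ℝ) ≤ 10000 * √(N : ℝ)
  · obtain ⟨a, ha, had⟩ := hA
    have hI := ih (N - 1) (by omega) (L1.erase a) L2 (by rw [Finset.card_erase_of_mem ha]; have := Finset.card_pos.2 ⟨a, ha⟩; omega) (by omega)
      (inj (Finset.erase_subset _ _) hi1) hi2 (hc1.mono (Finset.erase_subset _ _)) hc2
    rw [cnt_erase_left meets L1 L2 a ha]
    push_cast
    nlinarith
  by_cases hB : ∃ a ∈ L2, ((L1.filter (meets a)).card : ℝ) ≤ 10000 * √(N : ℝ)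
  · obtain ⟨a, ha, had⟩ := hB
    have hI := ih (N - 1) (by omega) L1 (L2.erase a) (by rw [Finset.card_erase_of_mem ha]; have := Finset.card_pos.2 ⟨a, ha⟩; omega) (by omega)
      hi1 (inj (Finset.erase_subset _ _) hi2) hc1 (hc2.mono (Finset.erase_subset _ _))
    rw [cnt_meets_comm] at hI ⊢
    rw [cnt_erase_left meets L2 L1 a ha]
    push_cast
    nlinarith
  push Not at hA hB
  set s := √(N : ℝ) with hs
  have hs0 : 0 < s := Real.sqrt_pos.2 (by exact_mod_cast hN0)
  have hss : s * s = N := Real.mul_self_sqrt (by positivity)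
  obtain ⟨Q, hQ, hQd, hQb⟩ := reduce L1 L2 hi1 hi2 N hN hN0 ⌈10000 * s⌉₊ (Nat.le_ceil _)
    (fun a ha => Nat.ceil_le.2 (hA a ha).le) (fun a ha => Nat.ceil_le.2 (hB a ha).le)
  have hsp : s ≤ p := by
    apply Real.sqrt_le_iff.2
    exact ⟨by positivity, by exact_mod_cast hNp⟩
  have hDp : ∀ n : ℕ, 0 < n → n ≤ Q.totalDegree → (n : F) ≠ 0 := by
    intro n hn hn'
    refine hchar n hn ?_
    have : (n : ℝ) ≤ Q.totalDegree := by exact_mod_cast hn'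
    have : (n : ℝ) < p := by linarith
    exact_mod_cast this
  -- `G1`, `G2` are the lines on the surface `Q = 0` and `B1`, `B2` the others.
  obtain ⟨G1, B1, hG1, hdis1, hG1', hB1'⟩ := exists_split L1 (fun t => sub1 t Q = 0)
  obtain ⟨G2, B2, hG2, hdis2, hG2', hB2'⟩ := exists_split L2 (fun t => sub2 t Q = 0)
  have sG1 : G1 ⊆ L1 := by rw [hG1]; exact Finset.subset_union_left
  have sG2 : G2 ⊆ L2 := by rw [hG2]; exact Finset.subset_union_left
  have sB1 : B1 ⊆ L1 := by rw [hG1]; exact Finset.subset_union_right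
  have sB2 : B2 ⊆ L2 := by rw [hG2]; exact Finset.subset_union_right
  have hBc : ((B1.card + B2.card : ℕ) : ℝ) ≤ N / 4 := by
    refine le_trans ?_ hQb
    have e1 : B1.card ≤ (L1.filter fun t => sub1 t Q ≠ 0).card :=
      Finset.card_le_card fun t ht => Finset.mem_filter.2 ⟨sB1 ht, hB1' t ht⟩
    have e2 : B2.card ≤ (L2.filter fun t => sub2 t Q ≠ 0).card :=
      Finset.card_le_card fun t ht => Finset.mem_filter.2 ⟨sB2 ht, hB2' t ht⟩
    exact_mod_cast add_le_add e1 e2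
  obtain ⟨X1, hX1, X2, hX2, hXc, hXI⟩ := multi k hk _ Q hQ le_rfl hDp G1 G2 (inj sG1 hi1) (inj sG2 hi2)
    hG1' hG2' (hc1.mono sG1) (hc2.mono sG2)
  have hQd0 : (0:ℝ) ≤ Q.totalDegree := by positivity
  have hXcR : ((X1.card + X2.card : ℕ) : ℝ) ≤ N / 4 := by
    have : ((X1.card + X2.card : ℕ) : ℝ) ≤ 12 * (Q.totalDegree : ℝ) ^ 2 := by exact_mod_cast hXc
    nlinarith
  have hNR : (0:ℝ) < N := by exact_mod_cast hN0
  -- The two remaining configurations have at most `N / 4` lines each, so that by induction each costs at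
  -- most an eighth of the main term.
  have small : ∀ Y1 ⊆ L1, ∀ Y2 ⊆ L2, ((Y1.card + Y2.card : ℕ) : ℝ) ≤ N / 4 →
      (cnt meets Y1 Y2 : ℝ) ≤ 10000 * (N / 8 * s) + k * N / 2 := by
    intro Y1 hY1 Y2 hY2 hY
    have hlt : Y1.card + Y2.card < N := by
      have : ((Y1.card + Y2.card : ℕ) : ℝ) < N := by linarith
      exact_mod_cast this
    have := ih _ hlt Y1 Y2 rfl (by omega) (inj hY1 hi1) (inj hY2 hi2) (hc1.mono hY1) (hc2.mono hY2)
    have hsq : √((Y1.card + Y2.card : ℕ) : ℝ) ≤ s / 2 := by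
      apply Real.sqrt_le_iff.2
      exact ⟨by positivity, by nlinarith⟩
    have h3 : ((Y1.card + Y2.card : ℕ) : ℝ) * √((Y1.card + Y2.card : ℕ) : ℝ) ≤ N / 4 * (s / 2) :=
      mul_le_mul hY hsq (Real.sqrt_nonneg _) (by positivity)
    have h4 : 2 * (k:ℝ) * ((Y1.card + Y2.card : ℕ) : ℝ) ≤ 2 * k * (N / 4) :=
      mul_le_mul_of_nonneg_left hY (by positivity)
    linarith
  have hIX := small X1 (hX1.trans sG1) X2 (hX2.trans sG2) hXcR
  have hIB := small B1 sB1 B2 sB2 hBc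
  have hcr1 : cnt meets G1 B2 ≤ B2.card * Q.totalDegree := by
    rw [cnt_meets_comm]
    exact cnt_le_of_left _ _ _ _ fun c hc => roots_meet2 c Q (hB2' c hc) G1 (inj sG1 hi1) hG1'
  have hcr2 : cnt meets B1 G2 ≤ B1.card * Q.totalDegree :=
    cnt_le_of_left _ _ _ _ fun c hc => roots_meet1 c Q (hB1' c hc) G2 (inj sG2 hi2) hG2'
  have hcr : ((cnt meets G1 B2 + cnt meets B1 G2 : ℕ) : ℝ) ≤ N / 4 * (12 / 100 * s) := by
    have : ((cnt meets G1 B2 + cnt meets B1 G2 : ℕ) : ℝ) ≤ ((B1.card + B2.card : ℕ) : ℝ) * Q.totalDegree := by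
      have : cnt meets G1 B2 + cnt meets B1 G2 ≤ (B1.card + B2.card) * Q.totalDegree := by nlinarith
      exact_mod_cast this
    exact this.trans (mul_le_mul hBc hQd (by positivity) (by positivity))
  have hGI : (cnt meets G1 G2 : ℝ) ≤ (2 * (12 / 100 * s) + k) * N + cnt meets X1 X2 := by
    have e1 : (cnt meets G1 G2 : ℝ) ≤ (2 * Q.totalDegree + k) * ((G1.card + G2.card : ℕ) : ℝ) + cnt meets X1 X2 := by
      exact_mod_cast hXI
    have e2 : ((G1.card + G2.card : ℕ) : ℝ) ≤ N := by
      have := Finset.card_le_card sG1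
      have := Finset.card_le_card sG2
      exact_mod_cast (by omega : G1.card + G2.card ≤ N)
    have e3 : (2 * (Q.totalDegree:ℝ) + k) * ((G1.card + G2.card : ℕ) : ℝ) ≤ (2 * (12 / 100 * s) + k) * N :=
      mul_le_mul (by linarith) e2 (by positivity) (by positivity)
    linarith
  have htot : cnt meets L1 L2 = cnt meets G1 G2 + (cnt meets G1 B2 + cnt meets B1 G2) + cnt meets B1 B2 := by
    rw [hG1, hG2, cnt_union_left _ _ hdis1, cnt_union_right _ _ hdis2, cnt_union_right _ _ hdis2]
    ring
  rw [htot]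
  push_cast at hcr ⊢
  have : 0 < N * s := by positivity
  nlinarith

end IB

/-! ### An energy bound -/

namespace IB

variable {F : Type*} [Field F]

theorem cnt_image {α β : Type*} [DecidableEq β] (r : α → α → Prop) (r' : β → β → Prop) (ψ : α → β) (A : Finset α)
    (hi : Set.InjOn ψ (A : Set α)) (h : ∀ a ∈ A, ∀ b ∈ A, r a b ↔ r' (ψ a) (ψ b)) :
    cnt r A A = cnt r' (A.image ψ) (A.image ψ) := by
  unfold cnt
  rw [Finset.sum_image hi]
  refine Finset.sum_congr rfl fun a ha => ?_
  rw [← Finset.card_image_of_injOn (s := A.filter (r a)) (f := ψ) (hi.mono (Finset.coe_subset.2 (Finset.filter_subset _ _)))]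
  congr 1
  ext x
  simp only [Finset.mem_image, Finset.mem_filter]
  constructor
  · rintro ⟨b, ⟨hb, hr⟩, rfl⟩
    exact ⟨⟨b, hb, rfl⟩, (h a ha b hb).1 hr⟩
  · rintro ⟨⟨b, hb, rfl⟩, hr⟩
    exact ⟨b, ⟨hb, (h a ha b hb).2 hr⟩, rfl⟩

/-- A change of parameters preserving the relation `meets`. For generic `η`, `θ` it makes the first
coordinate injective on a given finite set, as `rudnev` requires. -/
def psi (η θ : F) (t : F × F × F) : F × F × F :=
  ((t.1 + θ * (t.2.2 + η)) / (1 + θ * t.2.1), t.2.1 / (1 + θ * t.2.1), (t.2.2 + η) / (1 + θ * t.2.1))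

theorem psi_meets (η θ : F) (s t : F × F × F) (hs : 1 + θ * s.2.1 ≠ 0) (ht : 1 + θ * t.2.1 ≠ 0) :
    meets s t ↔ meets (psi η θ s) (psi η θ t) := by
  unfold meets psi
  simp only
  rw [div_mul_div_comm, div_mul_div_comm, div_add_div _ _ (mul_ne_zero hs ht) hs,
    div_add_div _ _ (mul_ne_zero ht hs) ht, div_eq_div_iff (by simp [hs, ht]) (by simp [hs, ht])]
  constructor
  · intro h
    linear_combination (1 + θ * s.2.1) ^ 2 * (1 + θ * t.2.1) ^ 2 * h
  · intro h
    have h0 : (1 + θ * s.2.1) ^ 2 * (1 + θ * t.2.1) ^ 2 ≠ 0 := by simp [hs, ht]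
    apply mul_left_cancel₀ h0
    linear_combination h

theorem quad_coeffs {a b c : F}
    (h : Polynomial.C a + Polynomial.C b * Polynomial.X + Polynomial.C c * Polynomial.X ^ 2 = 0) :
    a = 0 ∧ b = 0 ∧ c = 0 := by
  have c0 := congrArg (fun q => Polynomial.coeff q 0) h
  have c1 := congrArg (fun q => Polynomial.coeff q 1) h
  have c2 := congrArg (fun q => Polynomial.coeff q 2) h
  simp [Polynomial.coeff_X, Polynomial.coeff_C, Polynomial.coeff_X_pow] at c0 c1 c2
  exact ⟨c0, c1, c2⟩

/-- Once `η` avoids finitely many values, each pair of distinct elements excludes at most two values of `θ`. -/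
theorem exists_generic [Infinite F] (Q : Finset (F × F × F)) :
    ∃ η θ : F, (∀ t ∈ Q, 1 + θ * t.2.1 ≠ 0) ∧ Set.InjOn (fun t => (psi η θ t).1) (Q : Set (F × F × F)) := by
  obtain ⟨η, hη⟩ := Infinite.exists_notMem_finset (Q.image fun t => t.1 * t.2.1 - t.2.2)
  have hη' : ∀ t ∈ Q, t.2.2 + η - t.1 * t.2.1 ≠ 0 := by
    intro t ht h
    apply hη
    rw [Finset.mem_image]
    exact ⟨t, ht, by linear_combination -h⟩
  let pol : (F × F × F) → (F × F × F) → Polynomial F := fun s t =>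
    Polynomial.C (s.1 - t.1) + Polynomial.C ((s.2.2 + η) - (t.2.2 + η) + s.1 * t.2.1 - t.1 * s.2.1) * Polynomial.X
      + Polynomial.C ((s.2.2 + η) * t.2.1 - (t.2.2 + η) * s.2.1) * Polynomial.X ^ 2
  have hpol : ∀ s ∈ Q, ∀ t ∈ Q, s ≠ t → pol s t ≠ 0 := by
    intro s hs t ht hne h0
    apply hne
    obtain ⟨c0, c1, c2⟩ := quad_coeffs h0
    have ha : s.1 = t.1 := by linear_combination c0
    have hd := hη' s hs
    have hcc : (s.2.2 + η - s.1 * s.2.1) * (t.2.1 - s.2.1) = 0 := by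
      rw [ha] at c1 ⊢
      linear_combination c2 + (-s.2.1) * c1
    have hc : t.2.1 = s.2.1 := by
      rcases mul_eq_zero.1 hcc with h | h
      · exact absurd h hd
      · linear_combination h
    have hdd : s.2.2 = t.2.2 := by
      rw [ha, hc] at c1
      linear_combination c1
    exact Prod.ext ha (Prod.ext hc.symm hdd)
  obtain ⟨θ, hθ⟩ := Infinite.exists_notMem_finset
    ((Q.image fun t => - (t.2.1)⁻¹) ∪ (Q ×ˢ Q).biUnion fun st => (pol st.1 st.2).roots.toFinset)
  rw [Finset.mem_union, not_or] at hθ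
  have h1 : ∀ t ∈ Q, 1 + θ * t.2.1 ≠ 0 := by
    intro t ht h
    apply hθ.1
    rw [Finset.mem_image]
    refine ⟨t, ht, ?_⟩
    have : t.2.1 ≠ 0 := by intro h'; rw [h'] at h; simp at h
    field_simp
    linear_combination -h
  refine ⟨η, θ, h1, ?_⟩
  intro s hs t ht hst
  by_contra hne
  apply hθ.2
  rw [Finset.mem_biUnion]
  refine ⟨(s, t), Finset.mem_product.2 ⟨hs, ht⟩, ?_⟩
  rw [Multiset.mem_toFinset, Polynomial.mem_roots (hpol s hs t ht hne), Polynomial.IsRoot.def]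
  simp only [psi] at hst
  rw [div_eq_div_iff (h1 s hs) (h1 t ht)] at hst
  simp [pol]
  linear_combination hst

/-- Points of `A × L` that become collinear under `psi` were collinear before: either their first
coordinates are distinct, whence at most `|A|` points, or the first coordinate is constant and the `L`-parts
lie on a line of the plane. -/
theorem psi_collBound (η θ : F) (A : Finset F) (L : Finset (F × F)) (k : ℕ) (hA : A.card ≤ k)
    (hL : ∀ α β γ : F, (α ≠ 0 ∨ β ≠ 0) → (L.filter fun l => α * l.1 + β * l.2 = γ).card ≤ k)
    (h1 : ∀ t ∈ A ×ˢ L, 1 + θ * t.2.1 ≠ 0)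
    (hi : Set.InjOn (fun t => (psi η θ t).1) ((A ×ˢ L : Finset (F × F × F)) : Set (F × F × F))) :
    CollBound k ((A ×ˢ L).image (psi η θ)) := by
  intro f1 f0 g1 g0
  set G := (A ×ˢ L).filter fun t => (psi η θ t).2.1 = f1 * (psi η θ t).1 + f0 ∧
    (psi η θ t).2.2 = g1 * (psi η θ t).1 + g0 with hG
  have hle : (((A ×ˢ L).image (psi η θ)).filter
      fun t => t.2.1 = f1 * t.1 + f0 ∧ t.2.2 = g1 * t.1 + g0).card ≤ G.card := by
    rw [Finset.filter_image]
    exact Finset.card_image_le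
  refine hle.trans ?_
  have eqs : ∀ t ∈ G, t.2.1 = f1 * (t.1 + θ * (t.2.2 + η)) + f0 * (1 + θ * t.2.1) ∧
      t.2.2 + η = g1 * (t.1 + θ * (t.2.2 + η)) + g0 * (1 + θ * t.2.1) := by
    intro t ht
    rw [hG, Finset.mem_filter] at ht
    have hn := h1 t ht.1
    obtain ⟨-, e1, e2⟩ := ht
    simp only [psi] at e1 e2
    generalize 1 + θ * t.2.1 = z at *
    field_simp at e1 e2
    exact ⟨by linear_combination e1, by linear_combination e2⟩
  have hGA : ∀ t ∈ G, t ∈ A ×ˢ L := fun t ht => (Finset.mem_filter.1 ht).1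
  by_cases hinj : Set.InjOn Prod.fst (G : Set (F × F × F))
  · rw [← Finset.card_image_of_injOn hinj]
    refine (Finset.card_le_card ?_).trans hA
    intro x hx
    obtain ⟨t, ht, rfl⟩ := Finset.mem_image.1 hx
    exact (Finset.mem_product.1 (hGA t ht)).1
  · unfold Set.InjOn at hinj
    push Not at hinj
    obtain ⟨s, hs, t, ht, ha, hst⟩ := hinj
    rw [Finset.mem_coe] at hs ht
    -- On `G` the original first coordinate is a fractional linear function of the new one. It takes the same
    -- value at the distinct arguments belonging to `s` and `t`, so it is constant.
    have frac : ∀ q ∈ G, (1 - θ * g1) * (psi η θ q).1 - θ * g0 = q.1 * (1 - θ * f0 - θ * f1 * (psi η θ q).1) := by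
      intro q hq
      have hn := h1 q (hGA q hq)
      obtain ⟨e1, e2⟩ := eqs q hq
      simp only [psi]
      obtain ⟨z, hz⟩ : ∃ z, z = 1 + θ * q.2.1 := ⟨_, rfl⟩
      rw [← hz] at hn e1 e2 ⊢
      field_simp
      linear_combination -q.1 * hz - θ * q.1 * e1 + θ * e2
    have hu : (psi η θ s).1 - (psi η θ t).1 ≠ 0 := by
      intro h
      exact hst (hi (hGA s hs) (hGA t ht) (sub_eq_zero.1 h))
    have hcs : (1 - θ * g1) + s.1 * θ * f1 = 0 := by
      have f1' := frac s hs
      have f2' := frac t ht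
      rw [← ha] at f2'
      apply mul_left_cancel₀ hu
      linear_combination f1' - f2'
    have hc0 : - θ * g0 = s.1 * (1 - θ * f0) := by
      linear_combination frac s hs - (psi η θ s).1 * hcs
    have hnz : ∀ q ∈ G, 1 - θ * f0 - θ * f1 * (psi η θ q).1 ≠ 0 := by
      intro q hq h
      have hn := h1 q (hGA q hq)
      obtain ⟨e1, e2⟩ := eqs q hq
      simp only [psi] at h
      obtain ⟨z, hz⟩ : ∃ z, z = 1 + θ * q.2.1 := ⟨_, rfl⟩
      rw [← hz] at hn e1 e2 h
      field_simp at h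
      have : (1 : F) = 0 := by linear_combination h - hz - θ * e1
      exact one_ne_zero this
    have hall : ∀ q ∈ G, q.1 = s.1 := by
      intro q hq
      apply mul_right_cancel₀ (hnz q hq)
      linear_combination (psi η θ q).1 * hcs + hc0 - frac q hq
    have hinj2 : Set.InjOn Prod.snd (G : Set (F × F × F)) := by
      intro x hx y hy hxy
      exact Prod.ext ((hall x hx).trans (hall y hy).symm) hxy
    rw [← Finset.card_image_of_injOn hinj2]
    refine (Finset.card_le_card ?_).trans (hL (1 - θ * f0) (- (θ * f1)) (f1 * s.1 + f1 * θ * η + f0) ?_)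
    · intro l hl
      obtain ⟨q, hq, rfl⟩ := Finset.mem_image.1 hl
      rw [Finset.mem_filter]
      refine ⟨(Finset.mem_product.1 (hGA q hq)).2, ?_⟩
      rw [← hall q hq]
      linear_combination (eqs q hq).1
    · by_contra hcon
      push Not at hcon
      apply hnz s hs
      linear_combination hcon.1 + (psi η θ s).1 * hcon.2

/-- The number of solutions of `c a₂ + d = c₂ a + d₂` with `a, a₂ ∈ A` and `(c, d), (c₂, d₂) ∈ L`, when no
line of the plane contains more than `k` points of `L`. A renaming of variables turns this into the energy of
the values `c a + d`, see `grid`. -/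
theorem energy [Infinite F] (p : ℕ) (hchar : ∀ n : ℕ, 0 < n → n < p → (n : F) ≠ 0) (k : ℕ) (hk : 1 ≤ k)
    (A : Finset F) (L : Finset (F × F)) (hA : A.card ≤ k)
    (hL : ∀ α β γ : F, (α ≠ 0 ∨ β ≠ 0) → (L.filter fun l => α * l.1 + β * l.2 = γ).card ≤ k)
    (N : ℕ) (hN : N = 2 * (A.card * L.card)) (hNp : N ≤ p ^ 2) :
    (cnt meets (A ×ˢ L) (A ×ˢ L) : ℝ) ≤ 10000 * (N * √(N : ℝ)) + 2 * k * N := by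
  obtain ⟨η, θ, h1, hi⟩ := exists_generic (A ×ˢ L)
  have hi' : Set.InjOn (psi η θ) ((A ×ˢ L : Finset (F × F × F)) : Set (F × F × F)) := by
    intro s hs t ht h
    exact hi hs ht (congrArg Prod.fst h)
  rw [cnt_image meets meets (psi η θ) (A ×ˢ L) hi' (fun s hs t ht => psi_meets η θ s t (h1 s hs) (h1 t ht))]
  have hc := psi_collBound η θ A L k hA hL h1 hi
  have hi2 : Set.InjOn Prod.fst (((A ×ˢ L).image (psi η θ) : Finset (F × F × F)) : Set (F × F × F)) := by
    intro x hx y hy hxy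
    rw [Finset.mem_coe, Finset.mem_image] at hx hy
    obtain ⟨s, hs, rfl⟩ := hx
    obtain ⟨t, ht, rfl⟩ := hy
    rw [hi hs ht hxy]
  refine rudnev p hchar k hk N _ _ ?_ hNp hi2 hi2 hc hc
  rw [Finset.card_image_of_injOn hi', Finset.card_product, hN]
  ring

end IB

/-! ### Double counting in bipartite graphs -/

namespace IB

section graph
variable {α β : Type*} (r : α → β → Prop)

/-- The Kővári–Sós–Turán inequality: the sum of squared degrees of the `a ∈ A` counts pairs in `B` with a
common neighbour. -/
theorem kst (A : Finset α) (B : Finset β) (s : ℕ)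
    (h : ∀ b ∈ B, ∀ b' ∈ B, b ≠ b' → (A.filter fun a => r a b ∧ r a b').card ≤ s) :
    cnt r A B ^ 2 ≤ A.card * (cnt r A B + s * B.card ^ 2) := by
  have h1 : cnt r A B ^ 2 ≤ A.card * ∑ a ∈ A, (B.filter (r a)).card ^ 2 := by
    unfold cnt
    exact sq_sum_le_card_mul_sum_sq
  refine h1.trans (Nat.mul_le_mul_left _ ?_)
  have h2 : ∑ a ∈ A, (B.filter (r a)).card ^ 2 = ∑ b ∈ B, ∑ b' ∈ B, (A.filter fun a => r a b ∧ r a b').card := by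
    simp only [Finset.card_filter, sq, Finset.sum_mul_sum]
    rw [Finset.sum_comm]
    refine Finset.sum_congr rfl fun b _ => ?_
    rw [Finset.sum_comm]
    refine Finset.sum_congr rfl fun b' _ => Finset.sum_congr rfl fun a _ => ?_
    by_cases h1 : r a b <;> by_cases h2 : r a b' <;> simp [h1, h2]
  rw [h2]
  have h3 : ∀ b ∈ B, ∑ b' ∈ B, (A.filter fun a => r a b ∧ r a b').card ≤
      (A.filter fun a => r a b).card + s * B.card := by
    intro b hb
    rw [← Finset.add_sum_erase B _ hb]
    refine add_le_add (by simp) ?_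
    refine (Finset.sum_le_card_nsmul _ _ s fun b' hb' => h b hb b' (Finset.mem_of_mem_erase hb')
      (Finset.ne_of_mem_erase hb').symm).trans ?_
    rw [smul_eq_mul, mul_comm]
    exact Nat.mul_le_mul_left _ (Finset.card_le_card (Finset.erase_subset _ _))
  refine (Finset.sum_le_sum h3).trans ?_
  rw [Finset.sum_add_distrib, cnt_comm r A B]
  simp only [Finset.sum_const, smul_eq_mul, cnt]
  rw [sq]
  apply le_of_eq
  ring

theorem mul_le_cnt (A : Finset α) (B : Finset β) (R : ℕ)
    (h : ∀ b ∈ B, R ≤ (A.filter fun a => r a b).card) : B.card * R ≤ cnt r A B := by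
  rw [cnt_comm]
  unfold cnt
  have := Finset.card_nsmul_le_sum B (fun b => (A.filter fun a => r a b).card) R h
  simpa using this

/-- If every element of `B` has more than about `√(s |A|)` neighbours, the linear term in `kst` dominates. -/
theorem rich (A : Finset α) (B : Finset β) (s R : ℕ)
    (h : ∀ b ∈ B, ∀ b' ∈ B, b ≠ b' → (A.filter fun a => r a b ∧ r a b').card ≤ s)
    (hR : ∀ b ∈ B, R ≤ (A.filter fun a => r a b).card) (hR2 : 2 * s * A.card ≤ R ^ 2) :
    cnt r A B ≤ 2 * A.card := by
  have h1 := kst r A B s h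
  have h2 := mul_le_cnt r A B R hR
  have h3 : 2 * (A.card * (s * B.card ^ 2)) ≤ cnt r A B ^ 2 := by
    calc 2 * (A.card * (s * B.card ^ 2)) = (2 * s * A.card) * B.card ^ 2 := by ring
      _ ≤ R ^ 2 * B.card ^ 2 := Nat.mul_le_mul_right _ hR2
      _ = (B.card * R) ^ 2 := by ring
      _ ≤ _ := Nat.pow_le_pow_left h2 2
  by_contra hcon
  push Not at hcon
  nlinarith

/-- In the language of points `y` and lines `x`: the points `y` joined to `y1` and to `y2` by two different
lines of `X`. -/
def pencil (X : Finset α) (Y : Finset β) (y1 y2 : β) : Finset β :=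
  Y.filter fun y => y ≠ y1 ∧ y ≠ y2 ∧ ∃ x1 ∈ X, ∃ x2 ∈ X, x1 ≠ x2 ∧ r x1 y ∧ r x1 y1 ∧ r x2 y ∧ r x2 y2

/-- For fixed `y`, the `w` pairs (line through `y`, second point on it) determine `w ^ 2` pairs `(y1, y2)`. At most
`ρ w` of them use the same line twice; the others put `y` in the pencil of `(y1, y2)`. -/
theorem pencil_fixed (X : Finset α) (Y : Finset β)
    (hK : ∀ y ∈ Y, ∀ y' ∈ Y, y ≠ y' → ∀ x ∈ X, ∀ x' ∈ X, r x y → r x y' → r x' y → r x' y' → x = x')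
    (ρ : ℕ) (hρ : ∀ x ∈ X, (Y.filter (r x)).card ≤ ρ) (y : β) (hy : y ∈ Y) (w : ℕ)
    (hw : w = ∑ x ∈ X.filter (r · y), ((Y.filter (r x)).card - 1)) :
    w ^ 2 ≤ ((Y ×ˢ Y).filter fun q => y ∈ pencil r X Y q.1 q.2).card + ρ * w := by
  let P : Finset (Σ _ : α, β) := (X.filter (r · y)).sigma fun x => (Y.filter (r x)).erase y
  have hP : P.card = w := by
    rw [hw, Finset.card_sigma]
    refine Finset.sum_congr rfl fun x hx => ?_
    rw [Finset.card_erase_of_mem]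
    exact Finset.mem_filter.2 ⟨hy, (Finset.mem_filter.1 hx).2⟩
  have hPm : ∀ q ∈ P, q.1 ∈ X ∧ r q.1 y ∧ q.2 ∈ Y ∧ q.2 ≠ y ∧ r q.1 q.2 := by
    intro q hq
    simp only [P, Finset.mem_sigma, Finset.mem_filter, Finset.mem_erase] at hq
    exact ⟨hq.1.1, hq.1.2, hq.2.2.1, hq.2.1, hq.2.2.2⟩
  have hinj : ∀ q ∈ P, ∀ q' ∈ P, q.2 = q'.2 → q = q' := by
    intro q hq q' hq' h
    obtain ⟨a1, a2, a3, a4, a5⟩ := hPm q hq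
    obtain ⟨b1, b2, b3, b4, b5⟩ := hPm q' hq'
    have : q.1 = q'.1 := hK q.2 a3 y hy a4 q.1 a1 q'.1 b1 a5 a2 (h ▸ b5) b2
    exact Sigma.ext this (heq_of_eq h)
  have hsplit : ((P ×ˢ P).filter fun z => z.1.1 ≠ z.2.1).card + ((P ×ˢ P).filter fun z => ¬ z.1.1 ≠ z.2.1).card = w ^ 2 := by
    rw [Finset.card_filter_add_card_filter_not, Finset.card_product, hP, sq]
  have hsame : ((P ×ˢ P).filter fun z => ¬ z.1.1 ≠ z.2.1).card ≤ ρ * w := by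
    rw [← hP, mul_comm]
    refine Finset.card_le_mul_card_image_of_maps_to (f := Prod.fst) (t := P) ?_ ρ ?_ |>.trans (by rw [mul_comm])
    · intro z hz
      exact (Finset.mem_product.1 (Finset.mem_filter.1 hz).1).1
    · intro q hq
      refine le_trans ?_ (hρ q.1 (hPm q hq).1)
      refine Finset.card_le_card_of_injOn (fun z => z.2.2) ?_ ?_
      · intro z hz
        simp only [Finset.coe_filter, Finset.mem_filter, Finset.mem_product, Set.mem_ofPred_eq, not_not] at hz ⊢
        obtain ⟨⟨⟨_, h2⟩, h3⟩, h4⟩ := hz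
        have := hPm _ h2
        refine ⟨this.2.2.1, ?_⟩
        rw [← h4, h3]; exact this.2.2.2.2
      · intro z hz z' hz' h
        simp only [Finset.coe_filter, Finset.mem_filter, Finset.mem_product, Set.mem_ofPred_eq, not_not] at hz hz'
        exact Prod.ext (hz.2.trans hz'.2.symm) (hinj _ hz.1.1.2 _ hz'.1.1.2 h)
  have hdiff : ((P ×ˢ P).filter fun z => z.1.1 ≠ z.2.1).card ≤
      ((Y ×ˢ Y).filter fun q => y ∈ pencil r X Y q.1 q.2).card := by
    refine Finset.card_le_card_of_injOn (fun z => (z.1.2, z.2.2)) ?_ ?_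
    · intro z hz
      simp only [Finset.coe_filter, Finset.mem_filter, Finset.mem_product, Set.mem_ofPred_eq] at hz ⊢
      obtain ⟨⟨h1, h2⟩, h3⟩ := hz
      obtain ⟨a1, a2, a3, a4, a5⟩ := hPm _ h1
      obtain ⟨b1, b2, b3, b4, b5⟩ := hPm _ h2
      refine ⟨⟨a3, b3⟩, ?_⟩
      unfold pencil
      rw [Finset.mem_filter]
      exact ⟨hy, a4.symm, b4.symm, _, a1, _, b1, h3, a2, a5, b2, b5⟩
    · intro z hz z' hz' h
      simp only [Finset.coe_filter, Finset.mem_product, Set.mem_ofPred_eq, Prod.mk.injEq] at hz hz' h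
      exact Prod.ext (hinj _ hz.1.1 _ hz'.1.1 h.1) (hinj _ hz.1.2 _ hz'.1.2 h.2)
  omega

/-- Here `I0` is the number of incidences and `W` the number of pairs of distinct points on a common line. -/
theorem pencil_numeric {n m k I0 W ρ M : ℕ} (hn0 : 0 < n) (hm0 : 0 < m)
    (h2 : 8192 * m ^ 2 ≤ n * k ^ 4) (hI0k : n * k ≤ 2 * I0) (hI0W : I0 ^ 2 ≤ 2 * m * W)
    (hρ2 : ρ ^ 2 ≤ 2 * n) (hmain : W ^ 2 ≤ n * (n ^ 2 * M + ρ * W)) :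
    n * k ^ 4 ≤ 128 * m ^ 2 * M := by
  -- `W` is at least `n ^ 2 k ^ 2 / (8 m)`.
  have hWlow : n ^ 2 * k ^ 2 ≤ 8 * m * W := by
    have : (n * k) ^ 2 ≤ (2 * I0) ^ 2 := Nat.pow_le_pow_left hI0k 2
    nlinarith
  -- The diagonal term `ρ W` is negligible.
  have hρW : 2 * (n * ρ) ≤ W := by
    have a1 : (16 * m * (n * ρ)) ^ 2 ≤ (8 * m * W) ^ 2 := by
      calc (16 * m * (n * ρ)) ^ 2 = 256 * m ^ 2 * n ^ 2 * ρ ^ 2 := by ring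
        _ ≤ 256 * m ^ 2 * n ^ 2 * (2 * n) := Nat.mul_le_mul_left _ hρ2
        _ ≤ n ^ 3 * (8192 * m ^ 2) := by nlinarith [Nat.zero_le (n ^ 3 * m ^ 2)]
        _ ≤ n ^ 3 * (n * k ^ 4) := Nat.mul_le_mul_left _ h2
        _ = (n ^ 2 * k ^ 2) ^ 2 := by ring
        _ ≤ _ := Nat.pow_le_pow_left hWlow 2
    have a2 := (Nat.pow_le_pow_iff_left (by norm_num)).1 a1
    have : 8 * m * (2 * (n * ρ)) ≤ 8 * m * W := by linarith
    exact Nat.le_of_mul_le_mul_left this (by omega)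
  have hW2 : W ^ 2 ≤ 2 * n ^ 3 * M := by nlinarith
  have : n ^ 3 * (n * k ^ 4) ≤ n ^ 3 * (128 * m ^ 2 * M) := by
    calc n ^ 3 * (n * k ^ 4) = (n ^ 2 * k ^ 2) ^ 2 := by ring
      _ ≤ (8 * m * W) ^ 2 := Nat.pow_le_pow_left hWlow 2
      _ = 64 * m ^ 2 * W ^ 2 := by ring
      _ ≤ 64 * m ^ 2 * (2 * n ^ 3 * M) := Nat.mul_le_mul_left _ hW2
      _ = _ := by ring
  exact Nat.le_of_mul_le_mul_left this (by positivity)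

/-- Two points `y1`, `y2` such that many points of `Y` lie on the grid formed by the lines of `X` through
`y1` and `y2`, obtained by averaging `pencil_fixed` over all `y`. -/
theorem pencil_exists (X : Finset α) (Y : Finset β) (m k : ℕ) (hm : X.card ≤ m) (hk : 4 ≤ k)
    (hK : ∀ y ∈ Y, ∀ y' ∈ Y, y ≠ y' → ∀ x ∈ X, ∀ x' ∈ X, r x y → r x y' → r x' y → r x' y' → x = x')
    (hY : ∀ y ∈ Y, k ≤ (X.filter (r · y)).card) (hn0 : 0 < Y.card)
    (h1 : 4 * m ≤ Y.card * k) (h2 : 8192 * m ^ 2 ≤ Y.card * k ^ 4) :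
    ∃ y1 ∈ Y, ∃ y2 ∈ Y, Y.card * k ^ 4 ≤ 128 * m ^ 2 * (pencil r X Y y1 y2).card := by
  set n := Y.card with hn
  -- The lines `H` with at least `√(2 n)` points carry few incidences.
  obtain ⟨H, X0, hX, hdis, hH, hX0⟩ := exists_split X (fun x => 2 * n ≤ (Y.filter (r x)).card ^ 2)
  have sX0 : X0 ⊆ X := by rw [hX]; exact Finset.subset_union_right
  have sH : H ⊆ X := by rw [hX]; exact Finset.subset_union_left
  have hHI : cnt r H Y ≤ 2 * n := by
    have hsq : ∀ x ∈ H, Nat.sqrt (2 * n - 1) + 1 ≤ (Y.filter (r x)).card := by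
      intro x hx
      have := hH x hx
      have h3 : Nat.sqrt (2 * n - 1) < (Y.filter (r x)).card := by
        rw [Nat.sqrt_lt']
        omega
      omega
    rw [cnt_comm]
    refine rich (fun b a => r a b) Y H 1 (Nat.sqrt (2 * n - 1) + 1) ?_ hsq ?_
    · intro x hx x' hx' hne
      rw [Finset.card_le_one]
      intro y hy y' hy'
      rw [Finset.mem_filter] at hy hy'
      by_contra hyy
      exact hne (hK y hy.1 y' hy'.1 hyy x (sH hx) x' (sH hx') hy.2.1 hy'.2.1 hy.2.2 hy'.2.2)
    · have := Nat.lt_succ_sqrt' (2 * n - 1)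
      rw [Nat.succ_eq_add_one] at this
      omega
  have hI : n * k ≤ cnt r X Y := mul_le_cnt r X Y k hY
  rw [hX, cnt_union_left r Y hdis] at hI
  set I0 := cnt r X0 Y with hI0
  have hI0k : n * k ≤ 2 * I0 := by nlinarith
  set ρ := Nat.sqrt (2 * n) with hρ
  have hρ2 : ρ ^ 2 ≤ 2 * n := Nat.sqrt_le' _
  have hρx : ∀ x ∈ X0, (Y.filter (r x)).card ≤ ρ := by
    intro x hx
    have := hX0 x hx
    rw [Nat.le_sqrt']
    omega
  let w : β → ℕ := fun y => ∑ x ∈ X0.filter (r · y), ((Y.filter (r x)).card - 1)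
  have hKX0 : ∀ y ∈ Y, ∀ y' ∈ Y, y ≠ y' → ∀ x ∈ X0, ∀ x' ∈ X0, r x y → r x y' → r x' y → r x' y' → x = x' :=
    fun y hy y' hy' hne x hx x' hx' => hK y hy y' hy' hne x (sX0 hx) x' (sX0 hx')
  set W := ∑ y ∈ Y, w y with hW
  have hWeq : W + I0 = ∑ x ∈ X0, (Y.filter (r x)).card ^ 2 := by
    have : W = ∑ x ∈ X0, (Y.filter (r x)).card * ((Y.filter (r x)).card - 1) := by
      simp only [hW, w, Finset.sum_filter]
      rw [Finset.sum_comm]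
      refine Finset.sum_congr rfl fun x _ => ?_
      rw [← Finset.sum_filter, Finset.sum_const, smul_eq_mul]
    rw [this, hI0, cnt, ← Finset.sum_add_distrib]
    refine Finset.sum_congr rfl fun x _ => ?_
    generalize (Y.filter (r x)).card = z
    rcases z with _ | z
    · simp
    · simp; ring
  have hCS1 : I0 ^ 2 ≤ m * (W + I0) := by
    rw [hWeq, hI0, cnt]
    refine (sq_sum_le_card_mul_sum_sq).trans (Nat.mul_le_mul_right _ ?_)
    exact (Finset.card_le_card sX0).trans hm
  have hI0m : 2 * m ≤ I0 := by omega
  have hI0W : I0 ^ 2 ≤ 2 * m * W := by nlinarith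
  have hCS2 : W ^ 2 ≤ n * ∑ y ∈ Y, w y ^ 2 := sq_sum_le_card_mul_sum_sq
  have hfix : ∑ y ∈ Y, w y ^ 2 ≤ ∑ y ∈ Y, ((Y ×ˢ Y).filter fun q => y ∈ pencil r X0 Y q.1 q.2).card + ρ * W := by
    rw [hW, Finset.mul_sum, ← Finset.sum_add_distrib]
    exact Finset.sum_le_sum fun y hy => pencil_fixed r X0 Y hKX0 ρ hρx y hy (w y) rfl
  have hdc : ∑ y ∈ Y, ((Y ×ˢ Y).filter fun q => y ∈ pencil r X0 Y q.1 q.2).card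
      = ∑ q ∈ Y ×ˢ Y, (pencil r X0 Y q.1 q.2).card := by
    simp only [Finset.card_filter]
    rw [Finset.sum_comm]
    refine Finset.sum_congr rfl fun q _ => ?_
    rw [← Finset.card_filter]
    congr 1
    rw [Finset.filter_mem_eq_inter, Finset.inter_eq_right]
    exact Finset.filter_subset _ _
  rw [hdc] at hfix
  obtain ⟨q, hq, hqmax⟩ := Finset.exists_max_image (Y ×ˢ Y) (fun q => (pencil r X0 Y q.1 q.2).card)
    (by obtain ⟨y, hy⟩ := Finset.card_pos.1 hn0; exact ⟨(y, y), Finset.mem_product.2 ⟨hy, hy⟩⟩)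
  have hsum : ∑ q ∈ Y ×ˢ Y, (pencil r X0 Y q.1 q.2).card ≤ n ^ 2 * (pencil r X0 Y q.1 q.2).card := by
    refine (Finset.sum_le_card_nsmul _ _ _ hqmax).trans ?_
    rw [smul_eq_mul, Finset.card_product, sq]
  rw [Finset.mem_product] at hq
  refine ⟨q.1, hq.1, q.2, hq.2, ?_⟩
  have hmono : (pencil r X0 Y q.1 q.2).card ≤ (pencil r X Y q.1 q.2).card := by
    refine Finset.card_le_card fun y hy => ?_
    unfold pencil at hy ⊢
    rw [Finset.mem_filter] at hy ⊢
    obtain ⟨a, b, c, x1, h1, x2, h2, h3⟩ := hy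
    exact ⟨a, b, c, x1, sX0 h1, x2, sX0 h2, h3⟩
  refine le_trans ?_ (Nat.mul_le_mul_left _ hmono)
  set M := (pencil r X0 Y q.1 q.2).card
  have hmain : W ^ 2 ≤ n * (n ^ 2 * M + ρ * W) := hCS2.trans (Nat.mul_le_mul_left _ (hfix.trans (by omega)))
  have hm0 : 0 < m := by
    rcases Nat.eq_zero_or_pos m with h | h
    · rw [h] at hI0W
      have hh : I0 = 0 := by simpa using hI0W
      rw [hh] at hI0k
      have : 0 < n * k := Nat.mul_pos hn0 (by omega)
      omega
    · exact h
  exact pencil_numeric hn0 hm0 h2 hI0k hI0W hρ2 hmain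

end graph
end IB

/-! ### The projective plane and grids -/

namespace IB

section vec
variable {F : Type*} [Field F]

/-- Pairwise non-proportional nonzero vectors, that is, representatives of distinct points (or lines) of the
projective plane. -/
def Pnp (X : Finset (Fin 3 → F)) : Prop :=
  (∀ x ∈ X, x ≠ 0) ∧ ∀ x ∈ X, ∀ w ∈ X, ∀ c : F, x = c • w → x = w

/-- Incidence of the projective point `y` with the projective line `x` (or vice versa). -/
def orth (x y : Fin 3 → F) : Prop := x ⬝ᵥ y = 0

theorem Pnp.mono {X X' : Finset (Fin 3 → F)} (h : Pnp X) (hs : X' ⊆ X) : Pnp X' :=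
  ⟨fun x hx => h.1 x (hs hx), fun x hx w hw => h.2 x (hs hx) w (hs hw)⟩

theorem orth_comm (x y : Fin 3 → F) : orth x y ↔ orth y x := by
  unfold orth; rw [dotProduct_comm]

theorem exists_third (y1 y2 : Fin 3 → F) :
    (y1 ≠ 0) → (∀ c : F, y2 ≠ c • y1) →
    ∃ y3 : Fin 3 → F, (∀ y, ∃ α β γ : F, y = α • y1 + β • y2 + γ • y3) ∧
      ∀ α β γ : F, α • y1 + β • y2 + γ • y3 = 0 → α = 0 ∧ β = 0 ∧ γ = 0 := by
  intro h1 h2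
  have hli : LinearIndependent F ![y1, y2] := by
    rw [LinearIndependent.pair_iff]
    intro s t hst
    have ht : t = 0 := by
      by_contra ht
      apply h2 (-(s / t))
      have : t • y2 = -(s • y1) := by rw [eq_neg_iff_add_eq_zero, add_comm]; exact hst
      calc y2 = t⁻¹ • (t • y2) := by rw [smul_smul, inv_mul_cancel₀ ht, one_smul]
        _ = _ := by rw [this, smul_neg, smul_smul, neg_smul]; congr 2; field_simp
    subst ht
    simp only [zero_smul, add_zero, smul_eq_zero] at hst
    exact ⟨hst.resolve_right h1, rfl⟩
  obtain ⟨y3, hy3⟩ := exists_linearIndependent_snoc_of_lt_finrank hli (by simp)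
  refine ⟨y3, fun y => ?_, fun α β γ h => ?_⟩
  swap
  · rw [Fintype.linearIndependent_iff] at hy3
    have := hy3 ![α, β, γ] (by rw [Fin.sum_univ_three]; exact h)
    exact ⟨this 0, this 1, this 2⟩
  have hsp := hy3.span_eq_top_of_card_eq_finrank (by simp)
  have hy : y ∈ Submodule.span F (Set.range (Fin.snoc ![y1, y2] y3)) := by rw [hsp]; trivial
  rw [Submodule.mem_span_range_iff_exists_fun] at hy
  obtain ⟨c, hc⟩ := hy
  refine ⟨c 0, c 1, c 2, ?_⟩
  rw [← hc, Fin.sum_univ_three]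
  rfl

theorem dot_comb (x y1 y2 y3 : Fin 3 → F) (α β γ : F) :
    x ⬝ᵥ (α • y1 + β • y2 + γ • y3) = α * (x ⬝ᵥ y1) + β * (x ⬝ᵥ y2) + γ * (x ⬝ᵥ y3) := by
  simp [dotProduct_add, dotProduct_smul]

theorem eq_smul_of_coords {y1 y2 y3 : Fin 3 → F}
    (hb : ∀ y, ∃ α β γ : F, y = α • y1 + β • y2 + γ • y3) {x x' : Fin 3 → F} (c : F)
    (h1 : x ⬝ᵥ y1 = c * (x' ⬝ᵥ y1)) (h2 : x ⬝ᵥ y2 = c * (x' ⬝ᵥ y2)) (h3 : x ⬝ᵥ y3 = c * (x' ⬝ᵥ y3)) :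
    x = c • x' := by
  rw [← sub_eq_zero, ← dotProduct_eq_zero_iff]
  intro y
  obtain ⟨α, β, γ, rfl⟩ := hb y
  rw [dot_comb]
  simp only [sub_dotProduct, smul_dotProduct, smul_eq_mul, h1, h2, h3]
  ring

theorem two_orth {x x' y y' : Fin 3 → F} (hy : y ≠ 0) (hyy : ∀ c : F, y' ≠ c • y) (hx' : x' ≠ 0)
    (h1 : orth x y) (h2 : orth x y') (h3 : orth x' y) (h4 : orth x' y') : ∃ c : F, x = c • x' := by
  obtain ⟨y3, hb, -⟩ := exists_third y y' hy hyy
  unfold orth at *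
  have h0 : x' ⬝ᵥ y3 ≠ 0 := by
    intro h0
    apply hx'
    have := eq_smul_of_coords hb (x := x') (x' := 0) 0 (by simp [h3]) (by simp [h4]) (by simp [h0])
    simpa using this
  refine ⟨x ⬝ᵥ y3 / x' ⬝ᵥ y3, eq_smul_of_coords hb _ (by simp [h1, h3]) (by simp [h2, h4]) ?_⟩
  field_simp

/-- Two projective points have at most one common line, so the incidence graph contains no `K₂,₂`. -/
theorem Pnp.k22 {X Y : Finset (Fin 3 → F)} (hX : Pnp X) (hY : Pnp Y) :
    ∀ y ∈ Y, ∀ y' ∈ Y, y ≠ y' → ∀ x ∈ X, ∀ x' ∈ X, orth x y → orth x y' → orth x' y → orth x' y' → x = x' := by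
  intro y hy y' hy' hne x hx x' hx' h1 h2 h3 h4
  obtain ⟨c, hc⟩ := two_orth (hY.1 y hy) (fun c hc => hne (hY.2 y' hy' y hy c hc).symm) (hX.1 x' hx') h1 h2 h3 h4
  exact hX.2 x hx x' hx' c hc

/-- Points of the grid `A × B` lying on at least `t` of the lines `b = c a + d`, `(c, d) ∈ L`. The Cauchy–Schwarz
inequality over `b ∈ B` bounds them by the energy of the values `c a + d`. -/
theorem grid (A B : Finset F) (L S : Finset (F × F)) (t : ℕ) (hS : ∀ s ∈ S, s.1 ∈ A ∧ s.2 ∈ B)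
    (ht : ∀ s ∈ S, t ≤ (L.filter fun l => l.1 * s.1 + l.2 = s.2).card) :
    (S.card * t) ^ 2 ≤ B.card * cnt meets (A ×ˢ L) (A ×ˢ L) := by
  have h1 : S.card * t ≤ ∑ s ∈ S, (L.filter fun l => l.1 * s.1 + l.2 = s.2).card := by
    have := Finset.card_nsmul_le_sum S (fun s => (L.filter fun l => l.1 * s.1 + l.2 = s.2).card) t ht
    simpa using this
  have h2 : ∑ s ∈ S, (L.filter fun l => l.1 * s.1 + l.2 = s.2).card ≤
      ∑ b ∈ B, ((A ×ˢ L).filter fun q => q.2.1 * q.1 + q.2.2 = b).card := by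
    calc _ ≤ ∑ s ∈ A ×ˢ B, (L.filter fun l => l.1 * s.1 + l.2 = s.2).card :=
          Finset.sum_le_sum_of_subset (fun s hs => Finset.mem_product.2 (hS s hs))
      _ = _ := by
          rw [Finset.sum_product_right]
          refine Finset.sum_congr rfl fun b _ => ?_
          simp only [Finset.card_filter, Finset.sum_product]
  have h3 : ∑ b ∈ B, ((A ×ˢ L).filter fun q => q.2.1 * q.1 + q.2.2 = b).card ^ 2 ≤
      cnt meets (A ×ˢ L) (A ×ˢ L) := by
    have e1 : cnt meets (A ×ˢ L) (A ×ˢ L) = ∑ q ∈ A ×ˢ L, ∑ q' ∈ A ×ˢ L,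
        if q.2.1 * q.1 + q.2.2 = q'.2.1 * q'.1 + q'.2.2 then 1 else 0 := by
      unfold cnt meets
      simp only [Finset.card_filter, Finset.sum_product]
      rw [Finset.sum_comm]
      have : ∀ l ∈ L, ∑ a ∈ A, ∑ a' ∈ A, ∑ l' ∈ L, (if l.1 * a' + l.2 = l'.1 * a + l'.2 then 1 else 0) =
        ∑ a ∈ A, ∑ a' ∈ A, ∑ l' ∈ L, (if l.1 * a + l.2 = l'.1 * a' + l'.2 then 1 else 0) := by
        intro l _
        rw [Finset.sum_comm]
      rw [Finset.sum_congr rfl this, Finset.sum_comm]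
    rw [e1]
    have e2 : ∀ b ∈ B, ((A ×ˢ L).filter fun q => q.2.1 * q.1 + q.2.2 = b).card ^ 2 =
        ∑ q ∈ A ×ˢ L, ∑ q' ∈ A ×ˢ L, if q.2.1 * q.1 + q.2.2 = b ∧ q'.2.1 * q'.1 + q'.2.2 = b then 1 else 0 := by
      intro b _
      rw [sq, Finset.card_filter, Finset.sum_mul_sum]
      refine Finset.sum_congr rfl fun q _ => Finset.sum_congr rfl fun q' _ => ?_
      by_cases h1 : q.2.1 * q.1 + q.2.2 = b <;> by_cases h2 : q'.2.1 * q'.1 + q'.2.2 = b <;> simp [h1, h2]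
    rw [Finset.sum_congr rfl e2, Finset.sum_comm]
    refine Finset.sum_le_sum fun q _ => ?_
    rw [Finset.sum_comm]
    refine Finset.sum_le_sum fun q' _ => ?_
    rw [← Finset.card_filter]
    split_ifs with h
    · rw [Finset.card_le_one]
      intro a ha b hb
      rw [Finset.mem_filter] at ha hb
      rw [← ha.2.1, ← hb.2.1]
    · rw [Nat.le_zero, Finset.card_eq_zero, Finset.filter_eq_empty_iff]
      rintro b _ ⟨h1, h2⟩
      exact h (h1.trans h2.symm)
  calc (S.card * t) ^ 2 ≤ (∑ b ∈ B, ((A ×ˢ L).filter fun q => q.2.1 * q.1 + q.2.2 = b).card) ^ 2 :=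
        Nat.pow_le_pow_left (h1.trans h2) 2
    _ ≤ B.card * ∑ b ∈ B, ((A ×ˢ L).filter fun q => q.2.1 * q.1 + q.2.2 = b).card ^ 2 :=
        sq_sum_le_card_mul_sum_sq
    _ ≤ _ := Nat.mul_le_mul_left _ h3

end vec
end IB

/-! ### Grid coordinates attached to a pencil -/

namespace IB

section vec
variable {F : Type*} [Field F]

/-- Affine coordinates in which `y1` and `y2` are the two points at infinity of the axes: the points of
the pencil become points of a `k × k` grid, the lines through `y1` and `y2` being parallel to the axes, and the other
lines of `X` become graphs `b = c a + d`. -/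
theorem coords (X Y Y' G1 G2 : Finset (Fin 3 → F)) (hX : Pnp X) (hY : Pnp Y) (hY' : Y' ⊆ Y)
    (y1 y2 : Fin 3 → F) (hy1 : y1 ∈ Y) (hy2 : y2 ∈ Y) (h12 : y1 ≠ y2) (k R t : ℕ)
    (hG1 : G1.card ≤ k) (hG2 : G2.card ≤ k) (o1 : ∀ x ∈ G1, x ∈ X ∧ orth x y1)
    (o2 : ∀ x ∈ G2, x ∈ X ∧ orth x y2)
    (hpen : ∀ y ∈ Y', y ≠ y1 ∧ y ≠ y2 ∧ ∃ x1 ∈ G1, ∃ x2 ∈ G2, x1 ≠ x2 ∧ orth x1 y ∧ orth x2 y)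
    (hR : ∀ w : Fin 3 → F, w ≠ 0 → (X.filter (orth · w)).card ≤ R)
    (ht : ∀ y ∈ Y', t + 1 ≤ (X.filter (orth · y)).card) :
    ∃ (A : Finset F) (L : Finset (F × F)), A.card ≤ k ∧ L.card ≤ X.card ∧
      (∀ α β γ : F, (α ≠ 0 ∨ β ≠ 0) → (L.filter fun l => α * l.1 + β * l.2 = γ).card ≤ R) ∧
      (Y'.card * t) ^ 2 ≤ k * cnt meets (A ×ˢ L) (A ×ˢ L) := by
  obtain ⟨y3, hb, hind⟩ := exists_third y1 y2 (hY.1 y1 hy1) (fun c hc => h12 (hY.2 y2 hy2 y1 hy1 c hc).symm)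
  choose α β γ hy using hb
  have hb : ∀ y, ∃ α β γ : F, y = α • y1 + β • y2 + γ • y3 := fun y => ⟨_, _, _, hy y⟩
  have hdot : ∀ x y, x ⬝ᵥ y = α y * (x ⬝ᵥ y1) + β y * (x ⬝ᵥ y2) + γ y * (x ⬝ᵥ y3) := by
    intro x y
    conv_lhs => rw [hy y]
    exact dot_comb ..
  have hk22 := hX.k22 hY
  have hx0 : ∀ x ∈ X, x ⬝ᵥ y1 = 0 → x ⬝ᵥ y2 = 0 → x ⬝ᵥ y3 ≠ 0 := by
    intro x hx h1 h2 h3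
    apply hX.1 x hx
    have := eq_smul_of_coords hb (x := x) (x' := 0) 0 (by simp [h1]) (by simp [h2]) (by simp [h3])
    simpa using this
  -- No point of the pencil lies on the line through `y1` and `y2`, which becomes the line at infinity.
  have hγ : ∀ y ∈ Y', γ y ≠ 0 := by
    intro y hyY h0
    obtain ⟨n1, n2, x1, hx1, x2, hx2, hne, e1, e2⟩ := hpen y hyY
    obtain ⟨m1, f1⟩ := o1 x1 hx1
    obtain ⟨m2, f2⟩ := o2 x2 hx2
    have hyy := hy y
    have hβ : β y ≠ 0 := by
      intro hβ
      rw [h0, hβ] at hyy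
      exact n1 (hY.2 y (hY' hyY) y1 hy1 (α y) (by simpa using hyy))
    have hα : α y ≠ 0 := by
      intro hα
      rw [h0, hα] at hyy
      exact n2 (hY.2 y (hY' hyY) y2 hy2 (β y) (by simpa using hyy))
    apply hne
    refine hk22 y1 hy1 y2 hy2 h12 x1 m1 x2 m2 f1 ?_ ?_ f2
    · unfold orth at *
      rw [hdot, f1, h0] at e1
      simpa [hβ] using e1
    · unfold orth at *
      rw [hdot, f2, h0] at e2
      simpa [hα] using e2
  have hdot' : ∀ x, ∀ y ∈ Y', (orth x y ↔ (α y / γ y) * (x ⬝ᵥ y1) + (β y / γ y) * (x ⬝ᵥ y2) + x ⬝ᵥ y3 = 0) := by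
    intro x y hyY
    have := hγ y hyY
    unfold orth
    rw [hdot x y]
    have e : α y * (x ⬝ᵥ y1) + β y * (x ⬝ᵥ y2) + γ y * (x ⬝ᵥ y3) =
      γ y * ((α y / γ y) * (x ⬝ᵥ y1) + (β y / γ y) * (x ⬝ᵥ y2) + x ⬝ᵥ y3) := by
      field_simp
    rw [e, mul_eq_zero]
    simp [this]
  -- In the basis `y1, y2, y3` a point is `(a, b, 1)`; the lines through `y2` fix `a`, those through `y1` fix `b`.
  set A : Finset F := G2.image fun x => -(x ⬝ᵥ y3) / (x ⬝ᵥ y1) with hA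
  set B : Finset F := G1.image fun x => -(x ⬝ᵥ y3) / (x ⬝ᵥ y2) with hB
  set S : Finset (F × F) := Y'.image fun y => (α y / γ y, β y / γ y) with hS
  set X0 := X.filter fun x => x ⬝ᵥ y2 ≠ 0 with hX0
  set f : (Fin 3 → F) → F × F := fun x => (-(x ⬝ᵥ y1) / (x ⬝ᵥ y2), -(x ⬝ᵥ y3) / (x ⬝ᵥ y2)) with hf
  have finj : Set.InjOn f X0 := by
    intro x hx x' hx' hxx
    rw [hX0, Finset.mem_coe, Finset.mem_filter] at hx hx'
    simp only [hf, Prod.mk.injEq] at hxx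
    obtain ⟨e1, e2⟩ := hxx
    have n1 := hx.2
    have n2 := hx'.2
    refine hX.2 x hx.1 x' hx'.1 ((x ⬝ᵥ y2) / (x' ⬝ᵥ y2)) (eq_smul_of_coords hb _ ?_ ?_ ?_)
    · field_simp at e1 ⊢
      linear_combination -e1
    · field_simp
    · field_simp at e2 ⊢
      linear_combination -e2
  have hScard : S.card = Y'.card := by
    apply Finset.card_image_of_injOn
    intro y hyY y' hyY' hyy
    simp only [Prod.mk.injEq] at hyy
    obtain ⟨e1, e2⟩ := hyy
    have n1 := hγ y hyY
    have n2 := hγ y' hyY'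
    refine hY.2 y (hY' hyY) y' (hY' hyY') (γ y / γ y') ?_
    conv_lhs => rw [hy y]
    conv_rhs => rhs; rw [hy y']
    have e1' : α y = γ y / γ y' * α y' := by
      field_simp at e1 ⊢
      linear_combination e1
    have e2' : β y = γ y / γ y' * β y' := by
      field_simp at e2 ⊢
      linear_combination e2
    have e3' : γ y = γ y / γ y' * γ y' := by field_simp
    rw [smul_add, smul_add, smul_smul, smul_smul, smul_smul, ← e1', ← e2', ← e3']
  refine ⟨A, X0.image f, Finset.card_image_le.trans hG2,
    Finset.card_image_le.trans (Finset.card_filter_le _ _), ?_, ?_⟩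
  · intro a b c hab
    have hw : a • y1 + c • y2 + b • y3 ≠ 0 := by
      intro h0
      obtain ⟨h1, -, h3⟩ := hind _ _ _ h0
      simp [h1, h3] at hab
    refine le_trans ?_ (hR _ hw)
    rw [Finset.filter_image]
    refine Finset.card_image_le.trans (Finset.card_le_card ?_)
    intro x hx
    rw [Finset.mem_filter] at hx ⊢
    obtain ⟨hx, e⟩ := hx
    rw [hX0, Finset.mem_filter] at hx
    have n1 := hx.2
    refine ⟨hx.1, ?_⟩
    unfold orth
    rw [dot_comb]
    simp only [hf] at e
    field_simp at e
    linear_combination -e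
  -- Each point lies on at most one line through `y2`, which is not a graph, whence `t` in place of `t + 1`.
  · have hg := grid A B (X0.image f) S t ?_ ?_
    · rw [hScard] at hg
      refine hg.trans (Nat.mul_le_mul_right _ (Finset.card_image_le.trans hG1))
    · intro s hs
      rw [hS, Finset.mem_image] at hs
      obtain ⟨y, hyY, rfl⟩ := hs
      obtain ⟨n1, n2, x1, hx1, x2, hx2, hne, e1, e2⟩ := hpen y hyY
      obtain ⟨m1, f1⟩ := o1 x1 hx1
      obtain ⟨m2, f2⟩ := o2 x2 hx2
      rw [hdot' _ y hyY] at e1 e2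
      unfold orth at f1 f2
      rw [f1] at e1
      rw [f2] at e2
      constructor
      · rw [hA, Finset.mem_image]
        refine ⟨x2, hx2, ?_⟩
        have : x2 ⬝ᵥ y1 ≠ 0 := by
          intro h0
          exact hx0 x2 m2 h0 f2 (by simpa [h0] using e2)
        rw [div_eq_iff this]
        linear_combination -e2
      · rw [hB, Finset.mem_image]
        refine ⟨x1, hx1, ?_⟩
        have : x1 ⬝ᵥ y2 ≠ 0 := by
          intro h0
          exact hx0 x1 m1 f1 h0 (by simpa [h0] using e1)
        rw [div_eq_iff this]
        linear_combination -e1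
    · intro s hs
      rw [hS, Finset.mem_image] at hs
      obtain ⟨y, hyY, rfl⟩ := hs
      obtain ⟨n1, n2, -⟩ := hpen y hyY
      rw [Finset.filter_image, Finset.card_image_of_injOn (finj.mono (by
        intro x hx; exact (Finset.mem_filter.1 hx).1))]
      have h1 := ht y hyY
      have h2 : ((X.filter (orth · y)).filter fun x => x ⬝ᵥ y2 = 0).card ≤ 1 := by
        rw [Finset.card_le_one]
        intro x hx x' hx'
        simp only [Finset.mem_filter] at hx hx'
        exact hk22 y (hY' hyY) y2 hy2 n2 x hx.1.1 x' hx'.1.1 hx.1.2 hx.2 hx'.1.2 hx'.2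
      have h3 := Finset.card_filter_add_card_filter_not (s := X.filter (orth · y)) (fun x => x ⬝ᵥ y2 = 0)
      have h4 : ((X.filter (orth · y)).filter fun x => ¬ x ⬝ᵥ y2 = 0) ⊆
          X0.filter fun a => (f a).1 * (α y / γ y, β y / γ y).1 + (f a).2 = (α y / γ y, β y / γ y).2 := by
        intro x hx
        simp only [Finset.mem_filter] at hx
        obtain ⟨⟨hxX, hxy⟩, hn⟩ := hx
        rw [hdot' _ y hyY] at hxy
        rw [Finset.mem_filter, hX0, Finset.mem_filter]
        refine ⟨⟨hxX, hn⟩, ?_⟩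
        simp only [hf]
        rw [div_mul_eq_mul_div, ← add_div, div_eq_iff hn]
        linear_combination -hxy
      have h5 := Finset.card_le_card h4
      omega

end vec
end IB

/-! ### Rich points -/

namespace IB

section vec
variable {F : Type*} [Field F]

/-- Two lines meet in at most one point, so the `n` points with at least `k` lines through them account for
about `n k ^ 2` of at most `m ^ 2` pairs of lines. -/
theorem pairs_bound (X Y : Finset (Fin 3 → F)) (hX : Pnp X) (hY : Pnp Y) (m k : ℕ) (hm : X.card ≤ m)
    (hk : 2 ≤ k) (hYk : ∀ y ∈ Y, k ≤ (X.filter (orth · y)).card) : Y.card * k ^ 2 ≤ 2 * m ^ 2 := by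
  have h1 := kst (fun y x => orth x y) Y X 1 (by
    intro x hx x' hx' hne
    rw [Finset.card_le_one]
    intro y hy y' hy'
    rw [Finset.mem_filter] at hy hy'
    by_contra hyy
    exact hne (hX.k22 hY y hy.1 y' hy'.1 hyy x hx x' hx' hy.2.1 hy'.2.1 hy.2.2 hy'.2.2))
  have h2 := mul_le_cnt orth X Y k hYk
  rw [cnt_comm] at h2
  have e : cnt (fun y x => orth x y) Y X = ∑ b ∈ Y, (X.filter fun a => orth a b).card := rfl
  change Y.card * k ≤ cnt (fun y x => orth x y) Y X at h2
  have h3 : X.card ^ 2 ≤ m ^ 2 := Nat.pow_le_pow_left hm 2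
  generalize cnt (fun y x => orth x y) Y X = I at *
  generalize Y.card = n at *
  rcases Nat.eq_zero_or_pos n with rfl | hn
  · simp
  have h4 : 2 * n ≤ I := by nlinarith
  have h5 : I * I ≤ 2 * n * m ^ 2 := by nlinarith
  have h6 : (n * k) * (n * k) ≤ I * I := Nat.mul_le_mul h2 h2
  have h7 : n * (n * k ^ 2) ≤ n * (2 * m ^ 2) := by nlinarith
  exact Nat.le_of_mul_le_mul_left h7 hn

/-- Representatives of all projective points lying on more than `R` lines of `X`. The field may be infinite, so
a maximal family is taken; its size is bounded because such points carry few incidences in total. -/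
theorem rich_family (X : Finset (Fin 3 → F)) (hX : Pnp X) (R : ℕ) (hR1 : 1 ≤ R) (hR : 2 * X.card ≤ R ^ 2) :
    ∃ Z : Finset (Fin 3 → F), Pnp Z ∧ Z.card * R ≤ 2 * X.card ∧
      ∀ w, w ≠ 0 → R < (X.filter (orth · w)).card → ∃ z ∈ Z, ∃ c : F, w = c • z := by
  have hbd : ∀ Z : Finset (Fin 3 → F), Pnp Z → (∀ z ∈ Z, R ≤ (X.filter (orth · z)).card) →
      Z.card * R ≤ 2 * X.card := by
    intro Z hZ h
    refine (mul_le_cnt orth X Z R h).trans (rich orth X Z 1 R ?_ h (by simpa using hR))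
    intro y hy y' hy' hne
    rw [Finset.card_le_one]
    intro x hx x' hx'
    rw [Finset.mem_filter] at hx hx'
    exact hX.k22 hZ y hy y' hy' hne x hx.1 x' hx'.1 hx.2.1 hx.2.2 hx'.2.1 hx'.2.2
  let Q : ℕ → Prop := fun j => ∃ Z : Finset (Fin 3 → F), Pnp Z ∧ (∀ z ∈ Z, R ≤ (X.filter (orth · z)).card) ∧ Z.card = j
  have hQ0 : Q 0 := ⟨∅, ⟨by simp, by simp⟩, by simp, rfl⟩
  obtain ⟨Z, hZ, hZR, hZc⟩ : Q (Nat.findGreatest Q (2 * X.card)) := Nat.findGreatest_spec (Nat.zero_le _) hQ0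
  refine ⟨Z, hZ, hbd Z hZ hZR, fun w hw hwR => ?_⟩
  by_contra hcon
  push Not at hcon
  have hwZ : w ∉ Z := fun h => hcon w h 1 (by simp)
  have hP : Pnp (insert w Z) := by
    constructor
    · intro x hx
      rcases Finset.mem_insert.1 hx with rfl | hx
      · exact hw
      · exact hZ.1 x hx
    · intro x hx x' hx' c hc
      rcases Finset.mem_insert.1 hx with rfl | hxZ <;> rcases Finset.mem_insert.1 hx' with rfl | hxZ'
      · rfl
      · exact absurd hc (hcon x' hxZ' c)
      · exfalso
        have hc0 : c ≠ 0 := by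
          rintro rfl
          exact hZ.1 x hxZ (by simpa using hc)
        exact hcon x hxZ c⁻¹ (by rw [hc, smul_smul, inv_mul_cancel₀ hc0, one_smul])
      · exact hZ.2 x hxZ x' hxZ' c hc
  have hPR : ∀ z ∈ insert w Z, R ≤ (X.filter (orth · z)).card := by
    intro z hz
    rcases Finset.mem_insert.1 hz with rfl | hz
    · exact hwR.le
    · exact hZR z hz
  have hQ : Q (insert w Z).card := ⟨_, hP, hPR, rfl⟩
  have h1 := hbd _ hP hPR
  have h2 : (insert w Z).card ≤ 2 * X.card := le_trans (by nlinarith) h1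
  have h3 := Nat.le_findGreatest h2 hQ
  rw [Finset.card_insert_of_notMem hwZ] at h3
  omega

/-- The energy bound with `|A| ≤ k`, `|L| ≤ m` and `R ≈ √(k m)`, for which both of its terms are of order
`(k m) ^ (3 / 2)`. -/
theorem core_num1 {k m E R A L : ℕ} (hN : (E : ℝ) ≤ 10000 * (((2 * (A * L) : ℕ) : ℝ) * √((2 * (A * L) : ℕ) : ℝ)) + 2 * R * ((2 * (A * L) : ℕ) : ℝ))
    (hA : A ≤ k) (hL : L ≤ m) (hR : k * m ≤ R ^ 2) (hR2 : R ^ 2 ≤ 4 * (k * m)) :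
    E ^ 2 ≤ 40004 ^ 2 * 4 * (k * m) ^ 3 := by
  have h1 : A * L ≤ k * m := Nat.mul_le_mul hA hL
  have h2 : (((2 * (A * L) : ℕ) : ℝ)) ≤ 2 * (k * m : ℕ) := by exact_mod_cast Nat.mul_le_mul_left 2 h1
  have hRr : ((k * m : ℕ) : ℝ) ≤ (R : ℝ) ^ 2 := by exact_mod_cast hR
  have h3 : √((2 * (A * L) : ℕ) : ℝ) ≤ 2 * R := by
    rw [Real.sqrt_le_left (by positivity)]
    nlinarith
  have h0 : (0 : ℝ) ≤ ((2 * (A * L) : ℕ) : ℝ) := by positivity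
  generalize ((2 * (A * L) : ℕ) : ℝ) = N at *
  have h4 : (E : ℝ) ≤ 40004 * ((k * m : ℕ) : ℝ) * R := by
    have hR0 : (0 : ℝ) ≤ R := by positivity
    have : N * √N ≤ N * (2 * R) := mul_le_mul_of_nonneg_left h3 h0
    have h5 : N * R ≤ 2 * ((k * m : ℕ) : ℝ) * R := mul_le_mul_of_nonneg_right h2 hR0
    nlinarith
  have h4' : E ≤ 40004 * (k * m) * R := by exact_mod_cast h4
  calc E ^ 2 ≤ (40004 * (k * m) * R) ^ 2 := Nat.pow_le_pow_left h4' 2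
    _ = 40004 ^ 2 * (k * m) ^ 2 * R ^ 2 := by ring
    _ ≤ 40004 ^ 2 * (k * m) ^ 2 * (4 * (k * m)) := Nat.mul_le_mul_left _ hR2
    _ = _ := by ring

/-- Elimination of the energy `E` and the size `M` of the pencil. -/
theorem core_num2 {n k k' m E M t : ℕ} (hE : E ^ 2 ≤ 40004 ^ 2 * 4 * (k * m) ^ 3)
    (hM : n * k' ^ 4 ≤ 128 * m ^ 2 * M) (hMt : (M * t) ^ 2 ≤ k * E) (hkk : k ≤ 3 * k') (ht : k' ≤ 2 * t)
    (hk' : 0 < k') : n ^ 4 * k' ^ 15 ≤ 10 ^ 22 * m ^ 11 := by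
  have h1 : (M * t) ^ 4 ≤ 40004 ^ 2 * 4 * (k ^ 5 * m ^ 3) := by
    calc (M * t) ^ 4 = ((M * t) ^ 2) ^ 2 := by ring
      _ ≤ (k * E) ^ 2 := Nat.pow_le_pow_left hMt 2
      _ = k ^ 2 * E ^ 2 := by ring
      _ ≤ k ^ 2 * (40004 ^ 2 * 4 * (k * m) ^ 3) := Nat.mul_le_mul_left _ hE
      _ = _ := by ring
  have h2 : (M * k') ^ 4 ≤ 16 * (40004 ^ 2 * 4 * (k ^ 5 * m ^ 3)) := by
    calc (M * k') ^ 4 ≤ (M * (2 * t)) ^ 4 := Nat.pow_le_pow_left (Nat.mul_le_mul_left _ ht) 4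
      _ = 16 * (M * t) ^ 4 := by ring
      _ ≤ _ := Nat.mul_le_mul_left _ h1
  have h3 : k ^ 5 ≤ 243 * k' ^ 5 := by
    calc k ^ 5 ≤ (3 * k') ^ 5 := Nat.pow_le_pow_left hkk 5
      _ = _ := by ring
  have h4 : k' ^ 5 * (n ^ 4 * k' ^ 15) ≤ k' ^ 5 * (10 ^ 22 * m ^ 11) := by
    calc k' ^ 5 * (n ^ 4 * k' ^ 15) = (n * k' ^ 4) ^ 4 * k' ^ 4 := by ring
      _ ≤ (128 * m ^ 2 * M) ^ 4 * k' ^ 4 := Nat.mul_le_mul_right _ (Nat.pow_le_pow_left hM 4)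
      _ = 128 ^ 4 * m ^ 8 * (M * k') ^ 4 := by ring
      _ ≤ 128 ^ 4 * m ^ 8 * (16 * (40004 ^ 2 * 4 * (k ^ 5 * m ^ 3))) := Nat.mul_le_mul_left _ h2
      _ = 128 ^ 4 * 16 * 40004 ^ 2 * 4 * m ^ 11 * k ^ 5 := by ring
      _ ≤ 128 ^ 4 * 16 * 40004 ^ 2 * 4 * m ^ 11 * (243 * k' ^ 5) := Nat.mul_le_mul_left _ h3
      _ = (128 ^ 4 * 16 * 40004 ^ 2 * 4 * 243) * (m ^ 11 * k' ^ 5) := by ring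
      _ ≤ 10 ^ 22 * (m ^ 11 * k' ^ 5) := Nat.mul_le_mul_right _ (by norm_num)
      _ = _ := by ring
  exact Nat.le_of_mul_le_mul_left h4 (by positivity)

end vec
end IB

/-! ### The structural bound for point-line incidences -/

namespace IB

section vec
variable {F : Type*} [Field F]

theorem core_num3 {n k m n1 k' : ℕ} (h : n1 ^ 4 * k' ^ 15 ≤ 10 ^ 22 * m ^ 11) (hn : n ≤ 2 * n1)
    (hk : k ≤ 3 * k') : n ^ 4 * k ^ 15 ≤ 10 ^ 31 * m ^ 11 := by
  calc n ^ 4 * k ^ 15 ≤ (2 * n1) ^ 4 * (3 * k') ^ 15 :=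
        Nat.mul_le_mul (Nat.pow_le_pow_left hn 4) (Nat.pow_le_pow_left hk 15)
    _ = 2 ^ 4 * 3 ^ 15 * (n1 ^ 4 * k' ^ 15) := by ring
    _ ≤ 2 ^ 4 * 3 ^ 15 * (10 ^ 22 * m ^ 11) := Nat.mul_le_mul_left _ h
    _ ≤ 10 ^ 31 * m ^ 11 := by nlinarith [Nat.zero_le (m ^ 11)]

/-- When the desired bound fails, the hypotheses of `pencil_exists` hold. -/
theorem core_num4 {n1 k' m : ℕ} (hk : 4 ≤ k') (hkm : 4 * k' ^ 2 ≤ m) (h : ¬ n1 ^ 4 * k' ^ 15 ≤ 10 ^ 22 * m ^ 11) :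
    4 * m ≤ n1 * k' ∧ 8192 * m ^ 2 ≤ n1 * k' ^ 4 := by
  push Not at h
  constructor
  · by_contra hc
    push Not at hc
    apply absurd h
    push Not
    calc n1 ^ 4 * k' ^ 15 ≤ n1 ^ 4 * k' ^ 18 :=
          Nat.mul_le_mul_left _ (Nat.pow_le_pow_right (by omega) (by norm_num))
      _ = (n1 * k') ^ 4 * (k' ^ 2) ^ 7 := by ring
      _ ≤ (4 * m) ^ 4 * m ^ 7 := Nat.mul_le_mul (Nat.pow_le_pow_left hc.le 4) (Nat.pow_le_pow_left (by omega) 7)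
      _ = 256 * m ^ 11 := by ring
      _ ≤ _ := Nat.mul_le_mul_right _ (by norm_num)
  · by_contra hc
    push Not at hc
    apply absurd h
    push Not
    have hm : 1 ≤ m := by nlinarith
    calc n1 ^ 4 * k' ^ 15 ≤ n1 ^ 4 * k' ^ 16 :=
          Nat.mul_le_mul_left _ (Nat.pow_le_pow_right (by omega) (by norm_num))
      _ = (n1 * k' ^ 4) ^ 4 := by ring
      _ ≤ (8192 * m ^ 2) ^ 4 := Nat.pow_le_pow_left hc.le 4
      _ = 8192 ^ 4 * m ^ 8 := by ring
      _ ≤ 10 ^ 22 * m ^ 11 := Nat.mul_le_mul (by norm_num) (Nat.pow_le_pow_right hm (by norm_num))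

theorem core_num5 {Z R m k : ℕ} (hm : 0 < m) (h1 : Z * R ≤ 2 * m) (hR : k * m ≤ R ^ 2) (hk : 64 * m ≤ k ^ 3) (hk0 : 0 < k) :
    4 * Z ≤ k := by
  have h2 : Z ^ 2 * (k * m) ≤ 4 * m * m := by
    calc Z ^ 2 * (k * m) ≤ Z ^ 2 * R ^ 2 := Nat.mul_le_mul_left _ hR
      _ = (Z * R) ^ 2 := by ring
      _ ≤ (2 * m) ^ 2 := Nat.pow_le_pow_left h1 2
      _ = _ := by ring
  have h3 : Z ^ 2 * k ≤ 4 * m := by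
    apply Nat.le_of_mul_le_mul_right _ hm
    calc Z ^ 2 * k * m = Z ^ 2 * (k * m) := by ring
      _ ≤ _ := h2
  have h4 : (4 * Z) ^ 2 ≤ k ^ 2 := by
    apply Nat.le_of_mul_le_mul_right _ hk0
    nlinarith
  exact (Nat.pow_le_pow_iff_left (by norm_num)).1 h4

/-- After deleting the lines of `X` through very rich points every point is on at most `R` remaining lines. Only
`z ≤ 2 |X| / R` points of `Y` are lost, and each other point loses at most `z` of its lines, as two points have
one line in common. -/
theorem prune (X Y : Finset (Fin 3 → F)) (hX : Pnp X) (hY : Pnp Y) (G : (Fin 3 → F) → Finset (Fin 3 → F))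
    (hG : ∀ y ∈ Y, ∀ x ∈ G y, x ∈ X ∧ orth x y) (R : ℕ) (hR1 : 1 ≤ R) (hR : 2 * X.card ≤ R ^ 2) :
    ∃ (X' Y1 : Finset (Fin 3 → F)) (z : ℕ), X' ⊆ X ∧ Y1 ⊆ Y ∧ z * R ≤ 2 * X.card ∧ Y.card ≤ Y1.card + z ∧
      (∀ w, w ≠ 0 → (X'.filter (orth · w)).card ≤ R) ∧
      ∀ y ∈ Y1, (G y).card ≤ (X'.filter (· ∈ G y)).card + z := by
  obtain ⟨Z, hZ, hZR, hZmax⟩ := rich_family X hX R hR1 hR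
  refine ⟨X.filter fun x => ∀ z ∈ Z, ¬ orth x z, Y.filter fun y => ∀ z ∈ Z, ∀ c : F, y ≠ c • z, Z.card,
    Finset.filter_subset _ _, Finset.filter_subset _ _, hZR, ?_, ?_, ?_⟩
  · have h1 := Finset.card_filter_add_card_filter_not (s := Y) (fun y => ∀ z ∈ Z, ∀ c : F, y ≠ c • z)
    have h2 : (Y.filter fun y => ¬ ∀ z ∈ Z, ∀ c : F, y ≠ c • z).card ≤ Z.card := by
      have hex : ∀ y ∈ Y.filter fun y => ¬ ∀ z ∈ Z, ∀ c : F, y ≠ c • z, ∃ z, z ∈ Z ∧ ∃ c : F, y = c • z := by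
        intro y hy
        rw [Finset.mem_filter] at hy
        have := hy.2
        push Not at this
        obtain ⟨z, hz, c, hc⟩ := this
        exact ⟨z, hz, c, hc⟩
      choose! g hg using hex
      refine Finset.card_le_card_of_injOn g (fun y hy => (hg y hy).1) ?_
      intro y hy y' hy' hyy
      obtain ⟨-, c, hc⟩ := hg y hy
      obtain ⟨-, c', hc'⟩ := hg y' hy'
      have my := (Finset.mem_filter.1 hy).1
      have my' := (Finset.mem_filter.1 hy').1
      have hc0 : c' ≠ 0 := by
        rintro rfl
        exact hY.1 y' my' (by simpa using hc')
      refine hY.2 y my y' my' (c * c'⁻¹) ?_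
      rw [hc', ← hyy, smul_smul, mul_assoc, inv_mul_cancel₀ hc0, mul_one]
      exact hc
    omega
  · intro w hw
    by_contra hcon
    push Not at hcon
    have h1 : R < (X.filter (orth · w)).card := hcon.trans_le
      (Finset.card_le_card (Finset.filter_subset_filter _ (Finset.filter_subset _ _)))
    obtain ⟨z, hz, c, hc⟩ := hZmax w hw h1
    obtain ⟨x, hx⟩ := Finset.card_pos.1 ((Nat.zero_le R).trans_lt hcon)
    simp only [Finset.mem_filter] at hx
    apply hx.1.2 z hz
    have hc0 : c ≠ 0 := by
      rintro rfl
      exact hw (by simpa using hc)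
    have := hx.2
    unfold orth at this ⊢
    rw [hc, dotProduct_smul, smul_eq_mul, mul_eq_zero] at this
    exact this.resolve_left hc0
  · intro y hy
    rw [Finset.mem_filter] at hy
    have h1 := Finset.card_filter_add_card_filter_not (s := G y) (fun x => ∀ z ∈ Z, ¬ orth x z)
    have h2 : ((G y).filter fun x => ¬ ∀ z ∈ Z, ¬ orth x z).card ≤ Z.card := by
      have hex : ∀ x ∈ (G y).filter fun x => ¬ ∀ z ∈ Z, ¬ orth x z, ∃ z, z ∈ Z ∧ orth x z := by
        intro x hx
        rw [Finset.mem_filter] at hx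
        have := hx.2
        push Not at this
        exact this
      choose! g hg using hex
      refine Finset.card_le_card_of_injOn g (fun x hx => (hg x hx).1) ?_
      intro x hx x' hx' hxx
      have h1 := hg x hx
      have h2 := hg x' hx'
      rw [← hxx] at h2
      have m1 := hG y hy.1 x (Finset.mem_filter.1 hx).1
      have m2 := hG y hy.1 x' (Finset.mem_filter.1 hx').1
      obtain ⟨c, hc⟩ := two_orth (hZ.1 _ h1.1) (hy.2 _ h1.1) (hX.1 x' m2.1) h1.2 m1.2 h2.2 m2.2
      exact hX.2 x m1.1 x' m2.1 c hc
    have h3 : (G y).filter (fun x => ∀ z ∈ Z, ¬ orth x z) ⊆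
        (X.filter fun x => ∀ z ∈ Z, ¬ orth x z).filter (· ∈ G y) := by
      intro x hx
      rw [Finset.mem_filter] at hx
      simp only [Finset.mem_filter]
      exact ⟨⟨(hG y hy.1 x hx.1).1, hx.2⟩, hx.1⟩
    have h4 := Finset.card_le_card h3
    omega

/-- The structural bound in the main range `4 m ^ (1 / 3) ≤ k ≤ m ^ (1 / 2) / 2`: a large pencil, viewed as part of a
grid, has energy bounded by `energy`. -/
theorem core [Infinite F] (p : ℕ) (hchar : ∀ n : ℕ, 0 < n → n < p → (n : F) ≠ 0)
    (X Y : Finset (Fin 3 → F)) (hX : Pnp X) (hY : Pnp Y) (m k : ℕ) (hm : X.card ≤ m) (hk : 8 ≤ k)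
    (hkm : 4 * k ^ 2 ≤ m) (hmp : m ^ 3 ≤ p ^ 4) (hkn : k ≤ Y.card) (hk3 : 64 * m ≤ k ^ 3)
    (hYk : ∀ y ∈ Y, k ≤ (X.filter (orth · y)).card) : Y.card ^ 4 * k ^ 15 ≤ 10 ^ 31 * m ^ 11 := by
  -- Exactly `k` lines are kept through each point, so that the grid is at most `k × k`.
  have hGex : ∀ y ∈ Y, ∃ G : Finset (Fin 3 → F), G ⊆ X.filter (orth · y) ∧ G.card = k := fun y hy =>
    Finset.exists_subset_card_eq (hYk y hy)
  choose! G hGs hGc using hGex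
  have hG : ∀ y ∈ Y, ∀ x ∈ G y, x ∈ X ∧ orth x y := fun y hy x hx => Finset.mem_filter.1 (hGs y hy hx)
  have hm0 : 0 < m := by nlinarith
  obtain ⟨R, hR1, hRl, hRu⟩ : ∃ R : ℕ, 1 ≤ R ∧ k * m ≤ R ^ 2 ∧ R ^ 2 ≤ 4 * (k * m) := by
    refine ⟨Nat.sqrt (k * m) + 1, by omega, (Nat.lt_succ_sqrt' _).le, ?_⟩
    have h1 := Nat.sqrt_le' (k * m)
    have h2 : 1 ≤ Nat.sqrt (k * m) := Nat.le_sqrt.2 (by nlinarith)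
    nlinarith
  have hkm' : k ≤ m := by nlinarith
  have hkR : k ≤ R := by
    apply (Nat.pow_le_pow_iff_left (two_ne_zero)).1
    nlinarith
  obtain ⟨X', Y1, z, sX, sY, hz, hYc, hXR, hdeg⟩ := prune X Y hX hY G hG R hR1 (by nlinarith)
  have h4z : 4 * z ≤ k := core_num5 hm0 (hz.trans (by omega)) hRl hk3 (by omega)
  by_contra hcon
  have hk' : 4 ≤ k / 2 := by omega
  have hnum : ¬ Y1.card ^ 4 * (k / 2) ^ 15 ≤ 10 ^ 22 * m ^ 11 := fun h =>
    hcon (core_num3 h (by omega) (by omega))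
  obtain ⟨q1, q2⟩ := core_num4 hk' (by
    have : k / 2 ≤ k := Nat.div_le_self _ _
    nlinarith) hnum
  have hX' := hX.mono sX
  have hY1 := hY.mono sY
  have hX'm : X'.card ≤ m := (Finset.card_le_card sX).trans hm
  have hdeg' : ∀ y ∈ Y1, k / 2 ≤ (X'.filter (· ∈ G y)).card := by
    intro y hy
    have h1 := hdeg y hy
    rw [hGc y (sY hy)] at h1
    omega
  have hk22 := hX'.k22 hY1
  obtain ⟨y1, hy1, y2, hy2, hM⟩ := pencil_exists (fun x y => x ∈ G y) X' Y1 m (k / 2) hX'm hk' (by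
    intro y hy y' hy' hne x hx x' hx' a b c d
    exact hk22 y hy y' hy' hne x hx x' hx' (hG y (sY hy) x a).2 (hG y' (sY hy') x b).2
      (hG y (sY hy) x' c).2 (hG y' (sY hy') x' d).2) (fun y hy => by convert hdeg' y hy) (by omega) q1 q2
  have hmem : ∀ y, y ∈ pencil (fun x y => x ∈ G y) X' Y1 y1 y2 → y ∈ Y1 ∧ y ≠ y1 ∧ y ≠ y2 ∧
      ∃ x1 ∈ X', ∃ x2 ∈ X', x1 ≠ x2 ∧ x1 ∈ G y ∧ x1 ∈ G y1 ∧ x2 ∈ G y ∧ x2 ∈ G y2 := by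
    intro y hy
    simp only [pencil, Finset.mem_filter] at hy
    exact hy
  have h12 : y1 ≠ y2 := by
    intro h12
    have hpos : 0 < (pencil (fun x y => x ∈ G y) X' Y1 y1 y2).card := by
      by_contra h0
      have h0' : (pencil (fun x y => x ∈ G y) X' Y1 y1 y2).card = 0 := by omega
      rw [h0'] at hM
      nlinarith
    obtain ⟨y, hy⟩ := Finset.card_pos.1 hpos
    obtain ⟨hyY, n1, n2, x1, hx1, x2, hx2, hne, a, b, c, d⟩ := hmem y hy
    subst h12
    exact hne (hk22 y hyY y1 hy1 n1 x1 hx1 x2 hx2 (hG y (sY hyY) x1 a).2 (hG y1 (sY hy1) x1 b).2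
      (hG y (sY hyY) x2 c).2 (hG y1 (sY hy1) x2 d).2)
  obtain ⟨A, L, hA, hL, hLR, hE⟩ := coords X' Y1 (pencil (fun x y => x ∈ G y) X' Y1 y1 y2)
    (X'.filter (· ∈ G y1)) (X'.filter (· ∈ G y2)) hX' hY1 (fun y hy => (hmem y hy).1) y1 y2 hy1 hy2 h12
    k R (k / 2 - 1)
    ((Finset.card_le_card (fun x hx => (Finset.mem_filter.1 hx).2)).trans (hGc y1 (sY hy1)).le)
    ((Finset.card_le_card (fun x hx => (Finset.mem_filter.1 hx).2)).trans (hGc y2 (sY hy2)).le)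
    (fun x hx => ⟨(Finset.mem_filter.1 hx).1, (hG y1 (sY hy1) x (Finset.mem_filter.1 hx).2).2⟩)
    (fun x hx => ⟨(Finset.mem_filter.1 hx).1, (hG y2 (sY hy2) x (Finset.mem_filter.1 hx).2).2⟩)
    (by
      intro y hy
      obtain ⟨hyY, n1, n2, x1, hx1, x2, hx2, hne, a, b, c, d⟩ := hmem y hy
      exact ⟨n1, n2, x1, Finset.mem_filter.2 ⟨hx1, b⟩, x2, Finset.mem_filter.2 ⟨hx2, d⟩, hne,
        (hG y (sY hyY) x1 a).2, (hG y (sY hyY) x2 c).2⟩) hXR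
    (by
      intro y hy
      have hyY := (hmem y hy).1
      have h1 : (X'.filter (· ∈ G y)).card ≤ (X'.filter (orth · y)).card :=
        Finset.card_le_card (Finset.monotone_filter_right _ fun x _ hx => (hG y (sY hyY) x hx).2)
      have h2 := hdeg' y hyY
      omega)
  -- This is where `4 k ^ 2 ≤ m` and `m ^ 3 ≤ p ^ 4` enter.
  have hNp : 2 * (A.card * L.card) ≤ p ^ 2 := by
    apply (Nat.pow_le_pow_iff_left (two_ne_zero)).1
    have h1 : A.card * L.card ≤ k * m := Nat.mul_le_mul hA (hL.trans hX'm)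
    calc (2 * (A.card * L.card)) ^ 2 ≤ (2 * (k * m)) ^ 2 := Nat.pow_le_pow_left (Nat.mul_le_mul_left 2 h1) 2
      _ = 4 * k ^ 2 * m ^ 2 := by ring
      _ ≤ m * m ^ 2 := Nat.mul_le_mul_right _ hkm
      _ = m ^ 3 := by ring
      _ ≤ p ^ 4 := hmp
      _ = _ := by ring
  have hen := energy p hchar R hR1 A L (hA.trans hkR) hLR _ rfl hNp
  have hE2 := core_num1 hen hA (hL.trans hX'm) hRl hRu
  exact hnum (core_num2 hE2 hM hE (by omega) (by omega) (by omega))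

/-- At most `m` lines and `n` points of the projective plane with at least `k` of the lines through each
point satisfy `n ^ 4 k ^ 15 ≪ m ^ 11`, provided that `m ≤ p ^ (4 / 3)`. Outside the range of `core` this follows
from the trivial counting of pairs. -/
theorem struct_bound [Infinite F] (p : ℕ) (hchar : ∀ n : ℕ, 0 < n → n < p → (n : F) ≠ 0)
    (X Y : Finset (Fin 3 → F)) (hX : Pnp X) (hY : Pnp Y) (m k : ℕ) (hm : X.card ≤ m) (hk : 8 ≤ k)
    (hkm : 4 * k ^ 2 ≤ m) (hmp : m ^ 3 ≤ p ^ 4)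
    (hYk : ∀ y ∈ Y, k ≤ (X.filter (orth · y)).card) : Y.card ^ 4 * k ^ 15 ≤ 10 ^ 31 * m ^ 11 := by
  by_cases hkn : k ≤ Y.card
  swap
  · calc Y.card ^ 4 * k ^ 15 ≤ k ^ 4 * k ^ 15 := Nat.mul_le_mul_right _ (Nat.pow_le_pow_left (by omega) 4)
      _ ≤ k ^ 4 * k ^ 18 := Nat.mul_le_mul_left _ (Nat.pow_le_pow_right (by omega) (by norm_num))
      _ = (k ^ 2) ^ 11 := by ring
      _ ≤ m ^ 11 := Nat.pow_le_pow_left (by omega) 11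
      _ ≤ _ := Nat.le_mul_of_pos_left _ (by norm_num)
  by_cases hk3 : 64 * m ≤ k ^ 3
  · exact core p hchar X Y hX hY m k hm hk hkm hmp hkn hk3 hYk
  push Not at hk3
  have h1 := pairs_bound X Y hX hY m k hm (by omega) hYk
  have hm0 : 0 < m := by nlinarith
  -- `k ^ 7 ≤ k ^ 9 < (64 m) ^ 3`
  calc Y.card ^ 4 * k ^ 15 = (Y.card * k ^ 2) ^ 4 * k ^ 7 := by ring
    _ ≤ (2 * m ^ 2) ^ 4 * k ^ 9 := Nat.mul_le_mul (Nat.pow_le_pow_left h1 4) (Nat.pow_le_pow_right (by omega) (by norm_num))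
    _ = 16 * m ^ 8 * (k ^ 3) ^ 3 := by ring
    _ ≤ 16 * m ^ 8 * (64 * m) ^ 3 := Nat.mul_le_mul_left _ (Nat.pow_le_pow_left hk3.le 3)
    _ = 16 * 64 ^ 3 * m ^ 11 := by ring
    _ ≤ _ := Nat.mul_le_mul_right _ (by norm_num)

end vec
end IB

/-! ### Common zeros of two cubics -/

namespace IB
open MvPolynomial

section poly
variable {K : Type*} [Field K]

/-- Polynomials of degree at most `d` in two variables. -/
abbrev Rd (K : Type*) [Field K] (d : ℕ) : Submodule K (MvPolynomial (Fin 2) K) := restrictTotalDegree (Fin 2) K d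

/-- The basis of monomials, indexed by pairs of exponents. -/
theorem rd_aux (d : ℕ) : Nonempty (Module.Basis
    ((Finset.range (d + 1) ×ˢ Finset.range (d + 1)).filter fun q : ℕ × ℕ => q.1 + q.2 ≤ d) K (Rd K d)) := by
  refine ⟨(basisRestrictSupport K _).reindex ?_⟩
  refine ⟨fun n => ⟨(n.1 0, n.1 1), ?_⟩, fun q => ⟨Finsupp.equivFunOnFinite.symm ![q.1.1, q.1.2], ?_⟩, ?_, ?_⟩
  · have := n.2
    simp only [Set.mem_ofPred_eq] at this
    rw [Finsupp.sum_fintype _ _ (by simp), Fin.sum_univ_two] at this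
    simp only [Finset.mem_filter, Finset.mem_product, Finset.mem_range]
    omega
  · have := q.2
    simp only [Finset.mem_filter, Finset.mem_product, Finset.mem_range] at this
    simp only [Set.mem_ofPred_eq]
    rw [Finsupp.sum_fintype _ _ (by simp), Fin.sum_univ_two]
    simpa using this.2
  · rintro ⟨n, hn⟩
    ext i
    fin_cases i <;> simp
  · rintro ⟨⟨a, b⟩, h⟩
    simp

instance rd_finite (d : ℕ) : Module.Finite K (Rd K d) := by
  obtain ⟨b⟩ := rd_aux (K := K) d
  exact Module.Finite.of_basis b

theorem rd_finrank (d : ℕ) : Module.finrank K (Rd K d) =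
    ((Finset.range (d + 1) ×ˢ Finset.range (d + 1)).filter fun q : ℕ × ℕ => q.1 + q.2 ≤ d).card := by
  obtain ⟨b⟩ := rd_aux (K := K) d
  rw [Module.finrank_eq_card_basis b, Fintype.card_coe]

theorem rd3 : Module.finrank K (Rd K 3) = 10 := by rw [rd_finrank]; rfl
theorem rd6 : Module.finrank K (Rd K 6) = 28 := by rw [rd_finrank]; rfl
theorem rd9 : Module.finrank K (Rd K 9) = 55 := by rw [rd_finrank]; rfl

theorem mem_rd {d : ℕ} {f : MvPolynomial (Fin 2) K} : f ∈ Rd K d ↔ f.totalDegree ≤ d :=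
  mem_restrictTotalDegree _ _ _

/-- A product of linear forms separating `t` from the other points. -/
theorem lagrange (T : Finset (Fin 2 → K)) (t : Fin 2 → K) (ht : t ∈ T) : ∃ g : MvPolynomial (Fin 2) K,
    g.totalDegree ≤ T.card - 1 ∧ eval t g ≠ 0 ∧ ∀ s ∈ T, s ≠ t → eval s g = 0 := by
  have hl : ∀ s : Fin 2 → K, ∃ l : MvPolynomial (Fin 2) K, l.totalDegree ≤ 1 ∧ eval s l = 0 ∧ (s ≠ t → eval t l ≠ 0) := by
    intro s
    by_cases hs : s = t
    · exact ⟨0, by simp, by simp, fun h => absurd hs h⟩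
    · obtain ⟨i, hi⟩ := Function.ne_iff.1 hs
      refine ⟨X i - C (s i), (totalDegree_sub_C_le _ _).trans (by simp), by simp, fun _ => ?_⟩
      simp only [map_sub, eval_X, eval_C]
      exact sub_ne_zero.2 (Ne.symm hi)
  choose l h1 h2 h3 using hl
  refine ⟨∏ s ∈ T.erase t, l s, ?_, ?_, ?_⟩
  · refine (totalDegree_finsetProd _ _).trans ?_
    refine (Finset.sum_le_card_nsmul _ _ 1 fun s _ => h1 s).trans ?_
    simp [Finset.card_erase_of_mem ht]
  · rw [map_prod, Finset.prod_ne_zero_iff]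
    intro s hs
    exact h3 s (Finset.ne_of_mem_erase hs)
  · intro s hs hne
    rw [map_prod]
    exact Finset.prod_eq_zero (Finset.mem_erase.2 ⟨hne, hs⟩) (h2 s)

theorem not_dvd_of_notMem_span {f g : MvPolynomial (Fin 2) K} (hf : f.totalDegree = 3) (hg : g.totalDegree ≤ 3)
    (h : g ∉ Submodule.span K {f}) : ¬ f ∣ g := by
  rintro ⟨q, rfl⟩
  have hf0 : f ≠ 0 := by rintro rfl; simp at hf
  by_cases hq : q = 0
  · apply h; simp [hq]
  · rw [totalDegree_mul_of_isDomain hf0 hq, hf] at hg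
    have : q.totalDegree = 0 := by omega
    rw [totalDegree_eq_zero_iff_eq_C] at this
    apply h
    rw [Submodule.mem_span_singleton]
    refine ⟨coeff 0 q, ?_⟩
    rw [smul_eq_C_mul, ← this, mul_comm]

/-- Ten points impose independent conditions on polynomials of degree nine, so that `55 - 10 = 45`. -/
theorem finrank_vanish (T : Finset (Fin 2 → K)) (hT : T.card = 10) (W : Submodule K (MvPolynomial (Fin 2) K))
    (hW : W ≤ Rd K 9) (hWT : ∀ g ∈ W, ∀ t ∈ T, eval t g = 0) : Module.finrank K W ≤ 45 := by
  let ev : Rd K 9 →ₗ[K] (T → K) := LinearMap.pi fun t => (aeval (t : Fin 2 → K)).toLinearMap.comp (Submodule.subtype _)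
  have hev : ∀ g t, ev g t = eval (t : Fin 2 → K) g.1 := by
    intro g t
    simp [ev]
  have hsurj : Function.Surjective ev := by
    have hL : ∀ t : T, ∃ g : Rd K 9, ev g t ≠ 0 ∧ ∀ s : T, s ≠ t → ev g s = 0 := by
      rintro ⟨t, ht⟩
      obtain ⟨g, h1, h2, h3⟩ := lagrange T t ht
      refine ⟨⟨g, mem_rd.2 (h1.trans (by omega))⟩, ?_, ?_⟩
      · rw [hev]; exact h2
      · rintro ⟨s, hs⟩ hne
        rw [hev]
        exact h3 s hs (fun h => hne (Subtype.ext h))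
    choose g h1 h2 using hL
    intro v
    refine ⟨∑ t, (v t / ev (g t) t) • g t, ?_⟩
    funext s
    rw [map_sum, Finset.sum_apply, Finset.sum_eq_single s]
    · simp [h1 s]
    · intro t _ hts
      simp [h2 t s (Ne.symm hts)]
    · simp
  have h1 := LinearMap.finrank_range_add_finrank_ker ev
  rw [LinearMap.range_eq_top.2 hsurj, finrank_top, Module.finrank_fintype_fun_eq_card, Fintype.card_coe, hT, rd9] at h1
  have h2 : Module.finrank K W ≤ Module.finrank K (LinearMap.ker ev) := by
    let i : W →ₗ[K] LinearMap.ker ev := LinearMap.codRestrict _ (Submodule.inclusion hW) (by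
      rintro ⟨g, hg⟩
      rw [LinearMap.mem_ker]
      funext t
      rw [hev]
      exact hWT g hg t t.2)
    refine LinearMap.finrank_le_finrank_of_injective (f := i) ?_
    intro a b hab
    have := congrArg (fun q => ((q : LinearMap.ker ev) : Rd K 9).1) hab
    exact Subtype.ext this
  omega

/-- The case of Bézout's theorem that is needed. If `f` and `g` had ten common zeros, the image of
`(a, b) ↦ a f + b g` on pairs of sextics would have dimension at most `45`; but the kernel consists of the pairs
`(-h g, h f)` with `h` cubic, so the dimension is at least `28 + 28 - 10 = 46`. -/
theorem bezout {f g : MvPolynomial (Fin 2) K} (hf : Irreducible f) (hf3 : f.totalDegree = 3) (hg3 : g.totalDegree ≤ 3)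
    (h : g ∉ Submodule.span K {f}) (T : Finset (Fin 2 → K)) (hT : ∀ t ∈ T, eval t f = 0 ∧ eval t g = 0) :
    T.card ≤ 9 := by
  by_contra hcon
  obtain ⟨T', hT's, hT'c⟩ := Finset.exists_subset_card_eq (show 10 ≤ T.card by omega)
  have hnd := not_dvd_of_notMem_span hf3 hg3 h
  have hf0 : f ≠ 0 := hf.ne_zero
  let Φ : (Rd K 6 × Rd K 6) →ₗ[K] MvPolynomial (Fin 2) K :=
    ((LinearMap.mulRight K f).comp (Submodule.subtype _)).coprod ((LinearMap.mulRight K g).comp (Submodule.subtype _))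
  have hΦ : ∀ a, Φ a = a.1.1 * f + a.2.1 * g := fun a => rfl
  have h1 := LinearMap.finrank_range_add_finrank_ker Φ
  rw [Module.finrank_prod, rd6] at h1
  have h2 : Module.finrank K (LinearMap.range Φ) ≤ 45 := by
    refine finrank_vanish T' hT'c _ ?_ ?_
    · rintro q ⟨a, rfl⟩
      rw [hΦ, mem_rd]
      refine (totalDegree_add _ _).trans (max_le ?_ ?_)
      · refine (totalDegree_mul _ _).trans ?_
        have := mem_rd.1 a.1.2
        omega
      · refine (totalDegree_mul _ _).trans ?_
        have := mem_rd.1 a.2.2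
        omega
    · rintro q ⟨a, rfl⟩ t ht
      obtain ⟨e1, e2⟩ := hT t (hT's ht)
      rw [hΦ]
      simp [e1, e2]
  have h3 : Module.finrank K (LinearMap.ker Φ) ≤ 10 := by
    rw [← rd3 (K := K)]
    have hq : ∀ a : LinearMap.ker Φ, f ∣ a.1.2.1 := by
      rintro ⟨a, ha⟩
      rw [LinearMap.mem_ker, hΦ] at ha
      have : f ∣ a.2.1 * g := ⟨-a.1.1, by linear_combination ha⟩
      exact (hf.prime.dvd_or_dvd this).resolve_right hnd
    -- A kernel element `(a, b)` is determined by the cubic `b / f`.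
    let j : Rd K 3 →ₗ[K] MvPolynomial (Fin 2) K := (LinearMap.mulRight K f).comp (Submodule.subtype _)
    let i : LinearMap.ker Φ →ₗ[K] MvPolynomial (Fin 2) K :=
      (Submodule.subtype _).comp ((LinearMap.snd K _ _).comp (Submodule.subtype _))
    have hi : Function.Injective i := by
      rintro ⟨⟨a, b⟩, ha⟩ ⟨⟨a', b'⟩, ha'⟩ h0
      have hb : b.1 = b'.1 := h0
      rw [LinearMap.mem_ker, hΦ] at ha ha'
      simp only at ha ha'
      have haa : a.1 = a'.1 := by
        apply mul_right_cancel₀ hf0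
        linear_combination ha - ha' - g * hb
      ext1
      exact Prod.ext (Subtype.ext haa) (Subtype.ext hb)
    have hij : LinearMap.range i ≤ LinearMap.range j := by
      rintro _ ⟨a, rfl⟩
      obtain ⟨q, hq⟩ := hq a
      have hia : i a = f * q := hq
      by_cases hq0 : q = 0
      · exact ⟨0, by rw [hia, hq0]; simp⟩
      · have hd : (f * q).totalDegree ≤ 6 := by rw [← hq]; exact mem_rd.1 a.1.2.2
        rw [totalDegree_mul_of_isDomain hf0 hq0] at hd
        refine ⟨⟨q, mem_rd.2 (by omega)⟩, ?_⟩
        rw [hia, mul_comm]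
        rfl
    rw [← LinearMap.finrank_range_of_inj hi]
    exact (Submodule.finrank_mono hij).trans (LinearMap.finrank_range_le j)
  omega

end poly
end IB

/-! ### Pinning points -/

namespace IB
open MvPolynomial

section poly
variable {K : Type*} [Field K]

/-- Irreducible cubic polynomials, pairwise non-proportional. -/
def Fam (f : Finset (MvPolynomial (Fin 2) K)) : Prop :=
  (∀ q ∈ f, Irreducible q ∧ q.totalDegree = 3) ∧ ∀ q ∈ f, ∀ q' ∈ f, ∀ c : K, q = c • q' → q = q'

theorem Fam.mono {f f' : Finset (MvPolynomial (Fin 2) K)} (h : Fam f) (hs : f' ⊆ f) : Fam f' :=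
  ⟨fun x hx => h.1 x (hs hx), fun x hx w hw => h.2 x (hs hx) w (hs hw)⟩

/-- The number of points of `P` on the curve `q = 0`. -/
def pdeg (P : Finset (Fin 2 → K)) (q : MvPolynomial (Fin 2) K) : ℕ := (P.filter fun x => eval x q = 0).card

theorem exists_notMem_span {V : Submodule K (MvPolynomial (Fin 2) K)}
    (h2 : 2 ≤ Module.finrank K V) (q : MvPolynomial (Fin 2) K) : ∃ g ∈ V, g ∉ Submodule.span K {q} := by
  by_contra hcon
  push Not at hcon
  have h1 : V ≤ Submodule.span K {q} := hcon
  have := (Submodule.finrank_mono h1).trans (finrank_span_le_card _)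
  simp at this
  omega

/-- The polynomials of `V` vanishing at `x`. -/
def Vx (V : Submodule K (MvPolynomial (Fin 2) K)) (x : Fin 2 → K) : Submodule K (MvPolynomial (Fin 2) K) :=
  V ⊓ LinearMap.ker (aeval x : MvPolynomial (Fin 2) K →ₐ[K] K).toLinearMap

theorem mem_Vx {V : Submodule K (MvPolynomial (Fin 2) K)} {x : Fin 2 → K} {g : MvPolynomial (Fin 2) K} :
    g ∈ Vx V x ↔ g ∈ V ∧ eval x g = 0 := by
  simp [Vx, Submodule.mem_inf]

theorem finrank_Vx {V : Submodule K (MvPolynomial (Fin 2) K)} (hV : V ≤ Rd K 3) {x : Fin 2 → K} {e : ℕ}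
    (he : Module.finrank K V = e + 1) (hx : ∃ g ∈ V, eval x g ≠ 0) : Module.finrank K (Vx V x) = e := by
  have : Module.Finite K V := Submodule.finiteDimensional_of_le hV
  let ev : V →ₗ[K] K := (aeval x : MvPolynomial (Fin 2) K →ₐ[K] K).toLinearMap.comp V.subtype
  have hev : ∀ g, ev g = eval x g.1 := by intro g; simp [ev]
  have hsurj : Function.Surjective ev := by
    obtain ⟨g, hg, hgx⟩ := hx
    apply LinearMap.surjective
    intro h0
    apply hgx
    have := hev ⟨g, hg⟩
    rw [h0] at this
    exact this.symm
  have h1 := LinearMap.finrank_range_add_finrank_ker ev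
  rw [LinearMap.range_eq_top.2 hsurj, finrank_top, Module.finrank_self, he] at h1
  have h2 : (LinearMap.ker ev).map V.subtype = Vx V x := by
    ext g
    rw [mem_Vx, Submodule.mem_map]
    constructor
    · rintro ⟨a, ha, rfl⟩
      rw [LinearMap.mem_ker, hev] at ha
      exact ⟨a.2, ha⟩
    · rintro ⟨h1, h2⟩
      exact ⟨⟨g, h1⟩, by rw [LinearMap.mem_ker, hev]; exact h2, rfl⟩
  rw [← h2, Submodule.finrank_map_subtype_eq]
  omega

/-- All but nine points of an irreducible cubic avoid a second cubic `g`. -/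
theorem pdeg_split (P : Finset (Fin 2 → K)) {q g : MvPolynomial (Fin 2) K} (hq : Irreducible q) (hq3 : q.totalDegree = 3)
    (hg3 : g.totalDegree ≤ 3) (h : g ∉ Submodule.span K {q}) :
    pdeg P q ≤ (P.filter fun x => eval x q = 0 ∧ eval x g ≠ 0).card + 9 := by
  have h1 := Finset.card_filter_add_card_filter_not (s := P.filter fun x => eval x q = 0) (fun x => eval x g = 0)
  have h2 : ((P.filter fun x => eval x q = 0).filter fun x => eval x g = 0).card ≤ 9 := by
    apply bezout hq hq3 hg3 h
    intro t ht
    simp only [Finset.mem_filter] at ht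
    exact ⟨ht.1.2, ht.2⟩
  rw [Finset.filter_filter (p := fun x => eval x q = 0) (q := fun x => ¬ eval x g = 0)] at h1
  unfold pdeg
  simp only [ne_eq]
  omega

/-- Pinning one point: among the points that are not base points of the linear system `V`, a most popular one
lies on at least `|f| (d - 9) / |P|` of the curves, and passing through it is one new linear condition. -/
theorem pin_step (P : Finset (Fin 2 → K)) (f : Finset (MvPolynomial (Fin 2) K)) (hf : Fam f) (hne : f.Nonempty) (d : ℕ) (hd : 10 ≤ d)
    (hdeg : ∀ q ∈ f, d ≤ pdeg P q) (V : Submodule K (MvPolynomial (Fin 2) K)) (hV : V ≤ Rd K 3) (hfV : ∀ q ∈ f, q ∈ V) (e : ℕ)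
    (he : Module.finrank K V = e + 2) :
    ∃ V' : Submodule K (MvPolynomial (Fin 2) K), V' ≤ V ∧ Module.finrank K V' = e + 1 ∧ ∃ f' ⊆ f, f'.Nonempty ∧
      (∀ q ∈ f', q ∈ V') ∧ f.card * (d - 9) ≤ P.card * f'.card := by
  obtain ⟨r, hr⟩ : ∃ r : (Fin 2 → K) → MvPolynomial (Fin 2) K → Prop,
      ∀ x q, r x q ↔ eval x q = 0 ∧ ∃ g ∈ V, eval x g ≠ 0 := ⟨_, fun _ _ => Iff.rfl⟩
  have h1 : ∀ q ∈ f, d - 9 ≤ (P.filter fun x => r x q).card := by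
    intro q hq
    obtain ⟨g, hgV, hgq⟩ := exists_notMem_span (V := V) (by omega) q
    have h2 := pdeg_split P (hf.1 q hq).1 (hf.1 q hq).2 (mem_rd.1 (hV hgV)) hgq
    have h3 : (P.filter fun x => eval x q = 0 ∧ eval x g ≠ 0).card ≤ (P.filter fun x => r x q).card :=
      Finset.card_le_card (Finset.monotone_filter_right _ fun x _ hx => (hr x q).2 ⟨hx.1, g, hgV, hx.2⟩)
    have := hdeg q hq
    omega
  have h2 := mul_le_cnt r P f (d - 9) h1
  have hpos : 0 < f.card * (d - 9) := Nat.mul_pos (Finset.card_pos.2 hne) (by omega)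
  have hP : P.Nonempty := by
    rw [Finset.nonempty_iff_ne_empty]
    rintro rfl
    simp only [cnt, Finset.sum_empty] at h2
    omega
  obtain ⟨x, hxP, hx⟩ := Finset.exists_max_image P (fun x => (f.filter (r x)).card) hP
  have h3 : f.card * (d - 9) ≤ P.card * (f.filter (r x)).card := by
    refine h2.trans ?_
    unfold cnt
    have := Finset.sum_le_card_nsmul P (fun x => (f.filter (r x)).card) _ hx
    simpa using this
  have hne' : (f.filter (r x)).Nonempty := by
    rw [← Finset.card_pos]
    by_contra h0
    have : (f.filter (r x)).card = 0 := by omega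
    rw [this] at h3
    omega
  refine ⟨Vx V x, inf_le_left, ?_, f.filter (r x), Finset.filter_subset _ _, hne', ?_, h3⟩
  · obtain ⟨q, hq⟩ := hne'
    exact finrank_Vx hV he ((hr x q).1 (Finset.mem_filter.1 hq).2).2
  · intro q hq
    rw [Finset.mem_filter, hr] at hq
    exact mem_Vx.2 ⟨hfV q hq.1, hq.2.1⟩

/-- Pinning `j` points successively, starting from the ten-dimensional system of all cubics. -/
theorem pins (P : Finset (Fin 2 → K)) (f : Finset (MvPolynomial (Fin 2) K)) (hf : Fam f) (hne : f.Nonempty) (d : ℕ) (hd : 10 ≤ d)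
    (hdeg : ∀ q ∈ f, d ≤ pdeg P q) (j : ℕ) (hj : j ≤ 9) :
    ∃ V' : Submodule K (MvPolynomial (Fin 2) K), V' ≤ Rd K 3 ∧ Module.finrank K V' = 10 - j ∧ ∃ f' ⊆ f, f'.Nonempty ∧
      (∀ q ∈ f', q ∈ V') ∧ f.card * (d - 9) ^ j ≤ P.card ^ j * f'.card := by
  induction j with
  | zero =>
    exact ⟨Rd K 3, le_rfl, rd3, f, subset_rfl, hne, fun q hq => mem_rd.2 (hf.1 q hq).2.le, by simp⟩
  | succ j ih =>
    obtain ⟨V, hV, hfin, f1, hs, hne1, hV1, hc⟩ := ih (by omega)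
    obtain ⟨V', hV', hfin', f2, hs2, hne2, hV2, hc2⟩ := pin_step P f1 (hf.mono hs) hne1 d hd
      (fun q hq => hdeg q (hs hq)) V hV hV1 (8 - j) (by omega)
    refine ⟨V', hV'.trans hV, by omega, f2, hs2.trans hs, hne2, hV2, ?_⟩
    calc f.card * (d - 9) ^ (j + 1) = f.card * (d - 9) ^ j * (d - 9) := by ring
      _ ≤ P.card ^ j * f1.card * (d - 9) := Nat.mul_le_mul_right _ hc
      _ = P.card ^ j * (f1.card * (d - 9)) := by ring
      _ ≤ P.card ^ j * (P.card * f2.card) := Nat.mul_le_mul_left _ hc2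
      _ = _ := by ring

/-- Nine pins determine the curve. -/
theorem pins9 (P : Finset (Fin 2 → K)) (f : Finset (MvPolynomial (Fin 2) K)) (hf : Fam f) (d : ℕ) (hd : 10 ≤ d)
    (hdeg : ∀ q ∈ f, d ≤ pdeg P q) : f.card * (d - 9) ^ 9 ≤ P.card ^ 9 := by
  rcases f.eq_empty_or_nonempty with rfl | hne
  · simp
  obtain ⟨V, hV, hfin, f', hs, hne', hfV, hc⟩ := pins P f hf hne d hd hdeg 9 le_rfl
  have h1 : f'.card ≤ 1 := by
    rw [Finset.card_le_one]
    intro a ha b hb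
    have hb0 : b ≠ 0 := (hf.1 b (hs hb)).1.ne_zero
    obtain ⟨c, hc⟩ := (finrank_eq_one_iff_of_nonzero' (⟨b, hfV b hb⟩ : V) (by
      intro h; exact hb0 (congrArg Subtype.val h))).1 hfin ⟨a, hfV a ha⟩
    exact hf.2 a (hs ha) b (hs hb) c (congrArg Subtype.val hc).symm
  calc _ ≤ _ := hc
    _ ≤ P.card ^ 9 * 1 := Nat.mul_le_mul_left _ h1
    _ = _ := by ring

end poly
end IB

/-! ### Nets of cubics -/

namespace IB
open MvPolynomial

section poly
variable {K : Type*} [Field K]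

theorem Pnp.image_map {L : Type*} [Field L] (ι : K →+* L) {X : Finset (Fin 3 → K)} (hX : Pnp X) :
    Pnp (X.image fun x => ι ∘ x) := by
  constructor
  · intro x hx h0
    rw [Finset.mem_image] at hx
    obtain ⟨a, ha, rfl⟩ := hx
    apply hX.1 a ha
    funext i
    have := congrFun h0 i
    simpa using this
  · intro x hx x' hx' c hc
    rw [Finset.mem_image] at hx hx'
    obtain ⟨a, ha, rfl⟩ := hx
    obtain ⟨b, hb, rfl⟩ := hx'
    obtain ⟨i, hi⟩ := Function.ne_iff.1 (hX.1 b hb)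
    have hi0 : b i ≠ 0 := hi
    have hc' : c = ι (a i / b i) := by
      have := congrFun hc i
      simp only [Function.comp, Pi.smul_apply, smul_eq_mul] at this
      rw [map_div₀, eq_div_iff ((map_ne_zero ι).2 hi0), this]
    have : a = b := by
      refine hX.2 a ha b hb (a i / b i) ?_
      funext j
      apply ι.injective
      have := congrFun hc j
      simp only [Function.comp, Pi.smul_apply, smul_eq_mul] at this ⊢
      rw [this, map_mul, hc']
    rw [this]

/-- The structural bound over an arbitrary field of characteristic `p`, by passing to the algebraic closure. -/
theorem struct_bound_fin (p : ℕ) [Fact p.Prime] [CharP K p] (X Y : Finset (Fin 3 → K)) (hX : Pnp X) (hY : Pnp Y)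
    (m k : ℕ) (hm : X.card ≤ m) (hk : 8 ≤ k) (hkm : 4 * k ^ 2 ≤ m) (hmp : m ^ 3 ≤ p ^ 4)
    (hYk : ∀ y ∈ Y, k ≤ (X.filter (orth · y)).card) : Y.card ^ 4 * k ^ 15 ≤ 10 ^ 31 * m ^ 11 := by
  let L := AlgebraicClosure K
  let ι : K →+* L := algebraMap K L
  have hinj : Function.Injective fun x : Fin 3 → K => (ι ∘ x : Fin 3 → L) := fun a b h => by
    funext i
    exact ι.injective (congrFun h i)
  have : CharP L p := charP_of_injective_algebraMap ι.injective p
  have : Infinite L := IsAlgClosed.instInfinite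
  have hY' : (Y.image fun x => (ι ∘ x : Fin 3 → L)).card = Y.card := Finset.card_image_of_injective _ hinj
  rw [← hY']
  refine struct_bound p ?_ (X.image fun x => (ι ∘ x : Fin 3 → L)) _ (hX.image_map ι) (hY.image_map ι) m k
    (Finset.card_image_le.trans hm) hk hkm hmp ?_
  · intro n hn hnp h0
    rw [CharP.cast_eq_zero_iff L p] at h0
    exact absurd (Nat.le_of_dvd hn h0) (by omega)
  · intro y hy
    rw [Finset.mem_image] at hy
    obtain ⟨b, hb, rfl⟩ := hy
    refine (hYk b hb).trans ?_
    rw [← Finset.card_image_of_injective _ hinj]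
    refine Finset.card_le_card ?_
    intro x hx
    rw [Finset.mem_image] at hx
    obtain ⟨a, ha, rfl⟩ := hx
    rw [Finset.mem_filter] at ha ⊢
    refine ⟨Finset.mem_image_of_mem _ ha.1, ?_⟩
    have := ha.2
    unfold orth at this ⊢
    rw [← RingHom.map_dotProduct, this, map_zero]

/-- A representative of the projective class of `v`. -/
def nrm (v : Fin 3 → K) : Fin 3 → K := if h : v ≠ 0 then (Projectivization.mk K v h).rep else 0

theorem nrm_eq {v : Fin 3 → K} (h : v ≠ 0) : ∃ a : K, a ≠ 0 ∧ nrm v = a • v := by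
  obtain ⟨a, ha⟩ := Projectivization.exists_smul_eq_mk_rep K v h
  refine ⟨a, a.ne_zero, ?_⟩
  rw [nrm, dif_pos h, ← ha]
  rfl

theorem nrm_eq_of {v w : Fin 3 → K} (hv : v ≠ 0) (hw : w ≠ 0) (c : K) (h : v = c • w) : nrm v = nrm w := by
  rw [nrm, nrm, dif_pos hv, dif_pos hw, (Projectivization.mk_eq_mk_iff' K v w hv hw).2 ⟨c, h.symm⟩]

theorem exists_of_nrm {v w : Fin 3 → K} (hv : v ≠ 0) (hw : w ≠ 0) (c : K) (h : nrm v = c • nrm w) :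
    ∃ c' : K, v = c' • w := by
  obtain ⟨a, ha, hva⟩ := nrm_eq hv
  obtain ⟨b, hb, hwb⟩ := nrm_eq hw
  rw [hva, hwb] at h
  refine ⟨a⁻¹ * (c * b), ?_⟩
  calc v = a⁻¹ • (a • v) := by rw [smul_smul, inv_mul_cancel₀ ha, one_smul]
    _ = _ := by rw [h, smul_smul, smul_smul, mul_assoc]

/-- Cubics in a three-dimensional linear system `V`. A basis of `V` maps the plane to the projective plane
in such a way that the cubics of `V` become the preimages of lines. A cubic has at most nine points in a fibre,
and at most nine base points, so its image contains at least `(d - 9) / 9` points. -/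
theorem net_bound (p : ℕ) [Fact p.Prime] [CharP K p] (P : Finset (Fin 2 → K)) (f : Finset (MvPolynomial (Fin 2) K))
    (hf : Fam f) (d : ℕ) (hdeg : ∀ q ∈ f, d ≤ pdeg P q) (V : Submodule K (MvPolynomial (Fin 2) K)) (hV : V ≤ Rd K 3)
    (hV3 : Module.finrank K V = 3) (hfV : ∀ q ∈ f, q ∈ V) (hk : 8 ≤ (d - 9) / 9)
    (hkm : 4 * ((d - 9) / 9) ^ 2 ≤ P.card) (hmp : P.card ^ 3 ≤ p ^ 4) :
    f.card ^ 4 * ((d - 9) / 9) ^ 15 ≤ 10 ^ 31 * P.card ^ 11 := by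
  have : Module.Finite K V := Submodule.finiteDimensional_of_le hV
  let b : Module.Basis (Fin 3) K V := Module.finBasisOfFinrankEq K V hV3
  -- `φ x` is the vector of values of the basis at `x`, and `y q` the coordinate vector of `q`.
  obtain ⟨φ, hφ⟩ : ∃ φ : (Fin 2 → K) → (Fin 3 → K), ∀ x i, φ x i = eval x (b i).1 := ⟨fun x i => eval x (b i).1, fun _ _ => rfl⟩
  obtain ⟨y, hy⟩ : ∃ y : MvPolynomial (Fin 2) K → (Fin 3 → K), ∀ q (h : q ∈ V), y q = b.repr ⟨q, h⟩ :=
    ⟨fun q => if h : q ∈ V then b.repr ⟨q, h⟩ else 0, fun q h => dif_pos h⟩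
  have hsum : ∀ q ∈ V, q = ∑ i, y q i • (b i).1 := by
    intro q hq
    have := congrArg V.subtype (b.sum_repr ⟨q, hq⟩)
    rw [map_sum] at this
    rw [hy q hq]
    exact this.symm
  have heval : ∀ x, ∀ q ∈ V, eval x q = φ x ⬝ᵥ y q := by
    intro x q hq
    conv_lhs => rw [hsum q hq]
    simp only [map_sum, smul_eval, dotProduct, hφ]
    exact Finset.sum_congr rfl fun i _ => mul_comm _ _
  have hyq : ∀ q ∈ f, ∀ q' ∈ f, ∀ c : K, y q = c • y q' → q = q' := by
    intro q hq q' hq' c hc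
    refine hf.2 q hq q' hq' c ?_
    conv_lhs => rw [hsum q (hfV q hq)]
    conv_rhs => rhs; rw [hsum q' (hfV q' hq')]
    rw [Finset.smul_sum, hc]
    exact Finset.sum_congr rfl fun i _ => by rw [smul_smul]; rfl
  have hYc : (f.image y).card = f.card := by
    apply Finset.card_image_of_injOn
    intro q hq q' hq' h
    exact hyq q hq q' hq' 1 (by simpa using h)
  have hYp : Pnp (f.image y) := by
    constructor
    · intro v hv h0
      rw [Finset.mem_image] at hv
      obtain ⟨q, hq, rfl⟩ := hv
      apply (hf.1 q hq).1.ne_zero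
      rw [hsum q (hfV q hq), h0]
      simp
    · intro v hv v' hv' c hc
      rw [Finset.mem_image] at hv hv'
      obtain ⟨q, hq, rfl⟩ := hv
      obtain ⟨q', hq', rfl⟩ := hv'
      rw [hyq q hq q' hq' c hc]
  have hXp : Pnp ((P.filter fun x => φ x ≠ 0).image fun x => nrm (φ x)) := by
    constructor
    · intro v hv h0
      rw [Finset.mem_image] at hv
      obtain ⟨x, hx, rfl⟩ := hv
      have hx := (Finset.mem_filter.1 hx).2
      obtain ⟨a, ha, hva⟩ := nrm_eq hx
      rw [hva] at h0
      exact (smul_ne_zero ha hx) h0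
    · intro v hv v' hv' c hc
      rw [Finset.mem_image] at hv hv'
      obtain ⟨x, hx, rfl⟩ := hv
      obtain ⟨x', hx', rfl⟩ := hv'
      have hx := (Finset.mem_filter.1 hx).2
      have hx' := (Finset.mem_filter.1 hx').2
      obtain ⟨c', hc'⟩ := exists_of_nrm hx hx' c hc
      exact nrm_eq_of hx hx' c' hc'
  rw [← hYc]
  refine struct_bound_fin p _ _ hXp hYp P.card _ (Finset.card_image_le.trans (Finset.card_filter_le _ _)) hk hkm hmp ?_
  intro v hv
  rw [Finset.mem_image] at hv
  obtain ⟨q, hq, rfl⟩ := hv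
  obtain ⟨hirr, hq3⟩ := hf.1 q hq
  set s := P.filter fun x => eval x q = 0 ∧ φ x ≠ 0 with hs
  -- At most nine points of the curve are base points of `V`.
  have hs9 : d ≤ s.card + 9 := by
    obtain ⟨g, hgV, hgq⟩ := exists_notMem_span (V := V) (by omega) q
    have h2 := pdeg_split P hirr hq3 (mem_rd.1 (hV hgV)) hgq
    have h3 : (P.filter fun x => eval x q = 0 ∧ eval x g ≠ 0).card ≤ s.card := by
      refine Finset.card_le_card (Finset.monotone_filter_right _ fun x _ hx => ⟨hx.1, fun h0 => hx.2 ?_⟩)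
      rw [heval x g hgV, h0, zero_dotProduct]
    have := hdeg q hq
    omega
  -- A fibre through `x0` lies on every member of `V` through `x0`, in particular on one other than `q`.
  have hfib : ∀ v ∈ s.image (fun x => nrm (φ x)), (s.filter fun x => nrm (φ x) = v).card ≤ 9 := by
    intro v hv
    rw [Finset.mem_image] at hv
    obtain ⟨x0, hx0, rfl⟩ := hv
    have hx0 := (Finset.mem_filter.1 hx0).2
    have hex : ∃ g ∈ V, eval x0 g ≠ 0 := by
      obtain ⟨i, hi⟩ := Function.ne_iff.1 hx0.2
      exact ⟨(b i).1, (b i).2, by rw [← hφ]; exact hi⟩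
    obtain ⟨g, hg, hgq⟩ := exists_notMem_span (V := Vx V x0) (by rw [finrank_Vx hV hV3 hex]) q
    rw [mem_Vx] at hg
    apply bezout hirr hq3 (mem_rd.1 (hV hg.1)) hgq
    intro x hx
    simp only [hs, Finset.mem_filter] at hx
    refine ⟨hx.1.2.1, ?_⟩
    obtain ⟨c, hc⟩ := exists_of_nrm hx.1.2.2 hx0.2 1 (by simpa using hx.2)
    rw [heval x g hg.1, hc, smul_dotProduct, ← heval x0 g hg.1, hg.2, smul_zero]
  have h9 := Finset.card_le_mul_card_image s 9 hfib
  have hsub : s.image (fun x => nrm (φ x)) ⊆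
      ((P.filter fun x => φ x ≠ 0).image fun x => nrm (φ x)).filter (orth · (y q)) := by
    intro v hv
    rw [Finset.mem_image] at hv
    obtain ⟨x, hx, rfl⟩ := hv
    simp only [hs, Finset.mem_filter] at hx
    rw [Finset.mem_filter]
    refine ⟨Finset.mem_image_of_mem _ (Finset.mem_filter.2 ⟨hx.1, hx.2.2⟩), ?_⟩
    obtain ⟨a, -, hva⟩ := nrm_eq hx.2.2
    rw [hva, orth, smul_dotProduct, ← heval x q (hfV q hq), hx.2.1, smul_zero]
  have := Finset.card_le_card hsub
  omega

/-- Seven pins reduce the ten-dimensional system of cubics to a net. -/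
theorem cubic_bound (p : ℕ) [Fact p.Prime] [CharP K p] (P : Finset (Fin 2 → K)) (f : Finset (MvPolynomial (Fin 2) K))
    (hf : Fam f) (d : ℕ) (hdeg : ∀ q ∈ f, d ≤ pdeg P q) (hk : 8 ≤ (d - 9) / 9)
    (hkm : 4 * ((d - 9) / 9) ^ 2 ≤ P.card) (hmp : P.card ^ 3 ≤ p ^ 4) :
    f.card ^ 4 * ((d - 9) / 9) ^ 43 ≤ 10 ^ 31 * P.card ^ 39 := by
  rcases f.eq_empty_or_nonempty with rfl | hne
  · simp
  obtain ⟨V, hV, hfin, f', hs, hne', hfV, hc⟩ := pins P f hf hne d (by omega) hdeg 7 (by norm_num)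
  have h1 := net_bound p P f' (hf.mono hs) d (fun q hq => hdeg q (hs hq)) V hV hfin hfV hk hkm hmp
  have h2 : (d - 9) / 9 ≤ d - 9 := Nat.div_le_self _ _
  generalize (d - 9) / 9 = k at *
  generalize d - 9 = e at *
  calc f.card ^ 4 * k ^ 43 = (f.card * k ^ 7) ^ 4 * k ^ 15 := by ring
    _ ≤ (f.card * e ^ 7) ^ 4 * k ^ 15 := by gcongr
    _ ≤ (P.card ^ 7 * f'.card) ^ 4 * k ^ 15 := by gcongr
    _ = P.card ^ 28 * (f'.card ^ 4 * k ^ 15) := by ring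
    _ ≤ P.card ^ 28 * (10 ^ 31 * P.card ^ 11) := by gcongr
    _ = _ := by ring

end poly
end IB

/-! ### Summation over the curves -/

namespace IB
open MvPolynomial

/-- Bernoulli's inequality, bounding the decrement of the concave function `n ^ s`. -/
theorem rpow_step {n : ℝ} (hn : 1 ≤ n) {s : ℝ} (hs0 : 0 < s) (hs1 : s ≤ 1) :
    (n - 1) ^ s + s * n ^ (s - 1) ≤ n ^ s := by
  have hn0 : 0 < n := by linarith
  have h1 := _root_.rpow_one_add_le_one_add_mul_self (s := -n⁻¹) (p := s)
    (by have := inv_le_one_of_one_le₀ hn; linarith) hs0.le hs1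
  have h2 : n - 1 = n * (1 + -n⁻¹) := by field_simp; ring
  have h3 : 0 ≤ 1 + -n⁻¹ := by have := inv_le_one_of_one_le₀ hn; linarith
  rw [h2, Real.mul_rpow hn0.le h3, Real.rpow_sub_one hn0.ne']
  have h4 := mul_le_mul_of_nonneg_left h1 (Real.rpow_nonneg hn0.le s)
  calc _ ≤ n ^ s * (1 + s * -n⁻¹) + s * (n ^ s / n) := by linarith
    _ = n ^ s := by field_simp; ring

/-- Summation by repeatedly removing an element of minimal degree. -/
theorem sum_deg {α : Type*} (deg : α → ℕ) {D s : ℝ} (hD : 0 ≤ D) (hs0 : 0 < s) (hs1 : s ≤ 1)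
    (f : Finset α) (h : ∀ S ⊆ f, S.Nonempty → ∀ δ : ℕ, (∃ q ∈ S, deg q = δ) → (∀ q ∈ S, δ ≤ deg q) →
      (δ : ℝ) ≤ D * (S.card : ℝ) ^ (s - 1)) :
    ((∑ q ∈ f, deg q : ℕ) : ℝ) ≤ D / s * (f.card : ℝ) ^ s := by
  induction hn : f.card generalizing f with
  | zero =>
    rw [Finset.card_eq_zero] at hn
    subst hn
    simp [Real.zero_rpow hs0.ne']
  | succ n ih =>
    have hne : f.Nonempty := by rw [← Finset.card_pos]; omega
    obtain ⟨q, hq, hmin⟩ := Finset.exists_min_image f deg hne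
    have h1 := h f subset_rfl hne (deg q) ⟨q, hq, rfl⟩ hmin
    have h2 := ih (f.erase q) (fun S hS => h S (hS.trans (Finset.erase_subset _ _)))
      (by rw [Finset.card_erase_of_mem hq, hn]; rfl)
    rw [← Finset.add_sum_erase f deg hq]
    have h3 := rpow_step (n := ((n + 1 : ℕ) : ℝ)) (by push_cast; linarith [(Nat.cast_nonneg n : (0:ℝ) ≤ n)]) hs0 hs1
    have h4 : ((n + 1 : ℕ) : ℝ) - 1 = n := by push_cast; ring
    rw [h4] at h3
    rw [hn] at h1
    have h5 := mul_le_mul_of_nonneg_left h3 (div_nonneg hD hs0.le)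
    have h6 : D / s * ((n : ℝ) ^ s + s * ((n + 1 : ℕ) : ℝ) ^ (s - 1)) =
      D / s * (n : ℝ) ^ s + D * ((n + 1 : ℕ) : ℝ) ^ (s - 1) := by field_simp
    push_cast at *
    linarith

theorem root43 {n k m : ℕ} (hn : 0 < n) (h : n ^ 4 * k ^ 43 ≤ 10 ^ 31 * m ^ 39) :
    (k : ℝ) ≤ 10 * (m : ℝ) ^ ((39 : ℝ) / 43) * (n : ℝ) ^ ((39 : ℝ) / 43 - 1) := by
  have hn' : (0 : ℝ) < n := by exact_mod_cast hn
  refine le_of_pow_le_pow_left₀ (n := 43) (by norm_num) (by positivity) ?_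
  have e1 : ((m : ℝ) ^ ((39 : ℝ) / 43)) ^ 43 = (m : ℝ) ^ 39 := by
    rw [← Real.rpow_mul_natCast (by positivity), ← Real.rpow_natCast]; norm_num
  have e2 : ((n : ℝ) ^ ((39 : ℝ) / 43 - 1)) ^ 43 * (n : ℝ) ^ 4 = 1 := by
    rw [← Real.rpow_mul_natCast (by positivity), ← Real.rpow_natCast (n : ℝ) 4, ← Real.rpow_add hn']; norm_num
  have h' : (n : ℝ) ^ 4 * (k : ℝ) ^ 43 ≤ 10 ^ 31 * (m : ℝ) ^ 39 := by exact_mod_cast h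
  rw [mul_pow, mul_pow, e1]
  set w := ((n : ℝ) ^ ((39 : ℝ) / 43 - 1)) ^ 43
  have hw : 0 ≤ w := by positivity
  calc (k : ℝ) ^ 43 = w * ((n : ℝ) ^ 4 * (k : ℝ) ^ 43) := by rw [← mul_assoc, e2, one_mul]
    _ ≤ w * (10 ^ 31 * (m : ℝ) ^ 39) := mul_le_mul_of_nonneg_left h' hw
    _ ≤ w * (10 ^ 43 * (m : ℝ) ^ 39) := by gcongr <;> norm_num
    _ = _ := by ring

theorem root9 {n k m : ℕ} (hn : 0 < n) (h : n * k ^ 9 ≤ m ^ 9) :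
    (k : ℝ) ≤ (m : ℝ) * (n : ℝ) ^ ((8 : ℝ) / 9 - 1) := by
  have hn' : (0 : ℝ) < n := by exact_mod_cast hn
  refine le_of_pow_le_pow_left₀ (n := 9) (by norm_num) (by positivity) ?_
  have e2 : ((n : ℝ) ^ ((8 : ℝ) / 9 - 1)) ^ 9 * (n : ℝ) = 1 := by
    rw [← Real.rpow_mul_natCast (by positivity)]
    conv_lhs => rhs; rw [← Real.rpow_one (n : ℝ)]
    rw [← Real.rpow_add hn']; norm_num
  have h' : (n : ℝ) * (k : ℝ) ^ 9 ≤ (m : ℝ) ^ 9 := by exact_mod_cast h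
  rw [mul_pow]
  set w := ((n : ℝ) ^ ((8 : ℝ) / 9 - 1)) ^ 9
  have hw : 0 ≤ w := by positivity
  calc (k : ℝ) ^ 9 = w * ((n : ℝ) * (k : ℝ) ^ 9) := by rw [← mul_assoc, e2, one_mul]
    _ ≤ w * ((m : ℝ) ^ 9) := mul_le_mul_of_nonneg_left h' hw
    _ = _ := by ring

section poly
variable {K : Type*} [Field K]

theorem Fam.inter {f : Finset (MvPolynomial (Fin 2) K)} (hf : Fam f) (P : Finset (Fin 2 → K))
    (q : MvPolynomial (Fin 2) K) (hq : q ∈ f) (q' : MvPolynomial (Fin 2) K) (hq' : q' ∈ f) (hne : q ≠ q') :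
    (P.filter fun x => eval x q = 0 ∧ eval x q' = 0).card ≤ 9 := by
  refine bezout (hf.1 q hq).1 (hf.1 q hq).2 (hf.1 q' hq').2.le (g := q') ?_ _ fun t ht => (Finset.mem_filter.1 ht).2
  intro h
  obtain ⟨c, hc⟩ := Submodule.mem_span_singleton.1 h
  exact hne (hf.2 q' hq' q hq c hc.symm).symm

theorem sum_pdeg (P : Finset (Fin 2 → K)) (f : Finset (MvPolynomial (Fin 2) K)) :
    ∑ q ∈ f, pdeg P q = cnt (fun (x : Fin 2 → K) (q : MvPolynomial (Fin 2) K) => eval x q = 0) P f := by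
  rw [cnt_comm]
  rfl

/-- Curves with many points have few incidences in total. -/
theorem sum_rich (P : Finset (Fin 2 → K)) (f : Finset (MvPolynomial (Fin 2) K)) (hf : Fam f) (R : ℕ)
    (hR : 18 * P.card ≤ R ^ 2) (h : ∀ q ∈ f, R ≤ pdeg P q) : ∑ q ∈ f, pdeg P q ≤ 2 * P.card := by
  rw [sum_pdeg]
  exact rich _ P f 9 R (fun q hq q' hq' hne => hf.inter P q hq q' hq' hne) h (by simpa using hR)

theorem sum_kst (P : Finset (Fin 2 → K)) (f : Finset (MvPolynomial (Fin 2) K)) (hf : Fam f) :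
    (∑ q ∈ f, pdeg P q) ^ 2 ≤ P.card * (∑ q ∈ f, pdeg P q + 9 * f.card ^ 2) := by
  rw [sum_pdeg]
  exact kst _ P f 9 (fun q hq q' hq' hne => hf.inter P q hq q' hq' hne)

/-- Curves with at least `90` and at most `√(18 |P|)` points. -/
theorem sum_mid (p : ℕ) [Fact p.Prime] [CharP K p] (P : Finset (Fin 2 → K))
    (f : Finset (MvPolynomial (Fin 2) K)) (hf : Fam f) (hmp : P.card ^ 3 ≤ p ^ 4)
    (h90 : ∀ q ∈ f, 90 ≤ pdeg P q) (hm : ∀ q ∈ f, pdeg P q ^ 2 ≤ 18 * P.card) :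
    ((∑ q ∈ f, pdeg P q : ℕ) : ℝ) ≤ 140 * ((P.card : ℝ) * (f.card : ℝ)) ^ ((39 : ℝ) / 43) := by
  have h := sum_deg (pdeg P) (D := 120 * (P.card : ℝ) ^ ((39 : ℝ) / 43)) (s := 39 / 43) (by positivity)
    (by norm_num) (by norm_num) f ?_
  · refine h.trans ?_
    rw [Real.mul_rpow (by positivity) (by positivity)]
    have : 0 ≤ (P.card : ℝ) ^ ((39 : ℝ) / 43) * (f.card : ℝ) ^ ((39 : ℝ) / 43) := by positivity
    calc _ = 120 * 43 / 39 * ((P.card : ℝ) ^ ((39 : ℝ) / 43) * (f.card : ℝ) ^ ((39 : ℝ) / 43)) := by ring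
      _ ≤ _ := by gcongr; norm_num
  intro S hS hne δ hδ hmin
  obtain ⟨q, hq, rfl⟩ := hδ
  have h1 := h90 q (hS hq)
  have h2 := hm q (hS hq)
  obtain ⟨k, hk⟩ : ∃ k, (pdeg P q - 9) / 9 = k := ⟨_, rfl⟩
  have h3 : 9 * k ≤ pdeg P q := by omega
  have h4 : pdeg P q ≤ 12 * k := by omega
  have h5 := cubic_bound p P S (hf.mono hS) (pdeg P q) hmin (by omega) (by rw [hk]; nlinarith) hmp
  rw [hk] at h5
  have h6 := root43 (Finset.card_pos.2 hne) h5
  have h7 : (pdeg P q : ℝ) ≤ 12 * k := by exact_mod_cast h4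
  linarith

theorem sum_nine (P : Finset (Fin 2 → K)) (f : Finset (MvPolynomial (Fin 2) K)) (hf : Fam f)
    (h18 : ∀ q ∈ f, 18 ≤ pdeg P q) :
    ((∑ q ∈ f, pdeg P q : ℕ) : ℝ) ≤ 3 * ((P.card : ℝ) * (f.card : ℝ) ^ ((8 : ℝ) / 9)) := by
  have h := sum_deg (pdeg P) (D := 2 * (P.card : ℝ)) (s := 8 / 9) (by positivity)
    (by norm_num) (by norm_num) f ?_
  · refine h.trans ?_
    have : 0 ≤ (P.card : ℝ) * (f.card : ℝ) ^ ((8 : ℝ) / 9) := by positivity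
    calc _ = 9 / 4 * ((P.card : ℝ) * (f.card : ℝ) ^ ((8 : ℝ) / 9)) := by ring
      _ ≤ _ := by gcongr; norm_num
  intro S hS hne δ hδ hmin
  obtain ⟨q, hq, rfl⟩ := hδ
  have h1 := h18 q (hS hq)
  have h5 := pins9 P S (hf.mono hS) (pdeg P q) (by omega) hmin
  have h6 := root9 (Finset.card_pos.2 hne) h5
  have h7 : (pdeg P q : ℝ) ≤ 2 * ((pdeg P q - 9 : ℕ) : ℝ) := by
    have : pdeg P q ≤ 2 * (pdeg P q - 9) := by omega
    exact_mod_cast this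
  linarith

theorem bound_nine (P : Finset (Fin 2 → K)) (f : Finset (MvPolynomial (Fin 2) K)) (hf : Fam f) :
    ((∑ q ∈ f, pdeg P q : ℕ) : ℝ) ≤ 200 * ((P.card : ℝ) * (f.card : ℝ) ^ ((9 : ℝ) / 10) + P.card + f.card) := by
  rw [← Finset.sum_filter_add_sum_filter_not f (fun q => 18 ≤ pdeg P q)]
  have h1 := sum_nine P (f.filter fun q => 18 ≤ pdeg P q) (hf.mono (Finset.filter_subset _ _))
    fun q hq => (Finset.mem_filter.1 hq).2
  have h2 : ∑ q ∈ f.filter (fun q => ¬ 18 ≤ pdeg P q), pdeg P q ≤ f.card * 18 := by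
    refine (Finset.sum_le_card_nsmul _ _ 18 fun q hq => ?_).trans
      (Nat.mul_le_mul_right _ (Finset.card_filter_le _ _))
    have := (Finset.mem_filter.1 hq).2
    omega
  have h2' : ((∑ q ∈ f.filter (fun q => ¬ 18 ≤ pdeg P q), pdeg P q : ℕ) : ℝ) ≤ f.card * 18 := by exact_mod_cast h2
  have h3 : ((f.filter fun q => 18 ≤ pdeg P q).card : ℝ) ^ ((8 : ℝ) / 9) ≤ (f.card : ℝ) ^ ((9 : ℝ) / 10) := by
    rcases f.eq_empty_or_nonempty with rfl | hne
    · simp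
    have h0 : (1 : ℝ) ≤ f.card := by exact_mod_cast Finset.card_pos.2 hne
    have h01 : ((f.filter fun q => 18 ≤ pdeg P q).card : ℝ) ≤ f.card := by exact_mod_cast Finset.card_filter_le _ _
    exact (Real.rpow_le_rpow (by positivity) h01 (by norm_num)).trans
      (Real.rpow_le_rpow_of_exponent_le h0 (by norm_num))
  have h4 := mul_le_mul_of_nonneg_left h3 (Nat.cast_nonneg P.card : (0 : ℝ) ≤ P.card)
  have h5 : 0 ≤ (P.card : ℝ) * (f.card : ℝ) ^ ((9 : ℝ) / 10) := by positivity
  have h6 : (0 : ℝ) ≤ P.card := by positivity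
  have h7 : (0 : ℝ) ≤ f.card := by positivity
  rw [Nat.cast_add]
  linarith

theorem bound_main (p : ℕ) [Fact p.Prime] [CharP K p] (P : Finset (Fin 2 → K))
    (f : Finset (MvPolynomial (Fin 2) K)) (hf : Fam f) (hmp : P.card ^ 3 ≤ p ^ 4) :
    ((∑ q ∈ f, pdeg P q : ℕ) : ℝ) ≤
      200 * (((P.card : ℝ) * (f.card : ℝ)) ^ ((39 : ℝ) / 43) + P.card + f.card) := by
  rw [← Finset.sum_filter_add_sum_filter_not f (fun q => 90 ≤ pdeg P q),
    ← Finset.sum_filter_add_sum_filter_not (f.filter fun q => 90 ≤ pdeg P q)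
      (fun q => Nat.sqrt (18 * P.card) + 1 ≤ pdeg P q)]
  set g := f.filter fun q => 90 ≤ pdeg P q with hg
  have hgf : g ⊆ f := Finset.filter_subset _ _
  have h1 := sum_rich P (g.filter fun q => Nat.sqrt (18 * P.card) + 1 ≤ pdeg P q)
    (hf.mono ((Finset.filter_subset _ _).trans hgf)) (Nat.sqrt (18 * P.card) + 1)
    (Nat.lt_succ_sqrt' _).le fun q hq => (Finset.mem_filter.1 hq).2
  have h2 := sum_mid p P (g.filter fun q => ¬ Nat.sqrt (18 * P.card) + 1 ≤ pdeg P q)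
    (hf.mono ((Finset.filter_subset _ _).trans hgf)) hmp
    (fun q hq => (Finset.mem_filter.1 (Finset.mem_filter.1 hq).1).2)
    (fun q hq => Nat.le_sqrt'.1 (by have := (Finset.mem_filter.1 hq).2; omega))
  have h3 : ∑ q ∈ f.filter (fun q => ¬ 90 ≤ pdeg P q), pdeg P q ≤ f.card * 90 := by
    refine (Finset.sum_le_card_nsmul _ _ 90 fun q hq => ?_).trans
      (Nat.mul_le_mul_right _ (Finset.card_filter_le _ _))
    have := (Finset.mem_filter.1 hq).2
    omega
  have h1' : ((∑ q ∈ g.filter (fun q => Nat.sqrt (18 * P.card) + 1 ≤ pdeg P q), pdeg P q : ℕ) : ℝ) ≤ 2 * P.card := by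
    exact_mod_cast h1
  have h3' : ((∑ q ∈ f.filter (fun q => ¬ 90 ≤ pdeg P q), pdeg P q : ℕ) : ℝ) ≤ f.card * 90 := by exact_mod_cast h3
  have h4 : ((P.card : ℝ) * ((g.filter fun q => ¬ Nat.sqrt (18 * P.card) + 1 ≤ pdeg P q).card : ℝ)) ^ ((39 : ℝ) / 43) ≤
      ((P.card : ℝ) * (f.card : ℝ)) ^ ((39 : ℝ) / 43) := by
    refine Real.rpow_le_rpow (by positivity) ?_ (by norm_num)
    refine mul_le_mul_of_nonneg_left ?_ (by positivity)
    exact_mod_cast Finset.card_le_card ((Finset.filter_subset _ _).trans hgf)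
  have h5 : 0 ≤ ((P.card : ℝ) * (f.card : ℝ)) ^ ((39 : ℝ) / 43) := by positivity
  have h6 : (0 : ℝ) ≤ P.card := by positivity
  have h7 : (0 : ℝ) ≤ f.card := by positivity
  rw [Nat.cast_add, Nat.cast_add]
  linarith

theorem bound_kst (P : Finset (Fin 2 → K)) (f : Finset (MvPolynomial (Fin 2) K)) (hf : Fam f) :
    ((∑ q ∈ f, pdeg P q : ℕ) : ℝ) ≤ 200 * ((P.card : ℝ) ^ ((1 : ℝ) / 2) * (f.card : ℝ) + P.card + f.card) := by
  have h := sum_kst P f hf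
  rw [← Real.sqrt_eq_rpow]
  set t := ∑ q ∈ f, pdeg P q
  have h' : (t : ℝ) ^ 2 ≤ P.card * (t + 9 * (f.card : ℝ) ^ 2) := by exact_mod_cast h
  have h6 : (0 : ℝ) ≤ P.card := by positivity
  have h7 : (0 : ℝ) ≤ f.card := by positivity
  have hs := Real.sqrt_nonneg (P.card : ℝ)
  have hs2 := Real.mul_self_sqrt h6
  have key : (t : ℝ) ≤ 3 * (√(P.card : ℝ) * f.card) + P.card := by
    have h0 : 0 ≤ √(P.card : ℝ) * f.card := by positivity
    have e : (√(P.card : ℝ) * f.card) ^ 2 = P.card * (f.card : ℝ) ^ 2 := by rw [mul_pow, sq (√_), hs2]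
    by_contra hcon
    push Not at hcon
    nlinarith [mul_nonneg h0 h6]
  have h8 : 0 ≤ √(P.card : ℝ) * f.card := by positivity
  linarith

end poly
end IB

/-! ### From curves to equations -/

namespace IB

/-- A choice of equations for the curves turns the incidences into a sum over a family of
pairwise non-proportional irreducible cubics. -/
theorem exists_fam {p : ℕ} [Fact p.Prime] (P : Finset (Fin 2 → ZMod p))
    (C : Finset (Set (Fin 2 → ZMod p))) (hC : ∀ γ ∈ C, IsIrredCubic γ) :
    ∃ f : Finset (MvPolynomial (Fin 2) (ZMod p)), Fam f ∧ f.card = C.card ∧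
      incidences P C = ∑ q ∈ f, pdeg P q := by
  choose! F hF using hC
  have hinj : Set.InjOn F C := by
    intro γ hγ γ' hγ' h
    rw [(hF γ hγ).2.2, h, ← (hF γ' hγ').2.2]
  refine ⟨C.image F, ⟨?_, ?_⟩, Finset.card_image_of_injOn hinj, ?_⟩
  · intro q hq
    obtain ⟨γ, hγ, rfl⟩ := Finset.mem_image.1 hq
    exact ⟨(hF γ hγ).1, (hF γ hγ).2.1⟩
  · intro q hq q' hq' c hc
    obtain ⟨γ, hγ, rfl⟩ := Finset.mem_image.1 hq
    obtain ⟨γ', hγ', rfl⟩ := Finset.mem_image.1 hq'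
    have hc0 : c ≠ 0 := by
      rintro rfl
      exact (hF γ hγ).1.ne_zero (by rw [hc, zero_smul])
    have : γ = γ' := by
      rw [(hF γ hγ).2.2, (hF γ' hγ').2.2, hc]
      ext x
      change MvPolynomial.eval x _ = 0 ↔ MvPolynomial.eval x _ = 0
      rw [MvPolynomial.smul_eval, mul_eq_zero, or_iff_right hc0]
    rw [this]
  · rw [Finset.sum_image hinj, incidences, Finset.card_filter, Finset.sum_product_right]
    refine Finset.sum_congr rfl fun γ hγ => ?_
    rw [pdeg, Finset.card_filter]
    refine Finset.sum_congr rfl fun x _ => ?_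
    have : x ∈ γ ↔ MvPolynomial.eval x (F γ) = 0 := by
      conv_lhs => rw [(hF γ hγ).2.2]
      rfl
    by_cases h : MvPolynomial.eval x (F γ) = 0 <;> simp [this, h]

/-- The hypothesis on `|P|` enters only through the weaker condition `|P| ≤ p ^ (4 / 3)`. -/
theorem cube_le {m p : ℕ} (hp : 1 ≤ p) (h : (m : ℝ) ≤ (p : ℝ) ^ ((15 : ℝ) / 13)) : m ^ 3 ≤ p ^ 4 := by
  have h1 : (m : ℝ) ^ 3 ≤ ((p : ℝ) ^ ((15 : ℝ) / 13)) ^ 3 := pow_le_pow_left₀ (by positivity) h 3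
  have h2 : ((p : ℝ) ^ ((15 : ℝ) / 13)) ^ 3 ≤ (p : ℝ) ^ 4 := by
    rw [← Real.rpow_mul_natCast (by positivity), ← Real.rpow_natCast (p : ℝ) 4]
    exact Real.rpow_le_rpow_of_exponent_le (by exact_mod_cast hp) (by norm_num)
  exact_mod_cast h1.trans h2

end IB

theorem incidence_bound_min :
    ∃ c : ℝ, 0 < c ∧ ∀ p : ℕ, p.Prime →
      ∀ (P : Finset (Fin 2 → ZMod p)) (C : Finset (Set (Fin 2 → ZMod p))),
        (P.card : ℝ) ≤ (p : ℝ) ^ ((15 : ℝ) / 13) →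
        (∀ γ ∈ C, IsIrredCubic γ) →
        (incidences P C : ℝ) ≤
          c * (min (min (((P.card : ℝ) * (C.card : ℝ)) ^ ((39 : ℝ) / 43))
                ((P.card : ℝ) * (C.card : ℝ) ^ ((9 : ℝ) / 10)))
              ((P.card : ℝ) ^ ((1 : ℝ) / 2) * (C.card : ℝ))
            + (P.card : ℝ) + (C.card : ℝ)) := by
  refine ⟨200, by norm_num, fun p hp P C hP hC => ?_⟩
  have : Fact p.Prime := ⟨hp⟩
  obtain ⟨f, hf, hcard, hinc⟩ := IB.exists_fam P C hC
  have h1 := IB.bound_main p P f hf (IB.cube_le hp.one_lt.le hP)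
  have h2 := IB.bound_nine P f hf
  have h3 := IB.bound_kst P f hf
  rw [hinc, ← hcard]
  rcases min_choice (min (((P.card : ℝ) * (f.card : ℝ)) ^ ((39 : ℝ) / 43))
    ((P.card : ℝ) * (f.card : ℝ) ^ ((9 : ℝ) / 10))) ((P.card : ℝ) ^ ((1 : ℝ) / 2) * (f.card : ℝ)) with h | h
  · rw [h]
    rcases min_choice (((P.card : ℝ) * (f.card : ℝ)) ^ ((39 : ℝ) / 43))
      ((P.card : ℝ) * (f.card : ℝ) ^ ((9 : ℝ) / 10)) with h' | h'
    · rw [h']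
      exact h1
    · rw [h']
      exact h2
  · rw [h]
    exact h3
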